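/- arXiv:1701.01971 — 3 statements merged into one kernel-verified Lean document; each statement's English description precedes it below -/
import Mathlib

section
/- For every nondeterministic Büchi automaton over an alphabet A with n states and initial state set I there exists a backward deterministic automaton over A with a generalized transition Büchi recurrence condition and at most (3n)^n states which, augmented with a suitable set of initial states, recognizes the same ω-language. -/
/-- A (backward) run of a backward deterministic automaton with transition function `ρ`
on the ω-word `u`: `r i = ρ (u i) (r (i+1))` for all `i`. -/
def IsBackRun {P A : Type*} (ρ : A → P → P) (u : ℕ → A) (r : ℕ → P) : Prop :=
  ∀ i, r i = ρ (u i) (r (i + 1))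

/-- A run is final for the generalized transition Büchi condition `T` if for every `j`
the run uses a transition from `T j` infinitely often. -/
def GTBFinal {P A : Type*} {k : ℕ} (T : Fin k → Set (P × A × P)) (u : ℕ → A)
    (r : ℕ → P) : Prop :=
  ∀ j : Fin k, ∀ m : ℕ, ∃ i, m ≤ i ∧ (r i, u i, r (i + 1)) ∈ T j

/-- The ω-word `u` is accepted by the nondeterministic Büchi automaton with transition
relation `Δ` and Büchi set `B` from state `q`: there is a run starting in `q` that
visits `B` infinitely often. -/
def NBAAccepts {Q A : Type*} (Δ : Set (Q × A × Q)) (B : Set Q) (u : ℕ → A) (q : Q) :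
    Prop :=
  ∃ r : ℕ → Q, r 0 = q ∧ (∀ i, (r i, u i, r (i + 1)) ∈ Δ) ∧
    ∀ m, ∃ i, m ≤ i ∧ r i ∈ B


set_option linter.unusedSectionVars false

open Classical in
/-- successors -/
noncomputable def bdSc {Q A : Type*} [Fintype Q] (Δ : Set (Q × A × Q)) (a : A) (q : Q) : Finset Q :=
  Finset.univ.filter (fun q' => (q, a, q') ∈ Δ)

theorem bd_mem_sc {Q A : Type*} [Fintype Q] {Δ : Set (Q × A × Q)} {a : A} {q w : Q} :
    w ∈ bdSc Δ a q ↔ (q, a, w) ∈ Δ := by simp [bdSc]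

open Classical in
/-- rank step -/
noncomputable def bdR {Q A : Type*} [Fintype Q] (Δ : Set (Q × A × Q)) (B : Set Q) (M : ℕ) (a : A)
    (r : Q → ℕ) (q : Q) : ℕ :=
  if (bdSc Δ a q).sup r % 2 = 1 ∧ q ∈ B ∧ (bdSc Δ a q).sup r ≠ M then (bdSc Δ a q).sup r + 1
  else (bdSc Δ a q).sup r

/-- fresh -/
def bdFr {Q A : Type*} [Fintype Q] (Δ : Set (Q × A × Q)) (B : Set Q) (M : ℕ) (a : A)
    (r : Q → ℕ) (q : Q) (k : ℕ) : Prop :=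
  q ∈ B ∨ k = 1 ∨ (k ≠ M ∧ ∃ w ∈ bdSc Δ a q, r w + 1 = k)

open Classical in
/-- distance step -/
noncomputable def bdD {Q A : Type*} [Fintype Q] (Δ : Set (Q × A × Q)) (B : Set Q) (M : ℕ) (a : A)
    (r d : Q → ℕ) (q : Q) : ℕ :=
  if bdR Δ B M a r q % 2 = 0 then
    ((bdSc Δ a q).filter (fun w => r w = bdR Δ B M a r q)).sup (fun w => d w + 1)
  else if bdFr Δ B M a r q (bdR Δ B M a r q) then 0
  else sInf {x | ∃ w ∈ bdSc Δ a q, r w = bdR Δ B M a r q ∧ x = d w + 1}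

section step
variable {Q A : Type*} [Fintype Q] {Δ : Set (Q × A × Q)} {B : Set Q} {M : ℕ} {a : A}

theorem bdR_odd_sup {r : Q → ℕ} {q : Q} (h : bdR Δ B M a r q % 2 = 1) :
    (bdSc Δ a q).sup r = bdR Δ B M a r q := by
  unfold bdR at *
  split_ifs at * <;> omega

theorem bd_sup_attained {S : Finset Q} {r : Q → ℕ} (h : S.sup r ≠ 0) : ∃ w ∈ S, r w = S.sup r := by
  have hne : S.Nonempty := by
    rw [Finset.nonempty_iff_ne_empty]; rintro rfl; simp at h
  obtain ⟨w, hw, h⟩ := Finset.exists_mem_eq_sup S hne r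
  exact ⟨w, hw, h.symm⟩

theorem bdR_le {r : Q → ℕ} {q w : Q} (hw : w ∈ bdSc Δ a q) : r w ≤ bdR Δ B M a r q := by
  have : r w ≤ (bdSc Δ a q).sup r := Finset.le_sup hw
  unfold bdR
  split_ifs <;> omega

theorem bdR_odd_succ {r : Q → ℕ} {q : Q} (h : bdR Δ B M a r q % 2 = 1) :
    ∃ w ∈ bdSc Δ a q, r w = bdR Δ B M a r q := by
  have h1 := bdR_odd_sup h
  obtain ⟨w, hw, h2⟩ := bd_sup_attained (S := bdSc Δ a q) (r := r) (by omega)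
  exact ⟨w, hw, by omega⟩

theorem bdR_odd_notB {r : Q → ℕ} {q : Q} (h : bdR Δ B M a r q % 2 = 1) (h2 : bdR Δ B M a r q ≠ M) :
    q ∉ B := by
  have h1 := bdR_odd_sup h
  intro hq
  unfold bdR at *
  split_ifs at * with h3
  · omega
  · exact h3 ⟨h, hq, h2⟩

/-- even positive rank -/
theorem bdR_cases {r : Q → ℕ} {q : Q} (h : bdR Δ B M a r q ≠ 0) :
    ∃ w ∈ bdSc Δ a q, r w = bdR Δ B M a r q ∨
      (r w + 1 = bdR Δ B M a r q ∧ r w % 2 = 1 ∧ q ∈ B ∧ r w ≠ M) := by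
  have key : (bdSc Δ a q).sup r ≠ 0 := by
    unfold bdR at h
    split_ifs at h <;> omega
  obtain ⟨w, hw, h2⟩ := bd_sup_attained key
  refine ⟨w, hw, ?_⟩
  unfold bdR
  split_ifs with h3
  · right; rw [h2]; exact ⟨rfl, h3.1, h3.2⟩
  · left; exact h2

theorem bdD_E1 {r d : Q → ℕ} {q w : Q} (h : bdR Δ B M a r q % 2 = 0) (hw : w ∈ bdSc Δ a q)
    (hr : r w = bdR Δ B M a r q) : d w + 1 ≤ bdD Δ B M a r d q := by
  unfold bdD
  rw [if_pos h]
  exact Finset.le_sup (f := fun w => d w + 1) (by simp [hw, hr])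

theorem bdD_F {r d : Q → ℕ} {q : Q} (h : bdR Δ B M a r q % 2 = 1)
    (hf : bdFr Δ B M a r q (bdR Δ B M a r q)) : bdD Δ B M a r d q = 0 := by
  unfold bdD
  rw [if_neg (by omega), if_pos hf]

theorem bdD_O2 {r d : Q → ℕ} {q : Q} (h : bdR Δ B M a r q % 2 = 1)
    (hf : ¬ bdFr Δ B M a r q (bdR Δ B M a r q)) :
    ∃ w ∈ bdSc Δ a q, r w = bdR Δ B M a r q ∧ bdD Δ B M a r d q = d w + 1 := by
  unfold bdD
  rw [if_neg (by omega), if_neg hf]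
  obtain ⟨w, hw, h2⟩ := bdR_odd_succ h
  exact Nat.sInf_mem (s := {x | ∃ w ∈ bdSc Δ a q, r w = bdR Δ B M a r q ∧ x = d w + 1})
    ⟨d w + 1, w, hw, h2, rfl⟩

theorem bdD_O1 {r d : Q → ℕ} {q w : Q} (h : bdR Δ B M a r q % 2 = 1) (hw : w ∈ bdSc Δ a q)
    (hr : r w = bdR Δ B M a r q) : bdD Δ B M a r d q ≤ d w + 1 := by
  unfold bdD
  rw [if_neg (by omega)]
  split_ifs
  · omega
  · exact Nat.sInf_le ⟨w, hw, hr, rfl⟩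

theorem bdD_X {r d : Q → ℕ} {q : Q} (h : bdD Δ B M a r d q ≠ 0) :
    ∃ w ∈ bdSc Δ a q, r w = bdR Δ B M a r q ∧ bdD Δ B M a r d q = d w + 1 := by
  rcases Nat.mod_two_eq_zero_or_one (bdR Δ B M a r q) with h0 | h1
  · unfold bdD at *
    rw [if_pos h0] at *
    obtain ⟨w, hw, h2⟩ := bd_sup_attained h
    simp only [Finset.mem_filter] at hw
    exact ⟨w, hw.1, hw.2, h2.symm⟩
  · by_cases hf : bdFr Δ B M a r q (bdR Δ B M a r q)
    · exact absurd (bdD_F h1 hf) h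
    · exact bdD_O2 h1 hf

/-- order refinement -/
def bdOrd (r d d' : Q → ℕ) : Prop := ∀ w w', r w = r w' → d w < d w' → d' w < d' w'

theorem bdOrd_step {r d d' : Q → ℕ} (h : bdOrd r d d') :
    bdOrd (bdR Δ B M a r) (bdD Δ B M a r d) (bdD Δ B M a r d') := by
  intro q1 q2 hr hlt
  obtain ⟨w2, hw2, hr2, he2⟩ := bdD_X (Δ := Δ) (B := B) (M := M) (a := a) (r := r) (q := q2) (d := d) (by omega)
  rcases Nat.mod_two_eq_zero_or_one (bdR Δ B M a r q1) with h0 | h1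
  · have a1 := bdD_E1 (d := d') (by omega) hw2 hr2
    by_cases hz : bdD Δ B M a r d' q1 = 0
    · omega
    · obtain ⟨w1, hw1, hr1, he1⟩ := bdD_X hz
      have a2 := bdD_E1 (d := d) h0 hw1 hr1
      have := h w1 w2 (by omega) (by omega)
      omega
  · have hf2 : ¬ bdFr Δ B M a r q2 (bdR Δ B M a r q2) := by
      intro hf
      have := bdD_F (d := d) (by omega) hf
      omega
    obtain ⟨w3, hw3, hr3, he3⟩ := bdD_O2 (d := d') (by omega) hf2
    by_cases hf1 : bdFr Δ B M a r q1 (bdR Δ B M a r q1)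
    · have := bdD_F (d := d') h1 hf1
      omega
    · obtain ⟨w1, hw1, hr1, he1⟩ := bdD_O2 (d := d) h1 hf1
      have b1 := bdD_O1 (d := d') h1 hw1 hr1
      have b2 := bdD_O1 (d := d) (by omega) hw3 hr3
      have := h w1 w3 (by omega) (by omega)
      omega

/-- top -/
def bdTop (r d : Q → ℕ) (k : ℕ) : ℕ :=
  (Finset.univ.filter (fun q => r q = k)).sup d

theorem bd_le_top {r d : Q → ℕ} {q : Q} : d q ≤ bdTop r d (r q) :=
  Finset.le_sup (f := d) (by simp)

theorem bdTop_transfer {r d d' : Q → ℕ} (h : bdOrd r d' d) {q : Q}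
    (ht : bdD Δ B M a r d q = bdTop r d (bdR Δ B M a r q) + 1) (w : Q)
    (hw : r w = bdR Δ B M a r q) : d' w < bdD Δ B M a r d' q := by
  by_contra hcon
  rcases Nat.mod_two_eq_zero_or_one (bdR Δ B M a r q) with h0 | h1
  · obtain ⟨w1, hw1, hr1, he1⟩ := bdD_X (Δ := Δ) (B := B) (M := M) (a := a) (r := r) (q := q) (d := d) (by omega)
    have a1 := bdD_E1 (d := d') h0 hw1 hr1
    have := h w1 w (by omega) (by omega)
    have := bd_le_top (r := r) (d := d) (q := w)
    rw [hw] at this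
    omega
  · have hf2 : ¬ bdFr Δ B M a r q (bdR Δ B M a r q) := by
      intro hf
      have := bdD_F (d := d) (by omega) hf
      omega
    obtain ⟨w1, hw1, hr1, he1⟩ := bdD_O2 (d := d') h1 hf2
    have b1 := bdD_O1 (d := d) h1 hw1 hr1
    have := h w1 w (by omega) (by omega)
    have := bd_le_top (r := r) (d := d) (q := w)
    rw [hw] at this
    omega

end step

section norm
variable {Q : Type*} [Fintype Q] {M : ℕ}

theorem bd_card_image {α β γ : Type*} [DecidableEq β] [DecidableEq γ] {S : Finset α} {f : α → β}
    {g : α → γ} (h : ∀ x ∈ S, ∀ y ∈ S, f x = f y ↔ g x = g y) :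
    (S.image f).card = (S.image g).card := by
  apply le_antisymm
  · apply Finset.card_le_card_of_forall_subsingleton (fun b c => ∃ x ∈ S, f x = b ∧ g x = c)
    · intro b hb
      obtain ⟨x, hx, rfl⟩ := Finset.mem_image.1 hb
      exact ⟨g x, Finset.mem_image_of_mem _ hx, x, hx, rfl, rfl⟩
    · rintro c hc b ⟨hb, x, hx, rfl, hx2⟩ b' ⟨hb', x', hx', rfl, hx2'⟩
      exact (h x hx x' hx').2 (by rw [hx2, hx2'])
  · apply Finset.card_le_card_of_forall_subsingleton (fun c b => ∃ x ∈ S, f x = b ∧ g x = c)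
    · intro b hb
      obtain ⟨x, hx, rfl⟩ := Finset.mem_image.1 hb
      exact ⟨f x, Finset.mem_image_of_mem _ hx, x, hx, rfl, rfl⟩
    · rintro c hc b ⟨hb, x, hx, hx1, rfl⟩ b' ⟨hb', x', hx', hx1', rfl⟩
      exact (h x hx x' hx').1 (by rw [hx1, hx1'])

/-- odd ranks present -/
def bdOdds (M : ℕ) (r : Q → ℕ) : Finset ℕ :=
  (Finset.univ.filter (fun q => r q % 2 = 1 ∧ r q < M)).image r

theorem bd_mem_odds {r : Q → ℕ} {o : ℕ} :
    o ∈ bdOdds M r ↔ (o % 2 = 1 ∧ o < M) ∧ ∃ q, r q = o := by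
  simp only [bdOdds, Finset.mem_image, Finset.mem_filter, Finset.mem_univ, true_and]
  constructor
  · rintro ⟨q, h, rfl⟩; exact ⟨h, q, rfl⟩
  · rintro ⟨h, q, rfl⟩; exact ⟨q, h, rfl⟩

theorem bd_card_odds (r : Q → ℕ) : (bdOdds M r).card ≤ Fintype.card Q :=
  Finset.card_image_le.trans (Finset.card_le_univ _)

/-- relative rank -/
def bdRel (M : ℕ) (r : Q → ℕ) (q : Q) : ℕ :=
  if M ≤ r q then M else r q % 2 + 2 * ((bdOdds M r).filter (· < r q)).card

theorem bdRel_of_lt {r : Q → ℕ} {q : Q} (h : r q < M) :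
    bdRel M r q = r q % 2 + 2 * ((bdOdds M r).filter (· < r q)).card := by
  unfold bdRel
  rw [if_neg (by omega)]

theorem bdRel_lt {r : Q → ℕ} {q : Q} (hM : M = 2 * Fintype.card Q + 1) (h : r q < M) :
    bdRel M r q < M := by
  unfold bdRel
  rw [if_neg (by omega)]
  have h1 : ((bdOdds M r).filter (· < r q)).card ≤ (bdOdds M r).card :=
    Finset.card_le_card (Finset.filter_subset _ _)
  have h2 := bd_card_odds (M := M) r
  rcases Nat.mod_two_eq_zero_or_one (r q) with h0 | h0
  · omega
  · have h3 : ((bdOdds M r).filter (· < r q)).card < (bdOdds M r).card := by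
      apply Finset.card_lt_card
      rw [Finset.ssubset_iff_of_subset (Finset.filter_subset _ _)]
      exact ⟨r q, bd_mem_odds.2 ⟨⟨h0, h⟩, q, rfl⟩, by simp⟩
    omega

theorem bdRel_le {r : Q → ℕ} {q : Q} (hM : M = 2 * Fintype.card Q + 1) :
    bdRel M r q ≤ M := by
  by_cases h : r q < M
  · exact (bdRel_lt hM h).le
  · unfold bdRel; rw [if_pos (by omega)]

theorem bdRel_eq_M {r : Q → ℕ} {q : Q} (hM : M = 2 * Fintype.card Q + 1) :
    bdRel M r q = M ↔ M ≤ r q := by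
  constructor
  · intro h
    by_contra hc
    have := bdRel_lt hM (r := r) (q := q) (by omega)
    omega
  · intro h; unfold bdRel; rw [if_pos h]

theorem bdRel_mod {r : Q → ℕ} {q : Q} (h : r q < M) :
    bdRel M r q % 2 = r q % 2 := by
  unfold bdRel
  rw [if_neg (by omega)]; omega

theorem bdRel_mono {r : Q → ℕ} {q q' : Q} (h : r q < M) (h' : r q' < M)
    (ho : r q % 2 = 1) : bdRel M r q < bdRel M r q' ↔ r q < r q' := by
  unfold bdRel
  rw [if_neg (by omega), if_neg (by omega)]
  rcases lt_or_ge (r q) (r q') with hlt | hge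
  · simp only [hlt, iff_true]
    have h3 : ((bdOdds M r).filter (· < r q)).card < ((bdOdds M r).filter (· < r q')).card := by
      apply Finset.card_lt_card
      rw [Finset.ssubset_iff_of_subset]
      · exact ⟨r q, by simp [hlt, bd_mem_odds, h, ho], by simp⟩
      · intro x; simp only [Finset.mem_filter]; intro hx; exact ⟨hx.1, by omega⟩
    omega
  · have h3 : ((bdOdds M r).filter (· < r q')).card ≤ ((bdOdds M r).filter (· < r q)).card := by
      apply Finset.card_le_card
      intro x; simp only [Finset.mem_filter]; intro hx; exact ⟨hx.1, by omega⟩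
    have : ¬ r q < r q' := by omega
    simp only [this, iff_false]
    rcases Nat.mod_two_eq_zero_or_one (r q') with h0 | h0 <;> omega

theorem bdRel_idem_filter {r : Q → ℕ} (hM : M = 2 * Fintype.card Q + 1) (p p' : ℕ → Prop)
    [DecidablePred p] [DecidablePred p']
    (hp : ∀ q, r q % 2 = 1 → r q < M → (p (r q) ↔ p' (bdRel M r q))) :
    ((bdOdds M (bdRel M r)).filter p').card = ((bdOdds M r).filter p).card := by
  have e1 : (bdOdds M (bdRel M r)).filter p' =
      (Finset.univ.filter (fun q => (r q % 2 = 1 ∧ r q < M) ∧ p (r q))).image (bdRel M r) := by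
    ext o
    simp only [Finset.mem_filter, bd_mem_odds, Finset.mem_image, Finset.mem_univ, true_and]
    constructor
    · rintro ⟨⟨h, q, rfl⟩, hpo⟩
      have hq : r q < M := by
        by_contra hc
        have := (bdRel_eq_M (r := r) (q := q) hM).2 (by omega)
        omega
      have := bdRel_mod hq
      exact ⟨q, ⟨⟨by omega, hq⟩, (hp q (by omega) hq).2 hpo⟩, rfl⟩
    · rintro ⟨q, ⟨⟨h1, hq⟩, hpq⟩, rfl⟩
      have := bdRel_mod hq
      exact ⟨⟨⟨by omega, bdRel_lt hM hq⟩, q, rfl⟩, (hp q h1 hq).1 hpq⟩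
  have e2 : (bdOdds M r).filter p =
      (Finset.univ.filter (fun q => (r q % 2 = 1 ∧ r q < M) ∧ p (r q))).image r := by
    ext o
    simp only [Finset.mem_filter, bd_mem_odds, Finset.mem_image, Finset.mem_univ, true_and]
    constructor
    · rintro ⟨⟨h, q, rfl⟩, hpo⟩
      exact ⟨q, ⟨h, hpo⟩, rfl⟩
    · rintro ⟨q, ⟨h, hpo⟩, rfl⟩
      exact ⟨⟨h, q, rfl⟩, hpo⟩
  rw [e1, e2]
  apply bd_card_image
  intro x hx y hy
  simp only [Finset.mem_filter, Finset.mem_univ, true_and] at hx hy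
  have h1 := bdRel_mono hx.1.2 hy.1.2 hx.1.1
  have h2 := bdRel_mono hy.1.2 hx.1.2 hy.1.1
  omega

theorem bdRel_idem {r : Q → ℕ} (hM : M = 2 * Fintype.card Q + 1) :
    bdRel M (bdRel M r) = bdRel M r := by
  funext q
  by_cases h : M ≤ r q
  · have : bdRel M r q = M := (bdRel_eq_M hM).2 h
    rw [this]
    exact (bdRel_eq_M hM).2 this.ge
  · have h1 := bdRel_lt hM (r := r) (q := q) (by omega)
    have h2 := bdRel_mod (M := M) (r := r) (q := q) (by omega)
    have h3 := bdRel_idem_filter (r := r) hM (· < r q) (· < bdRel M r q)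
      (fun q' ho hq' => (bdRel_mono hq' (by omega) ho).symm)
    rw [bdRel_of_lt h1, h3, h2, ← bdRel_of_lt (by omega)]

theorem bd_card_odds_rel {r : Q → ℕ} (hM : M = 2 * Fintype.card Q + 1) :
    (bdOdds M (bdRel M r)).card = (bdOdds M r).card := by
  have := bdRel_idem_filter (r := r) hM (fun _ => True) (fun _ => True) (by simp)
  simpa using this

/-- strict key comparison -/
def bdKlt (r d : Q → ℕ) (q q' : Q) : Prop := r q < r q' ∨ (r q = r q' ∧ d q < d q')

open Classical in
/-- relative distance -/
noncomputable def bdNd (M : ℕ) (r d : Q → ℕ) (q : Q) : ℕ :=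
  ((Finset.univ.filter (fun q' => bdRel M r q' = bdRel M r q ∧ bdKlt r d q' q)).image
    (fun q => (r q, d q))).card

open Classical in
theorem bdNd_congr {r d r' d' : Q → ℕ} (h1 : bdRel M r = bdRel M r')
    (h : ∀ q q', bdRel M r q = bdRel M r q' → (bdKlt r d q q' ↔ bdKlt r' d' q q')) :
    bdNd M r d = bdNd M r' d' := by
  funext q
  unfold bdNd
  have e : (Finset.univ.filter (fun q' => bdRel M r q' = bdRel M r q ∧ bdKlt r d q' q)) =
    (Finset.univ.filter (fun q' => bdRel M r' q' = bdRel M r' q ∧ bdKlt r' d' q' q)) := by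
    ext x
    simp only [Finset.mem_filter, Finset.mem_univ, true_and]
    rw [← h1]
    constructor
    · rintro ⟨a, b⟩; exact ⟨a, (h _ _ a).1 b⟩
    · rintro ⟨a, b⟩; exact ⟨a, (h _ _ a).2 b⟩
  rw [e]
  apply bd_card_image
  intro x hx y hy
  simp only [Finset.mem_filter, Finset.mem_univ, true_and] at hx hy
  rw [← h1] at hx hy
  have a1 := h x y (by omega)
  have a2 := h y x (by omega)
  unfold bdKlt at a1 a2
  simp only [Prod.mk.injEq]
  omega

theorem bdNd_ord {r d d' : Q → ℕ} (h : bdOrd r d d') (h' : bdOrd r d' d) :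
    bdNd M r d = bdNd M r d' := by
  apply bdNd_congr rfl
  intro q q' _
  unfold bdKlt
  have := h q q'
  have := h' q q'
  omega

theorem bdNd_normal {r d : Q → ℕ} (h : bdRel M r = r) {q q' : Q} (hr : r q = r q') :
    bdNd M r d q < bdNd M r d q' ↔ d q < d q' := by
  have mono : ∀ q q', r q = r q' → d q ≤ d q' → bdNd M r d q ≤ bdNd M r d q' := by
    intro q q' hr hd
    unfold bdNd
    apply Finset.card_le_card
    apply Finset.image_subset_image
    intro x
    simp only [Finset.mem_filter, Finset.mem_univ, true_and, h, bdKlt]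
    omega
  constructor
  · intro hlt
    by_contra hc
    have := mono q' q hr.symm (by omega)
    omega
  · intro hlt
    unfold bdNd
    apply Finset.card_lt_card
    rw [Finset.ssubset_iff_of_subset]
    · refine ⟨(r q, d q), ?_, ?_⟩
      · apply Finset.mem_image.2
        exact ⟨q, by simp [h, bdKlt, hr, hlt], rfl⟩
      · intro hm
        obtain ⟨x, hx, hx2⟩ := Finset.mem_image.1 hm
        simp only [Finset.mem_filter, Finset.mem_univ, true_and, h, bdKlt] at hx
        simp only [Prod.mk.injEq] at hx2
        omega
    · apply Finset.image_subset_image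
      intro x
      simp only [Finset.mem_filter, Finset.mem_univ, true_and, h, bdKlt]
      omega

end norm

section code
variable {Q : Type*} [Fintype Q] {M : ℕ}

/-- coding order -/
def bdCl (M : ℕ) (r d : Q → ℕ) (q q' : Q) : Prop :=
  (M ≤ r q ∧ r q' < M) ∨ ((M ≤ r q ↔ M ≤ r q') ∧ bdKlt r d q q')

open Classical in
/-- type of a class -/
noncomputable def bdTy (M : ℕ) (r d : Q → ℕ) (q : Q) : Fin 3 :=
  if M ≤ r q then 2 else if r q % 2 = 0 then 0
  else if ∀ q', r q' = r q → d q ≤ d q' then 1 else 2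

open Classical in
/-- index of a class -/
noncomputable def bdIdx (M : ℕ) (r d : Q → ℕ) (q : Q) : ℕ :=
  ((Finset.univ.filter (fun q' => bdCl M r d q' q)).image (fun q => (r q, d q))).card

open Classical in
theorem bdIdx_lt {r d : Q → ℕ} (q : Q) : bdIdx M r d q < Fintype.card Q := by
  have h : bdIdx M r d q < (Finset.univ.image (fun q => (r q, d q))).card := by
    unfold bdIdx
    apply Finset.card_lt_card
    rw [Finset.ssubset_iff_of_subset (Finset.image_subset_image (Finset.filter_subset _ _))]
    refine ⟨(r q, d q), Finset.mem_image_of_mem _ (Finset.mem_univ q), ?_⟩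
    intro hm
    obtain ⟨x, hx, hx2⟩ := Finset.mem_image.1 hm
    simp only [Finset.mem_filter, Finset.mem_univ, true_and] at hx
    simp only [bdCl, bdKlt] at hx
    simp only [Prod.mk.injEq] at hx2
    omega
  exact h.trans_le (Finset.card_image_le.trans (Finset.card_le_univ _))

open Classical in
theorem bdIdx_iff {r d : Q → ℕ} {q q' : Q} :
    bdIdx M r d q < bdIdx M r d q' ↔ bdCl M r d q q' := by
  have mono : ∀ q q', ¬ bdCl M r d q' q → bdIdx M r d q ≤ bdIdx M r d q' := by
    intro q q' hc
    unfold bdIdx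
    apply Finset.card_le_card
    apply Finset.image_subset_image
    intro x
    simp only [Finset.mem_filter, Finset.mem_univ, true_and]
    simp only [bdCl, bdKlt] at *
    omega
  constructor
  · intro hlt
    by_contra hc
    have := mono q' q hc
    omega
  · intro hlt
    unfold bdIdx
    apply Finset.card_lt_card
    rw [Finset.ssubset_iff_of_subset]
    · refine ⟨(r q, d q), ?_, ?_⟩
      · apply Finset.mem_image.2
        exact ⟨q, by simp [hlt], rfl⟩
      · intro hm
        obtain ⟨x, hx, hx2⟩ := Finset.mem_image.1 hm
        simp only [Finset.mem_filter, Finset.mem_univ, true_and] at hx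
        simp only [bdCl, bdKlt] at hx
        simp only [Prod.mk.injEq] at hx2
        omega
    · apply Finset.image_subset_image
      intro x
      simp only [Finset.mem_filter, Finset.mem_univ, true_and]
      simp only [bdCl, bdKlt] at *
      omega

theorem bd_first {r d : Q → ℕ} (q : Q) (hM : r q < M) (ho : r q % 2 = 1) :
    ∃ q', r q' = r q ∧ d q' ≤ d q ∧ bdTy M r d q' = 1 := by
  classical
  obtain ⟨q', hq', hmin⟩ := Finset.exists_min_image (Finset.univ.filter (fun x => r x = r q)) d
    ⟨q, by simp⟩
  simp only [Finset.mem_filter, Finset.mem_univ, true_and] at hq' hmin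
  refine ⟨q', hq', hmin q rfl, ?_⟩
  unfold bdTy
  rw [if_neg (by omega), if_neg (by omega), if_pos]
  intro x hx
  exact hmin x (by omega)

theorem bdTy_one {r d : Q → ℕ} {q : Q} (h : bdTy M r d q = 1) :
    r q < M ∧ r q % 2 = 1 ∧ ∀ q', r q' = r q → d q ≤ d q' := by
  unfold bdTy at h
  split_ifs at h with h1 h2 h3
  · simp at h
  · simp at h
  · exact ⟨by omega, by omega, h3⟩
  · simp at h

theorem bd_isM {r d : Q → ℕ} {q : Q} :
    M ≤ r q ↔ ∀ q', ¬ bdCl M r d q q' → bdTy M r d q' = 2 := by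
  constructor
  · intro h q' hc
    have : M ≤ r q' := by
      unfold bdCl at hc; omega
    unfold bdTy
    rw [if_pos this]
  · intro h
    by_contra hc
    rcases Nat.mod_two_eq_zero_or_one (r q) with h0 | h0
    · have := h q (by simp [bdCl, bdKlt])
      unfold bdTy at this
      rw [if_neg hc, if_pos h0] at this
      simp at this
    · obtain ⟨q', h1, h2, h3⟩ := bd_first (M := M) (d := d) q (by omega) h0
      have := h q' (by unfold bdCl bdKlt; omega)
      rw [h3] at this
      simp at this

theorem bd_even {r d : Q → ℕ} {q : Q} (h : r q < M) : r q % 2 = 0 ↔ bdTy M r d q = 0 := by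
  unfold bdTy
  rw [if_neg (by omega)]
  split_ifs <;> simp_all

theorem bd_oddlt {r d : Q → ℕ} {q q' : Q} (h : r q < M) (h' : r q' < M)
    (ho : r q % 2 = 1) (ho' : r q' % 2 = 1) :
    r q < r q' ↔ ∃ x, bdTy M r d x = 1 ∧ bdCl M r d q x ∧ ¬ bdCl M r d q' x := by
  constructor
  · intro hlt
    obtain ⟨x, h1, h2, h3⟩ := bd_first (d := d) q' h' ho'
    exact ⟨x, h3, by unfold bdCl bdKlt; omega, by unfold bdCl bdKlt; omega⟩
  · rintro ⟨x, h1, h2, h3⟩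
    obtain ⟨h4, h5, h6⟩ := bdTy_one h1
    have := h6 q
    unfold bdCl bdKlt at *
    omega

theorem bd_code_inj {r d r' d' : Q → ℕ} (hM : M = 2 * Fintype.card Q + 1)
    (hi : bdIdx M r d = bdIdx M r' d')
    (ht : bdTy M r d = bdTy M r' d') :
    bdRel M r = bdRel M r' ∧ bdNd M r d = bdNd M r' d' := by
  have hcl : ∀ q q', bdCl M r d q q' ↔ bdCl M r' d' q q' := by
    intro q q'
    rw [← bdIdx_iff, ← bdIdx_iff, hi]
  have hisM : ∀ q, M ≤ r q ↔ M ≤ r' q := by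
    intro q
    rw [bd_isM (d := d), bd_isM (d := d'), ht]
    simp only [hcl]
  have hev : ∀ q, r q < M → (r q % 2 = 0 ↔ r' q % 2 = 0) := by
    intro q hq
    have := hisM q
    rw [bd_even (d := d) hq, bd_even (d := d') (by omega : r' q < M), ht]
  have hlt : ∀ q q', r q < M → r q' < M → r q % 2 = 1 → (r q < r q' ↔ r' q < r' q') := by
    intro q q' h h' ho
    have m1 := hisM q
    have m2 := hisM q'
    have e1 := hev q h
    have e2 := hev q' h'
    rcases Nat.mod_two_eq_zero_or_one (r q') with h0 | h0
    · have := hcl q q'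
      unfold bdCl bdKlt at this
      omega
    · rw [bd_oddlt (d := d) h h' ho h0, bd_oddlt (M := M) (d := d') (by omega) (by omega) (by omega) (by omega),
        ht]
      simp only [hcl]
  have hrel : bdRel M r = bdRel M r' := by
    funext q
    by_cases h : M ≤ r q
    · rw [(bdRel_eq_M hM).2 h, (bdRel_eq_M hM).2 ((hisM q).1 h)]
    · have h' := hisM q
      rw [bdRel_of_lt (by omega), bdRel_of_lt (by omega)]
      have e1 := hev q (by omega)
      have : ((bdOdds M r).filter (· < r q)).card = ((bdOdds M r').filter (· < r' q)).card := by
        unfold bdOdds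
        rw [Finset.filter_image, Finset.filter_image, Finset.filter_filter, Finset.filter_filter]
        have e : (Finset.univ.filter (fun x => (r x % 2 = 1 ∧ r x < M) ∧ r x < r q)) =
            (Finset.univ.filter (fun x => (r' x % 2 = 1 ∧ r' x < M) ∧ r' x < r' q)) := by
          ext x
          simp only [Finset.mem_filter, Finset.mem_univ, true_and]
          have m1 := hisM x
          have m2 := hev x
          have m3 := hlt x q
          omega
        rw [e]
        apply bd_card_image
        intro x hx y hy
        rw [← e] at hx hy
        simp only [Finset.mem_filter, Finset.mem_univ, true_and] at hx hy
        have m1 := hlt x y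
        have m2 := hlt y x
        omega
      omega
  refine ⟨hrel, bdNd_congr hrel ?_⟩
  intro q q' hq
  have a0 := bdRel_eq_M (r := r) (q := q) hM
  have a1 := bdRel_eq_M (r := r) (q := q') hM
  have a2 := hisM q
  have a3 := hisM q'
  have := hcl q q'
  unfold bdCl at this
  have b : M ≤ r q ↔ M ≤ r q' := by rw [← a0, ← a1, hq]
  by_cases c : M ≤ r q
  · have c1 := b.1 c
    have c2 := a2.1 c
    have c3 := a3.1 c1
    have n1 : ¬ r q' < M := not_lt.2 c1
    have n2 : ¬ r' q' < M := not_lt.2 c3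
    rw [iff_true_intro c, iff_true_intro c1, iff_true_intro c2, iff_true_intro c3] at this
    simpa [n1, n2] using this
  · have c1 := fun h => c (b.2 h)
    have c2 := fun h => c (a2.2 h)
    have c3 := fun h => c1 (a3.2 h)
    rw [iff_false_intro c, iff_false_intro c1, iff_false_intro c2, iff_false_intro c3] at this
    simpa using this

/-- state space -/
def bdP (Q : Type*) [Fintype Q] (M : ℕ) : Type _ :=
  {s : (Q → ℕ) × (Q → ℕ) // ∃ r d, s = (bdRel M r, bdNd M r d)}

/-- code -/
noncomputable def bdCode (s : bdP Q M) (q : Q) : Fin (Fintype.card Q) × Fin 3 :=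
  (⟨bdIdx M s.2.choose s.2.choose_spec.choose q, bdIdx_lt q⟩,
    bdTy M s.2.choose s.2.choose_spec.choose q)

theorem bdCode_inj (hM : M = 2 * Fintype.card Q + 1) :
    Function.Injective (bdCode (Q := Q) (M := M)) := by
  intro s s' h
  have h1 : bdIdx M s.2.choose s.2.choose_spec.choose = bdIdx M s'.2.choose s'.2.choose_spec.choose := by
    funext q
    have := congrFun h q
    simp only [bdCode, Prod.mk.injEq, Fin.mk.injEq] at this
    exact this.1
  have h2 : bdTy M s.2.choose s.2.choose_spec.choose = bdTy M s'.2.choose s'.2.choose_spec.choose := by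
    funext q
    have := congrFun h q
    simp only [bdCode, Prod.mk.injEq] at this
    exact this.2
  obtain ⟨h3, h4⟩ := bd_code_inj hM h1 h2
  apply Subtype.ext
  exact s.2.choose_spec.choose_spec.trans
    ((Prod.ext h3 h4).trans s'.2.choose_spec.choose_spec.symm)

theorem bdP_finite (hM : M = 2 * Fintype.card Q + 1) : Finite (bdP Q M) :=
  Finite.of_injective _ (bdCode_inj hM)

theorem bdP_card (hM : M = 2 * Fintype.card Q + 1) [Fintype (bdP Q M)] :
    Fintype.card (bdP Q M) ≤ (3 * Fintype.card Q) ^ Fintype.card Q := by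
  classical
  refine (Fintype.card_le_of_injective _ (bdCode_inj hM)).trans ?_
  simp [mul_comm]

end code

section good
variable {Q A : Type*}

theorem bd_path {i : ℕ} {q : Q} {P : ℕ → Q → Prop} {R : ℕ → Q → Q → Prop}
    (h : ∀ t, i ≤ t → ∀ q, P t q → ∃ q', R t q q' ∧ P (t + 1) q') (h0 : P i q) :
    ∃ p : ℕ → Q, p i = q ∧ ∀ t, i ≤ t → P t (p t) ∧ R t (p t) (p (t + 1)) := by
  have h' : ∀ t q, ∃ q', i ≤ t → P t q → R t q q' ∧ P (t + 1) q' := by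
    intro t q
    by_cases hh : i ≤ t ∧ P t q
    · obtain ⟨q', hq'⟩ := h t hh.1 q hh.2
      exact ⟨q', fun _ _ => hq'⟩
    · exact ⟨q, fun a b => absurd ⟨a, b⟩ hh⟩
  choose f hf using h'
  let g : ℕ → Q := fun k => Nat.rec q (fun k x => f (i + k) x) k
  have hg : ∀ k, P (i + k) (g k) := by
    intro k
    induction k with
    | zero => exact h0
    | succ k ih => exact (hf (i + k) (g k) (by omega) ih).2
  refine ⟨fun t => g (t - i), by simp [g], ?_⟩
  intro t ht
  obtain ⟨k, rfl⟩ := Nat.exists_eq_add_of_le ht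
  have e1 : i + k - i = k := by omega
  have e2 : i + k + 1 - i = k + 1 := by omega
  simp only [e1, e2]
  exact ⟨hg k, (hf (i + k) (g k) (by omega) (hg k)).1⟩

/-- reachability -/
inductive bdReach (Δ : Set (Q × A × Q)) (u : ℕ → A) : ℕ → Q → ℕ → Q → Prop
  | refl (i : ℕ) (q : Q) : bdReach Δ u i q i q
  | head {i : ℕ} {q q' : Q} {j : ℕ} {w : Q} : (q, u i, q') ∈ Δ → bdReach Δ u (i + 1) q' j w →
      bdReach Δ u i q j w

variable [Fintype Q]

/-- a correct ranking from level `N` on -/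
structure bdGood (Δ : Set (Q × A × Q)) (B : Set Q) (M : ℕ) (u : ℕ → A) (N : ℕ) (r : ℕ → Q → ℕ) :
    Prop where
  le : ∀ i, N ≤ i → ∀ q, r i q ≤ M
  rc : ∀ i, N ≤ i → r i = bdR Δ B M (u i) (r (i + 1))
  ha : ∀ i, N ≤ i → ∀ p : ℕ → Q, ∀ k, k % 2 = 0 →
    (∀ t, i ≤ t → r t (p t) = k ∧ (p t, u t, p (t + 1)) ∈ Δ) → False
  hb : ∀ i, N ≤ i → ∀ q, r i q % 2 = 1 → r i q ≠ 1 → r i q ≠ M →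
    ∃ j w, bdReach Δ u i q j w ∧ r j w + 1 = r i q
  hc : ∀ i, N ≤ i → ∀ q, r i q = M → ∃ j w, bdReach Δ u i q j w ∧ r j w = M ∧ w ∈ B

variable {Δ : Set (Q × A × Q)} {B : Set Q} {M : ℕ} {u : ℕ → A} {N : ℕ} {r r' : ℕ → Q → ℕ}

theorem bdGood.mono {N' : ℕ} (h : bdGood Δ B M u N r) (hN : N ≤ N') : bdGood Δ B M u N' r :=
  ⟨fun i hi => h.le i (by omega), fun i hi => h.rc i (by omega), fun i hi => h.ha i (by omega),
    fun i hi => h.hb i (by omega), fun i hi => h.hc i (by omega)⟩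

theorem bd_succ_le (hr : ∀ i, N ≤ i → r i = bdR Δ B M (u i) (r (i + 1))) {i : ℕ} (hi : N ≤ i)
    {q q' : Q} (h : (q, u i, q') ∈ Δ) : r (i + 1) q' ≤ r i q := by
  rw [congrFun (hr i hi) q]
  exact bdR_le (bd_mem_sc.2 h)

theorem bd_reach_le (hr : ∀ i, N ≤ i → r i = bdR Δ B M (u i) (r (i + 1))) {i j : ℕ} {q w : Q}
    (h : bdReach Δ u i q j w) : N ≤ i → i ≤ j ∧ r j w ≤ r i q := by
  induction h with
  | refl i q => intro _; exact ⟨le_refl _, le_refl _⟩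
  | head hd _ ih =>
    intro hi
    have := ih (by omega)
    have := bd_succ_le hr hi hd
    omega

theorem bdGood.cases (h : bdGood Δ B M u N r) {i : ℕ} (hi : N ≤ i) {q : Q} (h0 : r i q ≠ 0) :
    ∃ w, (q, u i, w) ∈ Δ ∧ (r (i + 1) w = r i q ∨
      (r (i + 1) w + 1 = r i q ∧ r (i + 1) w % 2 = 1 ∧ q ∈ B ∧ r (i + 1) w ≠ M)) := by
  have e := congrFun (h.rc i hi) q
  rw [e] at h0
  obtain ⟨w, hw, h1⟩ := bdR_cases h0
  rw [← e] at h1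
  exact ⟨w, bd_mem_sc.1 hw, h1⟩

theorem bdGood.odd_notB (h : bdGood Δ B M u N r) {i : ℕ} (hi : N ≤ i) {q : Q}
    (h0 : r i q % 2 = 1) (h1 : r i q ≠ M) : q ∉ B := by
  have e := congrFun (h.rc i hi) q
  rw [e] at h0 h1
  exact bdR_odd_notB h0 h1

theorem bdGood.le_of (h : bdGood Δ B M u N r) (h' : bdGood Δ B M u N r') (k : ℕ) :
    ∀ i, N ≤ i → ∀ q, r' i q = k → r i q ≤ k := by
  induction k using Nat.strong_induction_on with
  | _ k ih =>
  intro i hi q hq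
  by_contra hcon
  have hkM : k < M := by have := h.le i hi q; omega
  have key : ∀ t, N ≤ t → ∀ w, r' t w ≤ k → k < r t w → r' t w = k := by
    intro t ht w h1 h2
    by_contra h3
    have := ih (r' t w) (by omega) t ht w rfl
    omega
  rcases Nat.mod_two_eq_zero_or_one k with h0 | h0
  · obtain ⟨p, hp, hp2⟩ := bd_path (i := i) (q := q) (P := fun t q => r' t q = k ∧ k < r t q)
      (R := fun t q q' => (q, u t, q') ∈ Δ) (by
        rintro t ht x ⟨h1, h2⟩
        obtain ⟨w, hw, hw2⟩ := h.cases (i := t) (by omega) (q := x) (by omega)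
        have a1 := bd_succ_le h'.rc (by omega) hw
        have a2 : k < r (t + 1) w := by omega
        exact ⟨w, hw, key (t + 1) (by omega) w (by omega) a2, a2⟩) ⟨hq, by omega⟩
    exact h'.ha i hi p k h0 (fun t ht => ⟨(hp2 t ht).1.1, (hp2 t ht).2⟩)
  · have claim1 : ∀ i, N ≤ i → ∀ q, r' i q = k → ∀ c, k < c → c % 2 = 0 → r i q = c → False := by
      intro i hi q hq c hc hc0 hrc
      obtain ⟨p, hp, hp2⟩ := bd_path (i := i) (q := q) (P := fun t q => r' t q = k ∧ r t q = c)
        (R := fun t q q' => (q, u t, q') ∈ Δ) (by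
          rintro t ht x ⟨h1, h2⟩
          obtain ⟨w, hw, hw2⟩ := h.cases (i := t) (by omega) (q := x) (by omega)
          have hx := h'.odd_notB (i := t) (by omega) (q := x) (by omega) (by omega)
          have a1 := bd_succ_le h'.rc (by omega) hw
          have a2 : r (t + 1) w = c := by
            rcases hw2 with hw2 | hw2
            · omega
            · exact absurd hw2.2.2.1 hx
          exact ⟨w, hw, key (t + 1) (by omega) w (by omega) (by omega), a2⟩) ⟨hq, hrc⟩
      exact h.ha i hi p c hc0 (fun t ht => ⟨(hp2 t ht).1.2, (hp2 t ht).2⟩)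
    rcases Nat.mod_two_eq_zero_or_one (r i q) with h2 | h2
    · exact claim1 i hi q hq (r i q) (by omega) h2 rfl
    · by_cases hM : r i q = M
      · obtain ⟨j, w, hj, hw, hB⟩ := h.hc i hi q hM
        have a1 := bd_reach_le h'.rc hj hi
        have a2 := key j (by omega) w (by omega) (by omega)
        exact h'.odd_notB (i := j) (by omega) (q := w) (by omega) (by omega) hB
      · obtain ⟨j, w, hj, hw⟩ := h.hb i hi q h2 (by omega) hM
        have a1 := bd_reach_le h'.rc hj hi
        have a2 := key j (by omega) w (by omega) (by omega)
        exact claim1 j (by omega) w a2 (r j w) (by omega) (by omega) rfl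

theorem bdGood.unique (h : bdGood Δ B M u N r) (h' : bdGood Δ B M u N r') {i : ℕ} (hi : N ≤ i) :
    r i = r' i := by
  funext q
  exact le_antisymm (h.le_of h' _ i hi q rfl) (h'.le_of h _ i hi q rfl)

end good

section truth
variable {Q A : Type*} [Fintype Q]

def bdFin (Δ : Set (Q × A × Q)) (u : ℕ → A) (X : ℕ → Q → Prop) (i : ℕ) (q : Q) : Prop :=
  ¬ ∃ p : ℕ → Q, p i = q ∧ ∀ t, i ≤ t → (p t, u t, p (t + 1)) ∈ Δ ∧ ¬ X t (p t)

def bdBF (Δ : Set (Q × A × Q)) (B : Set Q) (u : ℕ → A) (X : ℕ → Q → Prop) (i : ℕ) (q : Q) : Prop :=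
  ∀ j w, bdReach Δ u i q j w → X j w ∨ w ∉ B

def bdZ (Δ : Set (Q × A × Q)) (B : Set Q) (u : ℕ → A) : ℕ → ℕ → Q → Prop
  | 0 => bdFin Δ u (fun _ _ => False)
  | k + 1 => if k % 2 = 0 then bdBF Δ B u (bdZ Δ B u k) else bdFin Δ u (bdZ Δ B u k)

def bdClosed (Δ : Set (Q × A × Q)) (u : ℕ → A) (X : ℕ → Q → Prop) : Prop :=
  ∀ i q q', (q, u i, q') ∈ Δ → X i q → X (i + 1) q'

variable {Δ : Set (Q × A × Q)} {B : Set Q} {M : ℕ} {u : ℕ → A} {X Y : ℕ → Q → Prop}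

theorem bdFin_iff (hX : bdClosed Δ u X) {i : ℕ} {q : Q} :
    bdFin Δ u X i q ↔ ∀ q', (q, u i, q') ∈ Δ → bdFin Δ u X (i + 1) q' := by
  classical
  constructor
  · intro h q' hq' hc
    obtain ⟨p, hp, hp2⟩ := hc
    refine h ⟨Function.update p i q, by simp, ?_⟩
    intro t ht
    rcases Nat.eq_or_lt_of_le ht with rfl | hlt
    · have : p (i + 1) = q' := hp
      refine ⟨by simpa [Function.update_of_ne, this] using hq', ?_⟩
      rw [Function.update_self]
      intro hx
      have := hX i q q' hq' hx
      rw [← hp] at this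
      exact (hp2 (i + 1) (le_refl _)).2 this
    · rw [Function.update_of_ne (by omega), Function.update_of_ne (by omega)]
      exact hp2 t hlt
  · rintro h ⟨p, hp, hp2⟩
    refine h (p (i + 1)) (by rw [← hp]; exact (hp2 i (le_refl _)).1) ⟨p, rfl, ?_⟩
    intro t ht
    exact hp2 t (by omega)

theorem bdBF_iff {i : ℕ} {q : Q} :
    bdBF Δ B u X i q ↔ (X i q ∨ q ∉ B) ∧ ∀ q', (q, u i, q') ∈ Δ → bdBF Δ B u X (i + 1) q' := by
  constructor
  · intro h
    exact ⟨h i q (bdReach.refl i q), fun q' hq' j w hw => h j w (bdReach.head hq' hw)⟩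
  · rintro ⟨h1, h2⟩ j w hw
    cases hw with
    | refl => exact h1
    | head hd hr => exact h2 _ hd j w hr

theorem bdFin_closed (hX : bdClosed Δ u X) : bdClosed Δ u (bdFin Δ u X) :=
  fun _ _ q' hq h => (bdFin_iff hX).1 h q' hq

theorem bdBF_closed : bdClosed Δ u (bdBF Δ B u X) :=
  fun _ _ q' hq h => (bdBF_iff.1 h).2 q' hq

theorem bd_closed_reach (hX : bdClosed Δ u X) {i j : ℕ} {q w : Q} (h : bdReach Δ u i q j w) :
    X i q → X j w := by
  induction h with
  | refl => exact id
  | head hd _ ih => exact fun hx => ih (hX _ _ _ hd hx)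

theorem bdZ_closed (k : ℕ) : bdClosed Δ u (bdZ Δ B u k) := by
  induction k with
  | zero => exact bdFin_closed (fun _ _ _ _ h => h)
  | succ k ih =>
    unfold bdZ
    split_ifs
    · exact bdBF_closed
    · exact bdFin_closed ih

theorem bdZ_succ (k : ℕ) {i : ℕ} {q : Q} (h : bdZ Δ B u k i q) : bdZ Δ B u (k + 1) i q := by
  rw [bdZ]
  split_ifs
  · intro j w hw
    exact Or.inl (bd_closed_reach (bdZ_closed k) hw h)
  · rintro ⟨p, hp, hp2⟩
    have := hp2 i (le_refl _)
    rw [hp] at this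
    exact this.2 h

theorem bdZ_mono {k l : ℕ} (hkl : k ≤ l) {i : ℕ} {q : Q} (h : bdZ Δ B u k i q) :
    bdZ Δ B u l i q := by
  induction hkl with
  | refl => exact h
  | step _ ih => exact bdZ_succ _ ih

theorem bdZ_even {k : ℕ} (hk : k % 2 = 0) : ∃ X, bdClosed Δ u X ∧ bdZ Δ B u k = bdFin Δ u X ∧
    (∀ i q, X i q → k ≠ 0 ∧ bdZ Δ B u (k - 1) i q) := by
  cases k with
  | zero => exact ⟨fun _ _ => False, fun _ _ _ _ h => h, rfl, fun _ _ h => h.elim⟩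
  | succ k =>
    refine ⟨bdZ Δ B u k, bdZ_closed k, ?_, fun _ _ h => ⟨by omega, h⟩⟩
    conv_lhs => unfold bdZ
    rw [if_neg (by omega)]

theorem bdZ_odd {k : ℕ} (hk : k % 2 = 0) : bdZ Δ B u (k + 1) = bdBF Δ B u (bdZ Δ B u k) := by
  conv_lhs => unfold bdZ
  rw [if_pos hk]

theorem bdZ_even_iff {k : ℕ} (hk : k % 2 = 0) {i : ℕ} {q : Q} :
    bdZ Δ B u k i q ↔ ∀ q', (q, u i, q') ∈ Δ → bdZ Δ B u k (i + 1) q' := by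
  obtain ⟨X, hX, he, _⟩ := bdZ_even (Δ := Δ) (B := B) (u := u) hk
  rw [he]
  exact bdFin_iff hX

/-- stationary stages propagate -/
theorem bdZ_stat {k : ℕ} (hk : k % 2 = 0) (h : ∀ i q, bdZ Δ B u (k + 1) i q → bdZ Δ B u k i q) :
    ∀ i q, bdZ Δ B u (k + 3) i q → bdZ Δ B u (k + 2) i q := by
  have h2 : ∀ i q, bdZ Δ B u (k + 2) i q → bdZ Δ B u k i q := by
    intro i q hq
    by_contra hc
    obtain ⟨p, hp, hp2⟩ := bd_path (i := i) (q := q) (P := fun t q => ¬ bdZ Δ B u k t q)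
      (R := fun t q q' => (q, u t, q') ∈ Δ) (by
        intro t ht x hx
        rw [bdZ_even_iff hk] at hx
        push Not at hx
        exact hx) hc
    rw [show k + 2 = (k + 1) + 1 from rfl, bdZ, if_neg (by omega)] at hq
    exact hq ⟨p, hp, fun t ht => ⟨(hp2 t ht).2, fun hh => (hp2 t ht).1 (h _ _ hh)⟩⟩
  intro i q hq
  rw [show k + 3 = (k + 2) + 1 from rfl, bdZ_odd (by omega)] at hq
  apply bdZ_mono (k := k + 1) (by omega)
  rw [bdZ_odd hk]
  intro j w hw
  rcases hq j w hw with h3 | h3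
  · exact Or.inl (h2 _ _ h3)
  · exact Or.inr h3

theorem bdZ_final {i : ℕ} {q : Q} (h : bdZ Δ B u (2 * Fintype.card Q + 1) i q) :
    bdZ Δ B u (2 * Fintype.card Q) i q := by
  by_contra hc
  set n := Fintype.card Q with hn
  have h1 : ∀ j, j ≤ n → ∃ i q, bdZ Δ B u (2 * j + 1) i q ∧ ¬ bdZ Δ B u (2 * j) i q := by
    intro j hj
    by_contra hcon
    push Not at hcon
    have : ∀ l, ∀ i q, bdZ Δ B u (2 * (j + l) + 1) i q → bdZ Δ B u (2 * (j + l)) i q := by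
      intro l
      induction l with
      | zero => exact hcon
      | succ l ih =>
        have := bdZ_stat (by omega) ih
        rw [show 2 * (j + (l + 1)) = 2 * (j + l) + 2 by ring]
        exact this
    have := this (n - j) i q
    rw [show j + (n - j) = n by omega] at this
    exact hc (this h)
  have h2 : ∀ j, j ≤ n → ∃ i, ∀ t, i ≤ t → ∃ q, bdZ Δ B u (2 * j + 1) t q ∧ ¬ bdZ Δ B u (2 * j) t q := by
    intro j hj
    obtain ⟨i, q, hq⟩ := h1 j hj
    obtain ⟨p, hp, hp2⟩ := bd_path (i := i) (q := q)
      (P := fun t q => bdZ Δ B u (2 * j + 1) t q ∧ ¬ bdZ Δ B u (2 * j) t q)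
      (R := fun t q q' => (q, u t, q') ∈ Δ) (by
        rintro t ht x ⟨hx1, hx2⟩
        rw [bdZ_even_iff (by omega)] at hx2
        push Not at hx2
        obtain ⟨w, hw, hw2⟩ := hx2
        exact ⟨w, hw, bdZ_closed _ _ _ _ hw hx1, hw2⟩) hq
    exact ⟨i, fun t ht => ⟨p t, (hp2 t ht).1⟩⟩
  have h3 : ∀ j : Fin (n + 1), ∃ i, ∀ t, i ≤ t → ∃ q, bdZ Δ B u (2 * j + 1) t q ∧ ¬ bdZ Δ B u (2 * j) t q :=
    fun j => h2 j (by omega)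
  choose f hf using h3
  let T := Finset.univ.sup f
  have h4 : ∀ j : Fin (n + 1), ∃ q, bdZ Δ B u (2 * j + 1) T q ∧ ¬ bdZ Δ B u (2 * j) T q :=
    fun j => hf j T (Finset.le_sup (Finset.mem_univ j))
  choose g hg using h4
  have hinj : Function.Injective g := by
    intro x y hxy
    by_contra hne
    rcases lt_or_gt_of_ne hne with hlt | hlt
    · have := bdZ_mono (l := 2 * (y : ℕ)) (by have : (x : ℕ) < y := hlt; omega) (hg x).1
      rw [hxy] at this
      exact (hg y).2 this
    · have := bdZ_mono (l := 2 * (x : ℕ)) (by have : (y : ℕ) < x := hlt; omega) (hg y).1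
      rw [← hxy] at this
      exact (hg x).2 this
  have := Fintype.card_le_of_injective g hinj
  simp at this
  omega

noncomputable def bdTr (Δ : Set (Q × A × Q)) (B : Set Q) (M : ℕ) (u : ℕ → A) (i : ℕ) (q : Q) : ℕ :=
  sInf {k | M ≤ k ∨ bdZ Δ B u k i q}

theorem bdTr_le_M {i : ℕ} {q : Q} : bdTr Δ B M u i q ≤ M := Nat.sInf_le (Or.inl (le_refl _))

theorem bdTr_le {i : ℕ} {q : Q} {k : ℕ} (hk : k < M) : bdTr Δ B M u i q ≤ k ↔ bdZ Δ B u k i q := by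
  constructor
  · intro h
    have := Nat.sInf_mem (s := {k | M ≤ k ∨ bdZ Δ B u k i q}) ⟨M, Or.inl (le_refl _)⟩
    rcases this with h1 | h1
    · have : M ≤ bdTr Δ B M u i q := h1
      omega
    · exact bdZ_mono h h1
  · intro h
    exact Nat.sInf_le (Or.inr h)

theorem bd_rank_exists (hM : M = 2 * Fintype.card Q + 1) :
    bdGood Δ B M u 0 (bdTr Δ B M u) := by
  have hrc : ∀ i, 0 ≤ i → bdTr Δ B M u i = bdR Δ B M (u i) (bdTr Δ B M u (i + 1)) := by
    intro i _
    funext q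
    have hsup : ∀ k, (bdSc Δ (u i) q).sup (bdTr Δ B M u (i + 1)) ≤ k ↔
        ∀ q', (q, u i, q') ∈ Δ → bdTr Δ B M u (i + 1) q' ≤ k := by
      intro k
      rw [Finset.sup_le_iff]
      simp only [bd_mem_sc]
    have key : ∀ k, k < M → (bdTr Δ B M u i q ≤ k ↔ bdR Δ B M (u i) (bdTr Δ B M u (i + 1)) q ≤ k) := by
      intro k hk
      rcases Nat.mod_two_eq_zero_or_one k with h0 | h0
      · have e : bdTr Δ B M u i q ≤ k ↔ (bdSc Δ (u i) q).sup (bdTr Δ B M u (i + 1)) ≤ k := by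
          rw [bdTr_le hk, bdZ_even_iff h0, hsup]
          simp only [bdTr_le hk]
        rw [e]
        unfold bdR
        split_ifs <;> omega
      · obtain ⟨l, rfl⟩ : ∃ l, k = l + 1 := ⟨k - 1, by omega⟩
        have e : bdTr Δ B M u i q ≤ l + 1 ↔ (bdSc Δ (u i) q).sup (bdTr Δ B M u (i + 1)) ≤ l ∨
            (q ∉ B ∧ (bdSc Δ (u i) q).sup (bdTr Δ B M u (i + 1)) ≤ l + 1) := by
          rw [bdTr_le hk, bdZ_odd (by omega), bdBF_iff, ← bdZ_odd (by omega), hsup, hsup,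
            bdZ_even_iff (by omega)]
          simp only [bdTr_le hk, bdTr_le (show l < M by omega)]
          constructor
          · rintro ⟨h1 | h1, h2⟩
            · exact Or.inl h1
            · exact Or.inr ⟨h1, h2⟩
          · rintro (h1 | ⟨h1, h2⟩)
            · exact ⟨Or.inl h1, fun q' hq' => bdZ_succ _ (h1 q' hq')⟩
            · exact ⟨Or.inr h1, h2⟩
        rw [e]
        unfold bdR
        by_cases hB : q ∈ B
        · simp only [hB, not_true_eq_false, false_and, or_false, true_and]
          split_ifs <;> omega
        · simp only [hB, not_false_eq_true, true_and, false_and, and_false, if_false]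
          omega
    have l1 : bdTr Δ B M u i q ≤ M := bdTr_le_M
    have l2 : bdR Δ B M (u i) (bdTr Δ B M u (i + 1)) q ≤ M := by
      have : (bdSc Δ (u i) q).sup (bdTr Δ B M u (i + 1)) ≤ M := (hsup M).2 (fun _ _ => bdTr_le_M)
      unfold bdR
      split_ifs <;> omega
    apply le_antisymm
    · by_contra hc
      have := key (bdR Δ B M (u i) (bdTr Δ B M u (i + 1)) q) (by omega)
      omega
    · by_contra hc
      have := key (bdTr Δ B M u i q) (by omega)
      omega
  refine ⟨fun i _ q => bdTr_le_M, hrc, ?_, ?_, ?_⟩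
  · intro i _ p k hk hp
    have hkM : k < M := by
      have := (hp i (le_refl _)).1
      have : bdTr Δ B M u i (p i) ≤ M := bdTr_le_M
      omega
    obtain ⟨X, hX, he, hX2⟩ := bdZ_even (Δ := Δ) (B := B) (u := u) hk
    have h1 : bdZ Δ B u k i (p i) := (bdTr_le hkM).1 (hp i (le_refl _)).1.le
    rw [he] at h1
    refine h1 ⟨p, rfl, fun t ht => ⟨(hp t ht).2, fun hx => ?_⟩⟩
    obtain ⟨h2, h3⟩ := hX2 _ _ hx
    have := (bdTr_le (M := M) (by omega)).2 h3
    have := (hp t ht).1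
    omega
  · intro i hi q h0 h1 h2
    have hM' : bdTr Δ B M u i q ≤ M := bdTr_le_M
    obtain ⟨l, hl⟩ : ∃ l, bdTr Δ B M u i q = l + 3 := ⟨bdTr Δ B M u i q - 3, by omega⟩
    have h3 : ¬ bdZ Δ B u (l + 1) i q := by
      rw [← bdTr_le (M := M) (by omega)]; omega
    have h4 := h3
    rw [bdZ_odd (by omega)] at h4
    unfold bdBF at h4
    push Not at h4
    obtain ⟨j, w, hw, h5, h6⟩ := h4
    have h7 : ¬ bdZ Δ B u (l + 1) j w := by
      rw [bdZ_odd (by omega), bdBF_iff]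
      tauto
    have h8 : ¬ bdTr Δ B M u j w ≤ l + 1 := by
      rwa [bdTr_le (M := M) (by omega)]
    have h9 := bd_reach_le hrc hw hi
    refine ⟨j, w, hw, ?_⟩
    by_contra hc
    have h10 : bdTr Δ B M u j w = l + 3 := by omega
    have e := congrFun (hrc j (by omega)) w
    exact bdR_odd_notB (by rw [← e]; omega) (by rw [← e]; omega) h6
  · intro i hi q h0
    have h1 : ¬ bdZ Δ B u (2 * Fintype.card Q) i q := by
      rw [← bdTr_le (M := M) (by omega)]; omega
    have h2 : ¬ bdZ Δ B u (2 * Fintype.card Q + 1) i q := fun h => h1 (bdZ_final h)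
    rw [bdZ_odd (by omega)] at h2
    unfold bdBF at h2
    push Not at h2
    obtain ⟨j, w, hw, h5, h6⟩ := h2
    rw [← bdTr_le (M := M) (by omega)] at h5
    have : bdTr Δ B M u j w ≤ M := bdTr_le_M
    exact ⟨j, w, hw, by omega, h6⟩

end truth

section delta
variable {Q A : Type*} [Fintype Q]

/-- same rank successor -/
def bdE (Δ : Set (Q × A × Q)) (u : ℕ → A) (r : ℕ → Q → ℕ) (i : ℕ) (v w : Q) : Prop :=
  (v, u i, w) ∈ Δ ∧ r (i + 1) w = r i v

/-- bounded height -/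
def bdHb (E : ℕ → Q → Q → Prop) : ℕ → ℕ → Q → Prop
  | 0, i, v => ∀ w, ¬ E i v w
  | t + 1, i, v => ∀ w, E i v w → bdHb E t (i + 1) w

/-- bounded distance -/
def bdHo (E : ℕ → Q → Q → Prop) (F : ℕ → Q → Prop) : ℕ → ℕ → Q → Prop
  | 0, i, v => F i v
  | t + 1, i, v => F i v ∨ ∃ w, E i v w ∧ bdHo E F t (i + 1) w

theorem bdHb_succ {E : ℕ → Q → Q → Prop} {t : ℕ} : ∀ {i : ℕ} {v : Q}, bdHb E t i v → bdHb E (t + 1) i v := by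
  induction t with
  | zero => intro i v h w hw; exact absurd hw (h w)
  | succ t ih => intro i v h w hw; exact ih (h w hw)

theorem bdHb_mono {E : ℕ → Q → Q → Prop} {t t' : ℕ} (ht : t ≤ t') {i : ℕ} {v : Q}
    (h : bdHb E t i v) : bdHb E t' i v := by
  induction ht with
  | refl => exact h
  | step _ ih => exact bdHb_succ ih

variable {Δ : Set (Q × A × Q)} {B : Set Q} {M : ℕ} {u : ℕ → A} {N : ℕ} {r r' : ℕ → Q → ℕ}

theorem bdHb_ex (h : bdGood Δ B M u N r) {i : ℕ} (hi : N ≤ i) {v : Q} (he : r i v % 2 = 0) :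
    ∃ t, bdHb (bdE Δ u r) t i v := by
  by_contra hc
  obtain ⟨p, hp, hp2⟩ := bd_path (i := i) (q := v)
    (P := fun t x => r t x = r i v ∧ ¬ ∃ b, bdHb (bdE Δ u r) b t x)
    (R := fun t q q' => (q, u t, q') ∈ Δ) (by
      rintro t ht x ⟨hx1, hx2⟩
      by_contra hcon
      push Not at hcon
      have h1 : ∀ w, ∃ b, bdE Δ u r t x w → bdHb (bdE Δ u r) b (t + 1) w := by
        intro w
        by_cases hw : bdE Δ u r t x w
        · have := hcon w hw.1
          by_contra hn
          push Not at hn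
          obtain ⟨b, hb⟩ := this (hw.2.trans hx1)
          exact (hn b).2 hb
        · exact ⟨0, fun h => absurd h hw⟩
      choose f hf using h1
      refine hx2 ⟨Finset.univ.sup f + 1, fun w hw => ?_⟩
      exact bdHb_mono (Finset.le_sup (Finset.mem_univ w)) (hf w hw)) ⟨rfl, hc⟩
  exact h.ha i hi p _ he (fun t ht => ⟨(hp2 t ht).1.1, (hp2 t ht).2⟩)

/-- fresh along ranking -/
def bdF (Δ : Set (Q × A × Q)) (B : Set Q) (M : ℕ) (u : ℕ → A) (r : ℕ → Q → ℕ) (i : ℕ) (q : Q) : Prop :=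
  bdFr Δ B M (u i) (r (i + 1)) q (r i q)

theorem bdHo_ex (h : bdGood Δ B M u N r) (hM : M % 2 = 1) {i : ℕ} (hi : N ≤ i) {v : Q}
    (he : r i v % 2 = 1) : ∃ t, bdHo (bdE Δ u r) (bdF Δ B M u r) t i v := by
  by_cases h1 : r i v = 1
  · exact ⟨0, Or.inr (Or.inl h1)⟩
  by_cases h2 : r i v = M
  · obtain ⟨j, w, hj, hw, hB⟩ := h.hc i hi v h2
    clear h1 he
    induction hj with
    | refl i q => exact ⟨0, Or.inl hB⟩
    | @head i q q' j w hd hr ih =>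
      have a1 := bd_reach_le h.rc hr (by omega)
      have a2 := bd_succ_le h.rc hi hd
      obtain ⟨t, ht⟩ := ih (by omega) (by omega) hw hB
      exact ⟨t + 1, Or.inr ⟨q', ⟨hd, by omega⟩, ht⟩⟩
  · obtain ⟨j, w, hj, hw⟩ := h.hb i hi v he h1 h2
    induction hj with
    | refl i q => omega
    | @head i q q' j w hd hr ih =>
      have a1 := bd_reach_le h.rc hr (by omega)
      have a2 := bd_succ_le h.rc hi hd
      by_cases hq : r (i + 1) q' = r i q
      · obtain ⟨t, ht⟩ := ih (by omega) (by omega) (by omega) (by omega) (by omega)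
        exact ⟨t + 1, Or.inr ⟨q', ⟨hd, by omega⟩, ht⟩⟩
      · exact ⟨0, Or.inr (Or.inr ⟨h2, q', bd_mem_sc.2 hd, by omega⟩)⟩

open Classical in
theorem bd_delta_exists (h : bdGood Δ B M u N r) (hM : M % 2 = 1) :
    ∃ δ : ℕ → Q → ℕ, ∀ i, N ≤ i → δ i = bdD Δ B M (u i) (r (i + 1)) (δ (i + 1)) := by
  let δ : ℕ → Q → ℕ := fun i q => if r i q % 2 = 0 then sInf {t | bdHb (bdE Δ u r) t i q}
    else sInf {t | bdHo (bdE Δ u r) (bdF Δ B M u r) t i q}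
  refine ⟨δ, fun i hi => funext fun q => ?_⟩
  have e := congrFun (h.rc i hi) q
  have hE : ∀ q, N ≤ i → ∀ i, N ≤ i → r i q % 2 = 0 → bdHb (bdE Δ u r) (δ i q) i q := by
    intro q _ i hi h0
    have := Nat.sInf_mem (bdHb_ex h hi h0)
    simp only [δ, if_pos h0]
    exact this
  have hE' : ∀ q i t, r i q % 2 = 0 → bdHb (bdE Δ u r) t i q → δ i q ≤ t := by
    intro q i t h0 ht
    simp only [δ, if_pos h0]
    exact Nat.sInf_le ht
  have hO : ∀ q i, N ≤ i → r i q % 2 = 1 → bdHo (bdE Δ u r) (bdF Δ B M u r) (δ i q) i q := by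
    intro q i hi h0
    have := Nat.sInf_mem (bdHo_ex h hM hi h0)
    simp only [δ, if_neg (show ¬ r i q % 2 = 0 by omega)]
    exact this
  have hO' : ∀ q i t, r i q % 2 = 1 → bdHo (bdE Δ u r) (bdF Δ B M u r) t i q → δ i q ≤ t := by
    intro q i t h0 ht
    simp only [δ, if_neg (show ¬ r i q % 2 = 0 by omega)]
    exact Nat.sInf_le ht
  rcases Nat.mod_two_eq_zero_or_one (r i q) with h0 | h0
  · apply le_antisymm
    · apply hE' q i _ h0
      generalize hb : bdD Δ B M (u i) (r (i + 1)) (δ (i + 1)) q = b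
      have key : ∀ w, bdE Δ u r i q w → δ (i + 1) w + 1 ≤ b := by
        intro w hw
        rw [← hb]
        exact bdD_E1 (by omega) (bd_mem_sc.2 hw.1) (by rw [← e]; exact hw.2)
      cases b with
      | zero => intro w hw; have := key w hw; omega
      | succ b =>
        intro w hw
        have := key w hw
        exact bdHb_mono (t := δ (i + 1) w) (by omega) (hE w hi (i + 1) (by omega) (by rw [hw.2]; exact h0))
    · by_cases hz : bdD Δ B M (u i) (r (i + 1)) (δ (i + 1)) q = 0
      · omega
      · obtain ⟨w, hw, h1, h2⟩ := bdD_X hz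
        rw [← e] at h1
        have h3 := hE q hi i hi h0
        have hw' : bdE Δ u r i q w := ⟨bd_mem_sc.1 hw, h1⟩
        generalize δ i q = b at h3
        cases b with
        | zero => exact absurd hw' (h3 w)
        | succ b =>
          have := hE' w (i + 1) b (by omega) (h3 w hw')
          omega
  · by_cases hf : bdF Δ B M u r i q
    · have h1 := hO' q i 0 h0 hf
      rw [bdD_F (by omega) (by rw [← e]; exact hf)]
      omega
    · apply le_antisymm
      · obtain ⟨w, hw, h1, h2⟩ := bdD_O2 (Δ := Δ) (B := B) (M := M) (a := u i) (r := r (i + 1)) (q := q) (d := δ (i + 1))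
          (by omega) (by rw [← e]; exact hf)
        rw [h2]
        rw [← e] at h1
        apply hO' q i _ h0
        exact Or.inr ⟨w, ⟨bd_mem_sc.1 hw, h1⟩, hO w (i + 1) (by omega) (by omega)⟩
      · have h3 := hO q i hi h0
        generalize δ i q = b at h3
        cases b with
        | zero => exact absurd h3 hf
        | succ b =>
          rcases h3 with h3 | ⟨w, hw, h3⟩
          · exact absurd h3 hf
          · have h4 := hO' w (i + 1) b (by have := hw.2; omega) h3
            have h5 := bdD_O1 (Δ := Δ) (B := B) (M := M) (d := δ (i + 1)) (r := r (i + 1)) (q := q) (by omega) (bd_mem_sc.2 hw.1) (by rw [← e]; exact hw.2)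
            omega

end delta

section stab
variable {Q A : Type*} [Fintype Q]

theorem bd_mono_const (f : ℕ → ℕ) (C N : ℕ) (h1 : ∀ i, N ≤ i → f i ≤ f (i + 1))
    (h2 : ∀ i, f i ≤ C) : ∃ N', N ≤ N' ∧ ∀ i, N' ≤ i → f i = f (i + 1) := by
  obtain ⟨x, ⟨N', hN', rfl⟩, hm⟩ := WellFounded.has_min (wellFounded_lt (α := ℕ))
    {x | ∃ i, N ≤ i ∧ x = C - f i} ⟨_, N, le_refl _, rfl⟩
  have hmono : ∀ j, f N' ≤ f (N' + j) := by
    intro j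
    induction j with
    | zero => exact le_refl _
    | succ j ih => exact ih.trans (h1 (N' + j) (by omega))
  have hc : ∀ i, N' ≤ i → f i = f N' := by
    intro i hi
    obtain ⟨j, rfl⟩ := Nat.exists_eq_add_of_le hi
    have a1 := hmono j
    have a2 := hm (C - f (N' + j)) ⟨N' + j, by omega, rfl⟩
    have := h2 (N' + j)
    omega
  exact ⟨N', hN', fun i hi => by rw [hc i hi, hc (i + 1) (by omega)]⟩

theorem bd_no_desc (f : ℕ → ℕ) (m : ℕ) (h : ∀ i, m ≤ i → f (i + 1) < f i) : False := by
  have : ∀ j, f (m + j) + j ≤ f m := by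
    intro j
    induction j with
    | zero => simp
    | succ j ih => have := h (m + j) (by omega); rw [← add_assoc m j 1]; omega
  have := this (f m + 1)
  omega

variable {Δ : Set (Q × A × Q)} {B : Set Q} {M : ℕ} {u : ℕ → A} {N : ℕ}

theorem bd_odds_sub {a : A} {r : Q → ℕ} : bdOdds M (bdR Δ B M a r) ⊆ bdOdds M r := by
  intro o ho
  rw [bd_mem_odds] at *
  obtain ⟨h, q, rfl⟩ := ho
  obtain ⟨w, _, hw⟩ := bdR_odd_succ h.1
  exact ⟨h, w, hw⟩

theorem bd_card_oddlt (k : ℕ) : ((Finset.range k).filter (fun o => o % 2 = 1)).card = k / 2 := by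
  induction k with
  | zero => rfl
  | succ k ih =>
    rw [Finset.range_add_one, Finset.filter_insert]
    split_ifs with h
    · rw [Finset.card_insert_of_notMem (by simp), ih]; omega
    · rw [ih]; omega

theorem bd_normal_iff {r : Q → ℕ} : bdRel M r = r ↔
    (∀ q, r q ≤ M) ∧ ∀ q, r q < M → ∀ o, o % 2 = 1 → o < r q → o ∈ bdOdds M r := by
  have hsub : ∀ q, (bdOdds M r).filter (· < r q) ⊆ (Finset.range (r q)).filter (fun o => o % 2 = 1) := by
    intro q o ho
    simp only [Finset.mem_filter, Finset.mem_range, bd_mem_odds] at *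
    exact ⟨ho.2, ho.1.1.1⟩
  constructor
  · intro h
    refine ⟨fun q => ?_, fun q hq o ho hlt => ?_⟩
    · by_contra hc
      have := congrFun h q
      unfold bdRel at this
      rw [if_pos (by omega)] at this
      omega
    · have h1 := congrFun h q
      rw [bdRel_of_lt hq] at h1
      have h2 := Finset.eq_of_subset_of_card_le (hsub q) (by rw [bd_card_oddlt]; omega)
      have : o ∈ (bdOdds M r).filter (· < r q) := by
        rw [h2]; simp [ho, hlt]
      exact (Finset.mem_filter.1 this).1
  · rintro ⟨h1, h2⟩
    funext q
    by_cases hq : r q < M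
    · rw [bdRel_of_lt hq]
      have : (bdOdds M r).filter (· < r q) = (Finset.range (r q)).filter (fun o => o % 2 = 1) := by
        apply (hsub q).antisymm
        intro o ho
        simp only [Finset.mem_filter, Finset.mem_range] at *
        exact ⟨h2 q hq o ho.2 ho.1, ho.1⟩
      rw [this, bd_card_oddlt]
      omega
    · have := h1 q
      unfold bdRel
      rw [if_pos (by omega)]
      omega

theorem bd_true_normal {r : ℕ → Q → ℕ} (h : bdGood Δ B M u N r) :
    ∃ N', N ≤ N' ∧ ∀ i, N' ≤ i → bdRel M (r i) = r i := by
  have hsub : ∀ i, N ≤ i → bdOdds M (r i) ⊆ bdOdds M (r (i + 1)) := by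
    intro i hi
    rw [h.rc i hi]
    exact bd_odds_sub
  obtain ⟨N', hN, hN'⟩ := bd_mono_const (fun i => (bdOdds M (r i)).card) (Fintype.card Q) N
    (fun i hi => Finset.card_le_card (hsub i hi)) (fun i => bd_card_odds _)
  have heq : ∀ i, N' ≤ i → ∀ j, i ≤ j → bdOdds M (r i) = bdOdds M (r j) := by
    intro i hi j hj
    induction hj with
    | refl => rfl
    | @step m hj ih =>
      rw [ih]
      have hj' : i ≤ m := hj
      exact Finset.eq_of_subset_of_card_le (hsub _ (by omega)) (hN' m (by omega)).ge
  refine ⟨N', hN, fun i hi => bd_normal_iff.2 ⟨h.le i (by omega), ?_⟩⟩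
  have main : ∀ k, ∀ i, N' ≤ i → ∀ q, r i q = k → k < M → ∀ o, o % 2 = 1 → o < k →
      o ∈ bdOdds M (r i) := by
    intro k
    induction k using Nat.strong_induction_on with
    | _ k ih =>
    intro i hi q hq hk o ho hok
    have later : ∃ j w, i ≤ j ∧ r j w + 1 = k := by
      rcases Nat.mod_two_eq_zero_or_one k with h0 | h0
      · by_contra hc
        push Not at hc
        obtain ⟨p, hp, hp2⟩ := bd_path (i := i) (q := q) (P := fun t q => r t q = k)
          (R := fun t q q' => (q, u t, q') ∈ Δ) (by
            intro t ht x hx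
            obtain ⟨w, hw, h2⟩ := h.cases (i := t) (by omega) (q := x) (by omega)
            have := hc (t + 1) w (by omega)
            exact ⟨w, hw, by omega⟩) hq
        exact h.ha i (by omega) p k h0 hp2
      · obtain ⟨j, w, hj, hw⟩ := h.hb i (by omega) q (by omega) (by omega) (by omega)
        exact ⟨j, w, (bd_reach_le h.rc hj (by omega)).1, by omega⟩
    obtain ⟨j, w, hj, hw⟩ := later
    rw [heq i hi j hj]
    by_cases ho' : o + 1 = k
    · rw [bd_mem_odds]
      exact ⟨by omega, w, by omega⟩
    · exact ih (k - 1) (by omega) j (by omega) w (by omega) (by omega) o ho (by omega)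
  intro q hq o ho hlt
  exact main _ i hi q rfl hq o ho hlt

theorem bdR_le_M {a : A} {r : Q → ℕ} (hr : ∀ q, r q ≤ M) (q : Q) : bdR Δ B M a r q ≤ M := by
  by_cases h : bdR Δ B M a r q = 0
  · omega
  · obtain ⟨w, _, h1⟩ := bdR_cases h
    have := hr w
    omega

theorem bd_step_normal {a : A} {r : Q → ℕ} (hr : bdRel M r = r)
    (ho : bdOdds M (bdR Δ B M a r) = bdOdds M r) :
    bdRel M (bdR Δ B M a r) = bdR Δ B M a r := by
  rw [bd_normal_iff] at *
  refine ⟨bdR_le_M hr.1, fun q hq o hodd hlt => ?_⟩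
  rw [ho]
  obtain ⟨w, _, h1⟩ := bdR_cases (Δ := Δ) (B := B) (M := M) (a := a) (r := r) (q := q) (by omega)
  rcases h1 with h1 | ⟨h1, h2, _⟩
  · exact hr.2 w (by omega) o hodd (by omega)
  · by_cases h3 : o = r w
    · rw [bd_mem_odds]; exact ⟨by omega, w, h3.symm⟩
    · exact hr.2 w (by omega) o hodd (by omega)

/-- the run equations for components -/
theorem bd_run_stab {r : ℕ → Q → ℕ} (hM : M = 2 * Fintype.card Q + 1)
    (h : ∀ i, r i = bdRel M (bdR Δ B M (u i) (r (i + 1)))) :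
    ∃ N, ∀ i, N ≤ i → r i = bdR Δ B M (u i) (r (i + 1)) ∧ bdRel M (r i) = r i := by
  have hn : ∀ i, bdRel M (r i) = r i := by
    intro i
    rw [h i]; exact bdRel_idem hM
  have hc : ∀ i, (bdOdds M (r i)).card = (bdOdds M (bdR Δ B M (u i) (r (i + 1)))).card := by
    intro i
    conv_lhs => rw [h i]
    exact bd_card_odds_rel hM
  obtain ⟨N, _, hN⟩ := bd_mono_const (fun i => (bdOdds M (r i)).card) (Fintype.card Q) 0
    (fun i hi => by
      simp only [hc i]
      exact Finset.card_le_card bd_odds_sub) (fun i => bd_card_odds _)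
  refine ⟨N, fun i hi => ⟨?_, hn i⟩⟩
  conv_lhs => rw [h i]
  apply bd_step_normal (hn _)
  apply Finset.eq_of_subset_of_card_le bd_odds_sub
  rw [← hc i]
  exact (hN i hi).ge

end stab

section run
variable {Q A : Type*} [Fintype Q]

/-- abstract run from level `N` on -/
structure bdRun (Δ : Set (Q × A × Q)) (B : Set Q) (M : ℕ) (u : ℕ → A) (N : ℕ) (r d : ℕ → Q → ℕ) :
    Prop where
  le : ∀ i, N ≤ i → ∀ q, r i q ≤ M
  rc : ∀ i, N ≤ i → r i = bdR Δ B M (u i) (r (i + 1))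
  o1 : ∀ i, N ≤ i → bdOrd (r i) (d i) (bdD Δ B M (u i) (r (i + 1)) (d (i + 1)))
  o2 : ∀ i, N ≤ i → bdOrd (r i) (bdD Δ B M (u i) (r (i + 1)) (d (i + 1))) (d i)

variable {Δ : Set (Q × A × Q)} {B : Set Q} {M : ℕ} {u : ℕ → A} {N : ℕ} {r d : ℕ → Q → ℕ}

/-- recurrence condition -/
def bdRec (Δ : Set (Q × A × Q)) (B : Set Q) (M : ℕ) (u : ℕ → A) (r d : ℕ → Q → ℕ) : Prop :=
  ∀ k, k ≤ M → ∀ m, ∃ i, m ≤ i ∧ ∀ q, ¬ (bdR Δ B M (u i) (r (i + 1)) q = k ∧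
    bdD Δ B M (u i) (r (i + 1)) (d (i + 1)) q = bdTop (r (i + 1)) (d (i + 1)) k + 1)

theorem bdRun.lt_iff (h : bdRun Δ B M u N r d) {i : ℕ} (hi : N ≤ i) {q q' : Q} (hr : r i q = r i q') :
    d i q < d i q' ↔ bdD Δ B M (u i) (r (i + 1)) (d (i + 1)) q <
      bdD Δ B M (u i) (r (i + 1)) (d (i + 1)) q' :=
  ⟨h.o1 i hi q q' hr, h.o2 i hi q q' hr⟩

theorem bdRun.chain (h : bdRun Δ B M u N r d) (hT : bdRec Δ B M u r d) {m k : ℕ} (hm : N ≤ m)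
    (v : ℕ → Q) (hv : ∀ t, m ≤ t → r t (v t) = k ∧
      bdD Δ B M (u t) (r (t + 1)) (d (t + 1)) (v t) = d (t + 1) (v (t + 1)) + 1) : False := by
  classical
  let S : ℕ → Finset Q := fun t => Finset.univ.filter (fun q => r t q = k ∧ d t (v t) ≤ d t q)
  have hS : ∀ t q, q ∈ S t ↔ r t q = k ∧ d t (v t) ≤ d t q := by
    intro t q; simp [S]
  let U : ℕ → Finset ℕ := fun t => (S t).image (d t)
  let U' : ℕ → Finset ℕ := fun t => (S t).image (bdD Δ B M (u t) (r (t + 1)) (d (t + 1)))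
  have hcard : ∀ t, m ≤ t → (U t).card = (U' t).card := by
    intro t ht
    apply bd_card_image
    intro x hx y hy
    rw [hS] at hx hy
    have a1 := h.lt_iff (i := t) (by omega) (q := x) (q' := y) (by omega)
    have a2 := h.lt_iff (i := t) (by omega) (q := y) (q' := x) (by omega)
    omega
  have hsub : ∀ t, m ≤ t → U' t ⊆ (U (t + 1)).image (· + 1) := by
    intro t ht x hx
    obtain ⟨q, hq, rfl⟩ := Finset.mem_image.1 hx
    rw [hS] at hq
    have a1 := h.lt_iff (i := t) (by omega) (q := q) (q' := v t) (by rw [hq.1, (hv t ht).1])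
    have a2 := (hv t ht).2
    obtain ⟨w, hw, h1, h2⟩ := bdD_X (Δ := Δ) (B := B) (M := M) (a := u t) (r := r (t + 1)) (d := d (t + 1)) (q := q) (by omega)
    rw [← congrFun (h.rc t (by omega)) q] at h1
    refine Finset.mem_image.2 ⟨d (t + 1) w, Finset.mem_image.2 ⟨w, ?_, rfl⟩, h2.symm⟩
    rw [hS]
    omega
  have hc2 : ∀ t, ((U t).image (· + 1)).card = (U t).card := fun t =>
    Finset.card_image_of_injective _ (fun a b hab => by simpa using hab)
  obtain ⟨N', hN', hN2⟩ := bd_mono_const (fun i => (U i).card) (Fintype.card Q) m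
    (fun i hi => by
      simp only [hcard i hi]
      rw [← hc2 (i + 1)]
      exact Finset.card_le_card (hsub i hi))
    (fun i => Finset.card_image_le.trans (Finset.card_le_univ _))
  have hkM : k ≤ M := by rw [← (hv m (le_refl _)).1]; exact h.le m hm _
  obtain ⟨i, hi, hq⟩ := hT k hkM N'
  have heq := Finset.eq_of_subset_of_card_le (hsub i (by omega)) (by
    rw [hc2, ← hcard i (by omega)]; exact (hN2 i hi).ge)
  have hv1 := (hv (i + 1) (by omega)).1
  obtain ⟨q, hq1, hq2⟩ := Finset.exists_mem_eq_sup (Finset.univ.filter (fun q => r (i + 1) q = k))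
    ⟨v (i + 1), by simp [hv1]⟩ (d (i + 1))
  have hle : d (i + 1) (v (i + 1)) ≤ bdTop (r (i + 1)) (d (i + 1)) k := by
    rw [← hv1]; exact bd_le_top
  have htop : bdTop (r (i + 1)) (d (i + 1)) k = d (i + 1) q := hq2
  have hmem : bdTop (r (i + 1)) (d (i + 1)) k + 1 ∈ U' i := by
    rw [heq]
    refine Finset.mem_image.2 ⟨_, Finset.mem_image.2 ⟨q, ?_, htop.symm⟩, rfl⟩
    rw [hS]
    simp only [Finset.mem_filter, Finset.mem_univ, true_and] at hq1
    omega
  obtain ⟨x, hx, hx2⟩ := Finset.mem_image.1 hmem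
  rw [hS] at hx
  exact hq x ⟨by rw [← congrFun (h.rc i (by omega)) x]; exact hx.1, hx2⟩

theorem bdReach.tail {i : ℕ} {q : Q} {j : ℕ} {w w' : Q} (h : bdReach Δ u i q j w)
    (h2 : (w, u j, w') ∈ Δ) : bdReach Δ u i q (j + 1) w' := by
  induction h with
  | refl i q => exact bdReach.head h2 (bdReach.refl _ _)
  | head hd _ ih => exact bdReach.head hd (ih h2)

theorem bdRun.good (h : bdRun Δ B M u N r d) (hT : bdRec Δ B M u r d)
    (hM : M = 2 * Fintype.card Q + 1) : bdGood Δ B M u N r := by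
  have e : ∀ i, N ≤ i → ∀ q, bdR Δ B M (u i) (r (i + 1)) q = r i q :=
    fun i hi q => (congrFun (h.rc i hi) q).symm
  have odd : ∀ i, N ≤ i → ∀ q, r i q % 2 = 1 → (∀ j w, bdReach Δ u i q j w → r j w = r i q →
      ¬ bdFr Δ B M (u j) (r (j + 1)) w (r i q)) → False := by
    intro i hi q ho hnf
    obtain ⟨p, hp, hp2⟩ := bd_path (i := i) (q := q)
      (P := fun t x => r t x = r i q ∧ bdReach Δ u i q t x)
      (R := fun t x w => bdD Δ B M (u t) (r (t + 1)) (d (t + 1)) x = d (t + 1) w + 1) (by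
        rintro t ht x ⟨hx, hx2⟩
        have e1 := e t (by omega) x
        obtain ⟨w, hw, h1, h2⟩ := bdD_O2 (Δ := Δ) (B := B) (M := M) (a := u t) (r := r (t + 1)) (d := d (t + 1)) (q := x)
          (by omega) (by rw [e1, hx]; exact hnf t x hx2 hx)
        exact ⟨w, h2, by omega, hx2.tail (bd_mem_sc.1 hw)⟩) ⟨rfl, bdReach.refl _ _⟩
    exact h.chain hT hi p (fun t ht => ⟨(hp2 t ht).1.1, (hp2 t ht).2⟩)
  refine ⟨h.le, h.rc, ?_, ?_, ?_⟩
  · intro i hi p k hk hp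
    obtain ⟨v, hv, hv2⟩ := bd_path (i := i) (q := p i)
      (P := fun t x => r t x = k ∧ d t (p t) ≤ d t x)
      (R := fun t x w => bdD Δ B M (u t) (r (t + 1)) (d (t + 1)) x = d (t + 1) w + 1) (by
        rintro t ht x ⟨hx, hx2⟩
        have h1 := hp t ht
        have h2 := hp (t + 1) (by omega)
        have e1 := e t (by omega) x
        have e2 := e t (by omega) (p t)
        have a1 := h.lt_iff (i := t) (by omega) (q := x) (q' := p t) (by omega)
        have a2 := bdD_E1 (Δ := Δ) (B := B) (M := M) (a := u t) (r := r (t + 1)) (d := d (t + 1)) (q := p t)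
          (by omega) (bd_mem_sc.2 h1.2) (by omega)
        obtain ⟨w, hw, h3, h4⟩ := bdD_X (Δ := Δ) (B := B) (M := M) (a := u t) (r := r (t + 1)) (d := d (t + 1)) (q := x) (by omega)
        exact ⟨w, h4, by omega, by omega⟩) ⟨(hp i (le_refl _)).1, le_refl _⟩
    exact h.chain hT hi v (fun t ht => ⟨(hv2 t ht).1.1, (hv2 t ht).2⟩)
  · intro i hi q h0 h1 h2
    by_contra hc
    push Not at hc
    refine odd i hi q h0 (fun j w hj hw hf => ?_)
    have hij := (bd_reach_le h.rc hj hi).1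
    rcases hf with hf | hf | ⟨_, x, hx, hx2⟩
    · exact bdR_odd_notB (Δ := Δ) (B := B) (M := M) (a := u j) (r := r (j + 1)) (q := w)
        (by rw [e j (by omega)]; omega) (by rw [e j (by omega)]; omega) hf
    · exact h1 hf
    · exact hc (j + 1) x (hj.tail (bd_mem_sc.1 hx)) hx2
  · intro i hi q h0
    by_contra hc
    push Not at hc
    have : 0 < Fintype.card Q := Fintype.card_pos_iff.2 ⟨q⟩
    refine odd i hi q (by omega) (fun j w hj hw hf => ?_)
    rcases hf with hf | hf | ⟨hf, _⟩
    · exact hc j w hj (by omega) hf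
    · omega
    · exact hf h0

theorem bdRun.order (h : bdRun Δ B M u N r d) {δ : ℕ → Q → ℕ}
    (hδ : ∀ i, N ≤ i → δ i = bdD Δ B M (u i) (r (i + 1)) (δ (i + 1))) (t : ℕ) :
    ∀ i, N ≤ i → ∀ q1 q2, r i q1 = r i q2 → δ i q1 ≤ t →
      (δ i q1 < δ i q2 → d i q1 < d i q2) ∧ (δ i q1 ≤ δ i q2 → d i q1 ≤ d i q2) := by
  induction t using Nat.strong_induction_on with
  | _ t ih =>
  intro i hi q1 q2 hr ht
  have e : ∀ q, bdR Δ B M (u i) (r (i + 1)) q = r i q :=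
    fun q => (congrFun (h.rc i hi) q).symm
  have hd : ∀ q, δ i q = bdD Δ B M (u i) (r (i + 1)) (δ (i + 1)) q := fun q => congrFun (hδ i hi) q
  have e1 := e q1
  have e2 := e q2
  have d1 := hd q1
  have d2 := hd q2
  have l1 := h.lt_iff hi hr
  have l2 := h.lt_iff hi hr.symm
  have IH : ∀ w1 w2, r (i + 1) w1 = r (i + 1) w2 → δ (i + 1) w1 < δ i q1 →
      (δ (i + 1) w1 < δ (i + 1) w2 → d (i + 1) w1 < d (i + 1) w2) ∧
      (δ (i + 1) w1 ≤ δ (i + 1) w2 → d (i + 1) w1 ≤ d (i + 1) w2) :=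
    fun w1 w2 hw hlt => ih (δ (i + 1) w1) (by omega) (i + 1) (by omega) w1 w2 hw (le_refl _)
  rcases Nat.mod_two_eq_zero_or_one (r i q1) with h0 | h0
  · have side : ∀ w, w ∈ bdSc Δ (u i) q1 → r (i + 1) w = r i q1 → δ (i + 1) w < δ i q1 := by
      intro w hw hw2
      have := bdD_E1 (Δ := Δ) (B := B) (M := M) (a := u i) (r := r (i + 1)) (d := δ (i + 1)) (q := q1)
          (by omega) hw (by omega)
      omega
    have main : ∀ w2, w2 ∈ bdSc Δ (u i) q2 → r (i + 1) w2 = r i q2 → δ i q2 = δ (i + 1) w2 + 1 →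
      (δ i q1 < δ i q2 → d i q1 < d i q2) ∧ (δ i q1 ≤ δ i q2 → d i q1 ≤ d i q2) := by
      intro w2 hw2 hr2 he2
      have b2 := bdD_E1 (Δ := Δ) (B := B) (M := M) (a := u i) (r := r (i + 1)) (d := d (i + 1)) (q := q2)
          (by omega) hw2 (by omega)
      by_cases hz : bdD Δ B M (u i) (r (i + 1)) (d (i + 1)) q1 = 0
      · omega
      · obtain ⟨w1, hw1, hr1, he1⟩ := bdD_X hz
        have s1 := side w1 hw1 (by omega)
        have := IH w1 w2 (by omega) s1
        omega
    by_cases hz : δ i q2 = 0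
    · refine ⟨fun _ => by omega, fun hle => ?_⟩
      by_contra hcon
      obtain ⟨w1, hw1, hr1, he1⟩ := bdD_X (Δ := Δ) (B := B) (M := M) (a := u i) (r := r (i + 1)) (d := d (i + 1)) (q := q1) (by omega)
      have s1 := side w1 hw1 (by omega)
      omega
    · obtain ⟨w2, hw2, hr2, he2⟩ := bdD_X (Δ := Δ) (B := B) (M := M) (a := u i) (r := r (i + 1)) (d := δ (i + 1)) (q := q2) (by omega)
      exact main w2 hw2 (by omega) (by omega)
  · by_cases f1 : bdFr Δ B M (u i) (r (i + 1)) q1 (bdR Δ B M (u i) (r (i + 1)) q1)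
    · have a1 := bdD_F (d := d (i + 1)) (by omega) f1
      have a2 := bdD_F (d := δ (i + 1)) (by omega) f1
      refine ⟨fun hlt => ?_, fun _ => by omega⟩
      by_cases f2 : bdFr Δ B M (u i) (r (i + 1)) q2 (bdR Δ B M (u i) (r (i + 1)) q2)
      · have a3 := bdD_F (d := δ (i + 1)) (by omega) f2
        omega
      · obtain ⟨w, _, _, hw⟩ := bdD_O2 (d := d (i + 1)) (by omega) f2
        omega
    · obtain ⟨w1, hw1, hr1, he1⟩ := bdD_O2 (d := δ (i + 1)) (by omega) f1
      have b1 := bdD_O1 (d := d (i + 1)) (by omega) hw1 hr1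
      by_cases f2 : bdFr Δ B M (u i) (r (i + 1)) q2 (bdR Δ B M (u i) (r (i + 1)) q2)
      · have a3 := bdD_F (d := δ (i + 1)) (by omega) f2
        omega
      · obtain ⟨w, hw, hr2, he2⟩ := bdD_O2 (d := d (i + 1)) (by omega) f2
        have b2 := bdD_O1 (d := δ (i + 1)) (by omega) hw hr2
        have := IH w1 w (by omega) (by omega)
        omega

theorem bdRun.nd (h : bdRun Δ B M u N r d) {δ : ℕ → Q → ℕ}
    (hδ : ∀ i, N ≤ i → δ i = bdD Δ B M (u i) (r (i + 1)) (δ (i + 1))) {i : ℕ} (hi : N ≤ i) :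
    bdNd M (r i) (d i) = bdNd M (r i) (δ i) := by
  apply bdNd_ord
  · intro q q' hr hlt
    by_contra hc
    have := (h.order hδ (δ i q') i hi q' q hr.symm (le_refl _)).2 (by omega)
    omega
  · intro q q' hr hlt
    exact (h.order hδ (δ i q) i hi q q' hr (le_refl _)).1 hlt

end run

section auto
variable {Q A : Type*} [Fintype Q]

/-- the transition function -/
noncomputable def bdRho (Δ : Set (Q × A × Q)) (B : Set Q) (M : ℕ) (a : A) (s : bdP Q M) : bdP Q M :=
  ⟨(bdRel M (bdR Δ B M a s.1.1), bdNd M (bdR Δ B M a s.1.1) (bdD Δ B M a s.1.1 s.1.2)), _, _, rfl⟩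

/-- the recurrence sets -/
def bdT (Δ : Set (Q × A × Q)) (B : Set Q) (M : ℕ) (k : ℕ) : Set (bdP Q M × A × bdP Q M) :=
  {x | ∀ q, ¬ (bdR Δ B M x.2.1 x.2.2.1.1 q = k ∧
    bdD Δ B M x.2.1 x.2.2.1.1 x.2.2.1.2 q = bdTop x.2.2.1.1 x.2.2.1.2 k + 1)}

variable {Δ : Set (Q × A × Q)} {B : Set Q} {M : ℕ} {u : ℕ → A}

theorem bd_final_char (hM : M = 2 * Fintype.card Q + 1) {s : ℕ → bdP Q M}
    (hs : IsBackRun (bdRho Δ B M) u s)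
    (hf : GTBFinal (fun k : Fin (M + 1) => bdT Δ B M k) u s) {δ : ℕ → Q → ℕ}
    (hδ : ∀ i, 0 ≤ i → δ i = bdD Δ B M (u i) (bdTr Δ B M u (i + 1)) (δ (i + 1))) :
    ∃ N, ∀ i, N ≤ i → (s i).1 = (bdTr Δ B M u i, bdNd M (bdTr Δ B M u i) (δ i)) := by
  have h1 : ∀ i, (s i).1.1 = bdRel M (bdR Δ B M (u i) (s (i + 1)).1.1) := by
    intro i; conv_lhs => rw [hs i]
    rfl
  have h2 : ∀ i, (s i).1.2 = bdNd M (bdR Δ B M (u i) (s (i + 1)).1.1)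
      (bdD Δ B M (u i) (s (i + 1)).1.1 (s (i + 1)).1.2) := by
    intro i; conv_lhs => rw [hs i]
    rfl
  obtain ⟨N, hN⟩ := bd_run_stab (r := fun i => (s i).1.1) hM h1
  have h3 : ∀ i, N ≤ i → (s i).1.2 = bdNd M (s i).1.1
      (bdD Δ B M (u i) (s (i + 1)).1.1 (s (i + 1)).1.2) := by
    intro i hi
    rw [h2 i, ← (hN i hi).1]
  have hrun : bdRun Δ B M u N (fun i => (s i).1.1) (fun i => (s i).1.2) := by
    refine ⟨fun i hi => (bd_normal_iff.1 (hN i hi).2).1, fun i hi => (hN i hi).1, ?_, ?_⟩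
    · intro i hi q q' hr hlt
      simp only [h3 i hi] at hlt
      exact (bdNd_normal (hN i hi).2 hr).1 hlt
    · intro i hi q q' hr hlt
      simp only [h3 i hi]
      exact (bdNd_normal (hN i hi).2 hr).2 hlt
  have hrec : bdRec Δ B M u (fun i => (s i).1.1) (fun i => (s i).1.2) := by
    intro k hk m
    exact hf ⟨k, by omega⟩ m
  have hgood := hrun.good hrec hM
  have htrue := (bd_rank_exists (Δ := Δ) (B := B) (u := u) hM).mono (Nat.zero_le N)
  have heq : ∀ i, N ≤ i → (s i).1.1 = bdTr Δ B M u i := fun i hi => hgood.unique htrue hi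
  have hδ' : ∀ i, N ≤ i → δ i = bdD Δ B M (u i) (s (i + 1)).1.1 (δ (i + 1)) := by
    intro i hi
    rw [heq (i + 1) (by omega)]
    exact hδ i (Nat.zero_le _)
  refine ⟨N, fun i hi => Prod.ext (heq i hi) ?_⟩
  have h4 := hrun.nd hδ' hi
  simp only
  rw [← heq i hi, ← h4]
  rw [h3 i hi]
  have h5 : ∀ q q', (s i).1.1 q = (s i).1.1 q' → _ := fun q q' hr => hrun.lt_iff hi hr
  apply bdNd_ord
  · intro q q' hr hlt
    exact (bdNd_normal (hN i hi).2 hr).2 hlt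
  · intro q q' hr hlt
    exact (bdNd_normal (hN i hi).2 hr).1 hlt

theorem bd_extend {P : Type*} (ρ : A → P → P) (N : ℕ) : ∀ g : ℕ → P,
    (∀ i, N ≤ i → g i = ρ (u i) (g (i + 1))) →
    ∃ s, IsBackRun ρ u s ∧ ∀ i, N ≤ i → s i = g i := by
  classical
  induction N with
  | zero => intro g hg; exact ⟨g, fun i => hg i (Nat.zero_le _), fun _ _ => rfl⟩
  | succ N ih =>
    intro g hg
    obtain ⟨s, hs, hs2⟩ := ih (Function.update g N (ρ (u N) (g (N + 1)))) (by
      intro i hi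
      rw [Function.update_of_ne (a := i + 1) (by omega)]
      rcases Nat.eq_or_lt_of_le hi with rfl | hlt
      · rw [Function.update_self]
      · rw [Function.update_of_ne (by omega)]; exact hg i hlt)
    refine ⟨s, hs, fun i hi => ?_⟩
    rw [hs2 i (by omega), Function.update_of_ne (by omega)]

theorem bd_back_eq {P : Type*} (ρ : A → P → P) {s s' : ℕ → P} (hs : IsBackRun ρ u s)
    (hs' : IsBackRun ρ u s') (N : ℕ) : (∀ i, N ≤ i → s i = s' i) → s = s' := by
  induction N with
  | zero => intro h; funext i; exact h i (Nat.zero_le _)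
  | succ N ih =>
    intro h
    apply ih
    intro i hi
    rcases Nat.eq_or_lt_of_le hi with rfl | hlt
    · rw [hs N, hs' N, h (N + 1) (le_refl _)]
    · exact h i hlt

theorem bd_final_exists (hM : M = 2 * Fintype.card Q + 1) {δ : ℕ → Q → ℕ}
    (hδ : ∀ i, 0 ≤ i → δ i = bdD Δ B M (u i) (bdTr Δ B M u (i + 1)) (δ (i + 1))) :
    ∃ s : ℕ → bdP Q M, IsBackRun (bdRho Δ B M) u s ∧
      GTBFinal (fun k : Fin (M + 1) => bdT Δ B M k) u s := by
  have hg := bd_rank_exists (Δ := Δ) (B := B) (u := u) hM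
  obtain ⟨N, _, hN⟩ := bd_true_normal hg
  generalize hr : bdTr Δ B M u = r at *
  have hrc := hg.rc
  let g : ℕ → bdP Q M := fun i => ⟨(bdRel M (r i), bdNd M (r i) (δ i)), _, _, rfl⟩
  have hg1 : ∀ i, N ≤ i → (g i).1.1 = r i := fun i hi => hN i hi
  have ho1 : ∀ i, N ≤ i → bdOrd (r i) (δ i) (g i).1.2 := by
    intro i hi q q' hr hlt
    exact (bdNd_normal (hN i hi) hr).2 hlt
  have ho2 : ∀ i, N ≤ i → bdOrd (r i) (g i).1.2 (δ i) := by
    intro i hi q q' hr hlt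
    exact (bdNd_normal (hN i hi) hr).1 hlt
  obtain ⟨s, hs, hs2⟩ := bd_extend (u := u) (bdRho Δ B M) N g (by
    intro i hi
    apply Subtype.ext
    have e1 : (bdRho Δ B M (u i) (g (i + 1))).1 = (bdRel M (bdR Δ B M (u i) (g (i + 1)).1.1),
      bdNd M (bdR Δ B M (u i) (g (i + 1)).1.1) (bdD Δ B M (u i) (g (i + 1)).1.1 (g (i + 1)).1.2)) := rfl
    rw [e1, hg1 (i + 1) (by omega), ← hrc i (Nat.zero_le _)]
    apply Prod.ext
    · rfl
    · change bdNd M (r i) (δ i) = bdNd M (r i) _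
      have a1 := bdOrd_step (Δ := Δ) (B := B) (M := M) (a := u i) (ho1 (i + 1) (by omega))
      have a2 := bdOrd_step (Δ := Δ) (B := B) (M := M) (a := u i) (ho2 (i + 1) (by omega))
      rw [← hδ i (Nat.zero_le _), ← hrc i (Nat.zero_le _)] at a1 a2
      exact bdNd_ord a1 a2)
  refine ⟨s, hs, fun k m => ?_⟩
  by_contra hc
  push Not at hc
  apply bd_no_desc (fun i => bdTop (r i) (δ i) k) (max m N)
  intro i hi
  have h1 := hc i (by omega)
  rw [hs2 (i + 1) (by omega)] at h1
  unfold bdT at h1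
  simp only [Set.mem_ofPred_eq] at h1
  push Not at h1
  obtain ⟨q, hq1, hq2⟩ := h1
  rw [hg1 (i + 1) (by omega)] at hq1 hq2
  have h2 := bdTop_transfer (ho1 (i + 1) (by omega)) (by rw [hq1]; exact hq2)
  rw [hq1, ← hδ i (Nat.zero_le _)] at h2
  obtain ⟨w, hw, hw2, _⟩ := bdD_X (Δ := Δ) (B := B) (M := M) (a := u i) (r := r (i + 1))
    (d := (g (i + 1)).1.2) (q := q) (by omega)
  have h3 := h2 w (by omega)
  have h4 : δ i q ≤ bdTop (r i) (δ i) k := by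
    have : (k : ℕ) = r i q := by rw [congrFun (hrc i (Nat.zero_le _)) q]; exact hq1.symm
    rw [this]; exact bd_le_top
  refine lt_of_lt_of_le ?_ h4
  unfold bdTop
  rw [Finset.sup_lt_iff (by rw [bot_eq_zero]; omega)]
  intro x hx
  simp only [Finset.mem_filter, Finset.mem_univ, true_and] at hx
  exact h2 x hx

/-- acceptance from a level -/
def bdAcc (Δ : Set (Q × A × Q)) (B : Set Q) (u : ℕ → A) (i : ℕ) (q : Q) : Prop :=
  ∃ p : ℕ → Q, p i = q ∧ (∀ t, i ≤ t → (p t, u t, p (t + 1)) ∈ Δ) ∧ ∀ m, ∃ t, m ≤ t ∧ p t ∈ B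

theorem bdAcc_step {i : ℕ} {q : Q} : bdAcc Δ B u i q ↔ ∃ w, (q, u i, w) ∈ Δ ∧ bdAcc Δ B u (i + 1) w := by
  classical
  constructor
  · rintro ⟨p, rfl, h1, h2⟩
    exact ⟨p (i + 1), h1 i (le_refl _), p, rfl, fun t ht => h1 t (by omega), h2⟩
  · rintro ⟨w, hw, p, hp, h1, h2⟩
    refine ⟨Function.update p i q, by simp, fun t ht => ?_, fun m => ?_⟩
    · rw [Function.update_of_ne (a := t + 1) (by omega)]
      rcases Nat.eq_or_lt_of_le ht with rfl | hlt
      · rw [Function.update_self, hp]; exact hw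
      · rw [Function.update_of_ne (by omega)]; exact h1 t hlt
    · obtain ⟨t, ht, hB⟩ := h2 (max m (i + 1))
      exact ⟨t, by omega, by rw [Function.update_of_ne (by omega)]; exact hB⟩

theorem bd_good_acc {r : ℕ → Q → ℕ} {N : ℕ} (hM : M = 2 * Fintype.card Q + 1)
    (h : bdGood Δ B M u N r) {δ : ℕ → Q → ℕ}
    (hδ : ∀ i, N ≤ i → δ i = bdD Δ B M (u i) (r (i + 1)) (δ (i + 1))) {i : ℕ} (hi : N ≤ i) {q : Q} :
    r i q = M ↔ bdAcc Δ B u i q := by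
  have e : ∀ i, N ≤ i → ∀ q, bdR Δ B M (u i) (r (i + 1)) q = r i q :=
    fun i hi q => (congrFun (h.rc i hi) q).symm
  constructor
  · intro hq
    have hpos : 0 < Fintype.card Q := Fintype.card_pos_iff.2 ⟨q⟩
    obtain ⟨p, hp, hp2⟩ := bd_path (i := i) (q := q) (P := fun t x => r t x = M)
      (R := fun t x w => (x, u t, w) ∈ Δ ∧ (x ∉ B → δ (t + 1) w < δ t x)) (by
        intro t ht x hx
        have e1 := e t (by omega) x
        by_cases hB : x ∈ B
        · obtain ⟨w, hw, hw2⟩ := bdR_odd_succ (Δ := Δ) (B := B) (M := M) (a := u t) (r := r (t + 1)) (q := x) (by omega)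
          exact ⟨w, ⟨bd_mem_sc.1 hw, fun hn => absurd hB hn⟩, by omega⟩
        · obtain ⟨w, hw, hw2, hw3⟩ := bdD_O2 (Δ := Δ) (B := B) (M := M) (a := u t) (r := r (t + 1)) (d := δ (t + 1)) (q := x)
            (by omega) (by
              rintro (hf | hf | ⟨hf, _⟩)
              · exact hB hf
              · omega
              · omega)
          rw [← congrFun (hδ t (by omega)) x] at hw3
          exact ⟨w, ⟨bd_mem_sc.1 hw, fun _ => by omega⟩, by omega⟩) hq
    refine ⟨p, hp, fun t ht => (hp2 t ht).2.1, fun m => ?_⟩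
    by_contra hc
    push Not at hc
    apply bd_no_desc (fun t => δ t (p t)) (max m i)
    intro t ht
    exact (hp2 t (by omega)).2.2 (hc t (by omega))
  · rintro ⟨p, rfl, h1, h2⟩
    by_contra hne
    have hlt : r i (p i) < M := by have := h.le i hi (p i); omega
    have hmono : ∀ t, i ≤ t → r (t + 1) (p (t + 1)) ≤ r t (p t) :=
      fun t ht => bd_succ_le h.rc (by omega) (h1 t ht)
    have hltM : ∀ t, i ≤ t → r t (p t) < M := by
      intro t ht
      induction ht with
      | refl => exact hlt
      | @step m hm ih => have := hmono m hm; exact lt_of_le_of_lt this ih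
    obtain ⟨N', hN', hc⟩ := bd_mono_const (fun t => M - r t (p t)) M i
      (fun t ht => by have := hmono t ht; omega) (fun t => by omega)
    have hconst : ∀ t, N' ≤ t → r t (p t) = r N' (p N') := by
      intro t ht
      induction ht with
      | refl => rfl
      | @step m hm ih =>
        have hm' : N' ≤ m := hm
        have a1 := hc m hm'
        have a2 := hltM m (by omega)
        have a3 := hltM (m + 1) (by omega)
        change r (m + 1) (p (m + 1)) = r N' (p N')
        omega
    rcases Nat.mod_two_eq_zero_or_one (r N' (p N')) with h0 | h0
    · exact h.ha N' (by omega) p _ h0 (fun t ht => ⟨hconst t ht, h1 t (by omega)⟩)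
    · obtain ⟨t, ht, hB⟩ := h2 N'
      have a1 := hconst t ht
      have a2 := hltM t (by omega)
      exact h.odd_notB (i := t) (by omega) (q := p t) (by omega) (by omega) hB

theorem bd_main (hM : M = 2 * Fintype.card Q + 1) (u : ℕ → A) :
    (∃! s : ℕ → bdP Q M, IsBackRun (bdRho Δ B M) u s ∧
      GTBFinal (fun k : Fin (M + 1) => bdT Δ B M k) u s) ∧
    ∀ s : ℕ → bdP Q M, IsBackRun (bdRho Δ B M) u s →
      GTBFinal (fun k : Fin (M + 1) => bdT Δ B M k) u s →
      ∀ q, (s 0).1.1 q = M ↔ NBAAccepts Δ B u q := by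
  have hg := bd_rank_exists (Δ := Δ) (B := B) (u := u) hM
  obtain ⟨δ, hδ⟩ := bd_delta_exists hg (by omega)
  constructor
  · obtain ⟨s, hs, hf⟩ := bd_final_exists hM hδ
    refine ⟨s, ⟨hs, hf⟩, ?_⟩
    rintro s' ⟨hs', hf'⟩
    obtain ⟨N, hN⟩ := bd_final_char hM hs hf hδ
    obtain ⟨N', hN'⟩ := bd_final_char hM hs' hf' hδ
    exact bd_back_eq _ hs' hs (max N N') (fun i hi => Subtype.ext (by
      rw [hN i (by omega), hN' i (by omega)]))
  · intro s hs hf q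
    obtain ⟨N, hN⟩ := bd_final_char hM hs hf hδ
    have main : ∀ j, j ≤ N → ∀ q, (s (N - j)).1.1 q = M ↔ bdAcc Δ B u (N - j) q := by
      intro j
      induction j with
      | zero =>
        intro _ q
        rw [Nat.sub_zero, hN N (le_refl _)]
        exact bd_good_acc hM hg hδ (Nat.zero_le _)
      | succ j ih =>
        intro hj q
        have ih := ih (by omega)
        rw [show N - j = (N - (j + 1)) + 1 by omega] at ih
        generalize N - (j + 1) = i at ih
        have h1 : (s i).1.1 = bdRel M (bdR Δ B M (u i) (s (i + 1)).1.1) := by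
          conv_lhs => rw [hs i]
          rfl
        have hle : ∀ q, (s (i + 1)).1.1 q ≤ M := by
          intro q
          obtain ⟨r, d, hrd⟩ := (s (i + 1)).2
          rw [hrd]
          exact bdRel_le hM
        rw [h1, bdRel_eq_M hM, bdAcc_step]
        constructor
        · intro h2
          have h3 := bdR_le_M (Δ := Δ) (B := B) (a := u i) hle q
          obtain ⟨w, hw, hw2⟩ := bdR_odd_succ (Δ := Δ) (B := B) (M := M) (a := u i) (r := (s (i + 1)).1.1) (q := q) (by omega)
          exact ⟨w, bd_mem_sc.1 hw, (ih w).1 (by omega)⟩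
        · rintro ⟨w, hw, hw2⟩
          have h4 := (ih w).2 hw2
          have h5 := bdR_le (Δ := Δ) (B := B) (M := M) (a := u i) (r := (s (i + 1)).1.1) (bd_mem_sc.2 hw)
          omega
    have h0 := main N (le_refl _) q
    rw [Nat.sub_self] at h0
    rw [h0]
    constructor
    · rintro ⟨p, hp, h1, h2⟩
      exact ⟨p, hp, fun t => h1 t (Nat.zero_le _), h2⟩
    · rintro ⟨p, hp, h1, h2⟩
      exact ⟨p, hp, fun t _ => h1 t, h2⟩

end auto

/-- Carton–Michel: for every nondeterministic Büchi automaton with `n`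
states and initial state set `I` there is an equivalent backward deterministic automaton
with a generalized transition Büchi condition and at most `(3n)^n` states. -/
theorem buechi_to_backward_deterministic_gtb {Q A : Type*} [Fintype Q]
    (Δ : Set (Q × A × Q)) (B : Set Q) (I : Set Q) :
    ∃ (P : Type) (_ : Fintype P) (ρ : A → P → P) (k : ℕ)
      (T : Fin k → Set (P × A × P)) (I' : Set P),
      Fintype.card P ≤ (3 * Fintype.card Q) ^ Fintype.card Q ∧
      (∀ u : ℕ → A, ∃! r : ℕ → P, IsBackRun ρ u r ∧ GTBFinal T u r) ∧
      (∀ (u : ℕ → A) (r : ℕ → P), IsBackRun ρ u r → GTBFinal T u r →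
        (r 0 ∈ I' ↔ ∃ q ∈ I, NBAAccepts Δ B u q)) := by
  classical
  let e := Fintype.equivFin Q
  set n := Fintype.card Q with hn
  let Δ' : Set (Fin n × A × Fin n) := {x | (e.symm x.1, x.2.1, e.symm x.2.2) ∈ Δ}
  let B' : Set (Fin n) := {x | e.symm x ∈ B}
  have hM : 2 * n + 1 = 2 * Fintype.card (Fin n) + 1 := by simp
  have hfin : Finite (bdP (Fin n) (2 * n + 1)) := bdP_finite hM
  let _ : Fintype (bdP (Fin n) (2 * n + 1)) := Fintype.ofFinite _
  have htr : ∀ u q, NBAAccepts Δ B u q ↔ NBAAccepts Δ' B' u (e q) := by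
    intro u q
    constructor
    · rintro ⟨p, hp, h1, h2⟩
      refine ⟨fun i => e (p i), by simp [hp], fun i => ?_, fun m => ?_⟩
      · simpa [Δ'] using h1 i
      · simpa [B'] using h2 m
    · rintro ⟨p, hp, h1, h2⟩
      exact ⟨fun i => e.symm (p i), by simp [hp], h1, h2⟩
  refine ⟨bdP (Fin n) (2 * n + 1), inferInstance, bdRho Δ' B' (2 * n + 1), 2 * n + 1 + 1,
    fun k => bdT Δ' B' (2 * n + 1) k, {s | ∃ q ∈ I, s.1.1 (e q) = 2 * n + 1}, ?_, ?_, ?_⟩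
  · have := bdP_card (Q := Fin n) hM
    simpa using this
  · intro u
    exact (bd_main hM u).1
  · intro u s hs hf
    have h := (bd_main hM u).2 s hs hf
    simp only [Set.mem_ofPred_eq]
    constructor
    · rintro ⟨q, hq, h1⟩
      exact ⟨q, hq, (htr u q).2 ((h _).1 h1)⟩
    · rintro ⟨q, hq, h1⟩
      exact ⟨q, hq, (h _).2 ((htr u q).1 h1)⟩
end

section
/- For every nondeterministic Büchi automaton over an alphabet A with n states and initial state set I there exists a backward deterministic automaton over A with a state-based Büchi recurrence condition and at most (12n)^n states which, augmented with a suitable set of initial states, recognizes the same ω-language. -/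
/-- A run is final for the state-based Büchi condition `Ω` if it visits `Ω` infinitely
often. -/
def SBFinal {P : Type*} (Ω : Set P) (r : ℕ → P) : Prop :=
  ∀ m, ∃ i, m ≤ i ∧ r i ∈ Ω


set_option linter.unusedSectionVars false
set_option linter.unusedVariables false

namespace CM
open Classical

section
variable {Q : Type*} [Fintype Q]

noncomputable def cnt (R : Q → Q → Prop) (x : Q) : ℕ :=
  ((Finset.univ.filter (fun y => R y x)).image
    (fun y => Finset.univ.filter (fun z => R z y))).card

def lexR (F t : Q → ℕ) (x y : Q) : Prop := F x < F y ∨ F x = F y ∧ t x < t y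

noncomputable def enc (F : Q → ℕ) (R : Q → Q → Prop) (x : Q) : ℕ := F x + cnt R x

noncomputable def dec (top : ℕ) (p : Q → ℕ) (x : Q) : ℕ :=
  min top (p x - cnt (fun y z => p y < p z) x)

noncomputable def newF (top : ℕ) (B : Set Q) (s : Q → Finset Q) (F : Q → ℕ) (x : Q) : ℕ :=
  if Odd ((s x).sup F) ∧ x ∈ B ∧ (s x).sup F ≠ top then (s x).sup F + 1 else (s x).sup F

def goal (top : ℕ) (B : Set Q) (s : Q → Finset Q) (F : Q → ℕ) (r : ℕ) (x : Q) : Prop :=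
  (r = top ∧ x ∈ B) ∨ (r ≠ top ∧ (r = 1 ∨ ∃ y ∈ s x, F y + 1 = r))

noncomputable def newT (top : ℕ) (B : Set Q) (s : Q → Finset Q) (F p : Q → ℕ) (x : Q) : ℕ :=
  if Even (newF top B s F x) then
    ((s x).filter (fun y => F y = newF top B s F x)).sup (fun y => p y + 1)
  else if goal top B s F (newF top B s F x) x then 0
  else sInf {k | ∃ y ∈ s x, F y = newF top B s F x ∧ k = p y + 1}

def IsT (top : ℕ) (B : Set Q) (s : Q → Finset Q) (F : Q → ℕ) (r : ℕ) (x : Q)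
    (p : Q → ℕ) (k : ℕ) : Prop :=
  (Even r → (∀ a ∈ s x, F a = r → p a < k) ∧ (0 < k → ∃ a ∈ s x, F a = r ∧ p a + 1 = k)) ∧
  (¬ Even r → (goal top B s F r x → k = 0) ∧ (¬ goal top B s F r x →
    (∃ a ∈ s x, F a = r ∧ p a + 1 = k) ∧ ∀ a ∈ s x, F a = r → k ≤ p a + 1))

lemma cnt_lt {F t : Q → ℕ} {x y : Q} (h : lexR F t x y) : cnt (lexR F t) x < cnt (lexR F t) y := by
  unfold cnt
  apply Finset.card_lt_card
  rw [Finset.ssubset_iff_of_subset]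
  · refine ⟨Finset.univ.filter (fun z => lexR F t z x), ?_, ?_⟩
    · exact Finset.mem_image.2 ⟨x, by simp [h], rfl⟩
    · intro hm
      obtain ⟨w, hw, he⟩ := Finset.mem_image.1 hm
      have hw' : lexR F t w x := by simpa using hw
      have : w ∈ Finset.univ.filter (fun z => lexR F t z w) := by rw [he]; simp [hw']
      have : lexR F t w w := by simpa using this
      unfold lexR at this; omega
  · apply Finset.image_subset_image
    intro z hz
    have hz : lexR F t z x := by simpa using hz
    have : lexR F t z y := by unfold lexR at *; omega
    simp [this]

lemma cnt_le {F t : Q → ℕ} {x y : Q} (h : ¬ lexR F t x y) :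
    cnt (lexR F t) y ≤ cnt (lexR F t) x := by
  unfold cnt
  apply Finset.card_le_card
  apply Finset.image_subset_image
  intro z hz
  have hz : lexR F t z y := by simpa using hz
  have : lexR F t z x := by unfold lexR at *; omega
  simp [this]

lemma cnt_lt_card (F t : Q → ℕ) (x : Q) : cnt (lexR F t) x < Fintype.card Q := by
  unfold cnt
  refine lt_of_le_of_lt Finset.card_image_le ?_
  rw [← Finset.card_univ]
  apply Finset.card_lt_card
  rw [Finset.ssubset_univ_iff]
  intro h
  have : x ∈ Finset.univ.filter (fun z => lexR F t z x) := by rw [h]; simp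
  have : lexR F t x x := by simpa using this
  unfold lexR at this; omega

lemma enc_lt_iff (F t : Q → ℕ) (x y : Q) :
    enc F (lexR F t) x < enc F (lexR F t) y ↔ lexR F t x y := by
  unfold enc
  constructor
  · intro h
    by_contra hc
    have := cnt_le hc
    have : F y ≤ F x := by unfold lexR at hc; omega
    omega
  · intro h
    have := cnt_lt h
    have : F x ≤ F y := by unfold lexR at h; omega
    omega

lemma dec_enc (top : ℕ) (F t : Q → ℕ) (hF : ∀ x, F x ≤ top) :
    dec top (enc F (lexR F t)) = F := by
  funext x
  unfold dec
  have : (fun y z => enc F (lexR F t) y < enc F (lexR F t) z) = lexR F t := by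
    funext y z; exact propext (enc_lt_iff F t y z)
  rw [this]
  have := hF x
  unfold enc
  omega

lemma newF_le (top : ℕ) (ht : Odd top) (B : Set Q) (s : Q → Finset Q) (F : Q → ℕ)
    (hF : ∀ x, F x ≤ top) (x : Q) : newF top B s F x ≤ top := by
  have h : (s x).sup F ≤ top := Finset.sup_le fun y _ => hF y
  unfold newF
  split_ifs with hc
  · omega
  · exact h

lemma le_newF {top : ℕ} {B : Set Q} {s : Q → Finset Q} {F : Q → ℕ} {x y : Q}
    (h : y ∈ s x) : F y ≤ newF top B s F x := by
  have h : F y ≤ (s x).sup F := Finset.le_sup h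
  unfold newF
  split_ifs with hc <;> omega

lemma newF_odd {top : ℕ} {B : Set Q} {s : Q → Finset Q} {F : Q → ℕ} {x : Q}
    (h : ¬ Even (newF top B s F x)) : ∃ y ∈ s x, F y = newF top B s F x := by
  unfold newF at *
  split_ifs at * with hc
  · exact absurd (hc.1.add_one) h
  · have hne : (s x).Nonempty := by
      by_contra hn
      rw [Finset.not_nonempty_iff_eq_empty] at hn
      simp [hn] at h
    obtain ⟨y, hy, he⟩ := Finset.exists_mem_eq_sup _ hne F
    exact ⟨y, hy, he.symm⟩

/-- odd ranks below top are not in B -/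
lemma newF_B {top : ℕ} {B : Set Q} {s : Q → Finset Q} {F : Q → ℕ} {x : Q}
    (hB : x ∈ B) (h : newF top B s F x ≠ top) : Even (newF top B s F x) := by
  unfold newF at *
  split_ifs at * with hc
  · exact hc.1.add_one
  · by_contra hn
    exact hc ⟨Nat.not_even_iff_odd.1 hn, hB, h⟩

/-- positive even rank without same rank successor -/
lemma newF_even {top : ℕ} {B : Set Q} {s : Q → Finset Q} {F : Q → ℕ} {x : Q}
    (h : 0 < newF top B s F x) (hn : ∀ y ∈ s x, F y ≠ newF top B s F x) : x ∈ B := by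
  unfold newF at *
  split_ifs at * with hc
  · exact hc.2.1
  · have hne : (s x).Nonempty := by
      by_contra hn
      rw [Finset.not_nonempty_iff_eq_empty] at hn
      simp [hn] at h
    obtain ⟨y, hy, he⟩ := Finset.exists_mem_eq_sup _ hne F
    exact absurd he.symm (hn y hy)

lemma newF_congr {top : ℕ} {B : Set Q} {s : Q → Finset Q} {F F' : Q → ℕ} {x : Q}
    (h : ∀ y ∈ s x, F y = F' y) : newF top B s F x = newF top B s F' x := by
  have : (s x).sup F = (s x).sup F' := Finset.sup_congr rfl h
  unfold newF; rw [this]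

lemma newT_isT (top : ℕ) (B : Set Q) (s : Q → Finset Q) (F p : Q → ℕ) (x : Q) :
    IsT top B s F (newF top B s F x) x p (newT top B s F p x) := by
  constructor
  · intro he
    unfold newT
    rw [if_pos he]
    constructor
    · intro a ha hr
      have := Finset.le_sup (f := fun y => p y + 1)
        (Finset.mem_filter.2 ⟨ha, hr⟩ : a ∈ (s x).filter (fun y => F y = newF top B s F x))
      exact this
    · intro hk
      have hne : ((s x).filter (fun y => F y = newF top B s F x)).Nonempty := by
        by_contra hn
        rw [Finset.not_nonempty_iff_eq_empty] at hn
        simp [hn] at hk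
      obtain ⟨y, hy, he⟩ := Finset.exists_mem_eq_sup _ hne (fun y => p y + 1)
      obtain ⟨h1, h2⟩ := Finset.mem_filter.1 hy
      exact ⟨y, h1, h2, he.symm⟩
  · intro ho
    unfold newT
    rw [if_neg ho]
    constructor
    · intro hg; rw [if_pos hg]
    · intro hg
      rw [if_neg hg]
      obtain ⟨y, hy, hr⟩ := newF_odd ho
      constructor
      · obtain ⟨a, h1, h2, h3⟩ := Nat.sInf_mem
          (⟨p y + 1, y, hy, hr, rfl⟩ :
            {k | ∃ y ∈ s x, F y = newF top B s F x ∧ k = p y + 1}.Nonempty)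
        exact ⟨a, h1, h2, h3.symm⟩
      · intro a ha hr
        exact Nat.sInf_le ⟨a, ha, hr, rfl⟩

lemma isT_mono {top : ℕ} {B : Set Q} {s : Q → Finset Q} {F : Q → ℕ} {r : ℕ} {x x' : Q}
    {g p : Q → ℕ} {k k' l l' : ℕ} (N : ℕ)
    (h : ∀ a a', F a = r → F a' = r → g a < N →
      (g a ≤ g a' → p a ≤ p a') ∧ (g a < g a' → p a < p a'))
    (h1 : IsT top B s F r x g k) (h2 : IsT top B s F r x' g k')
    (h3 : IsT top B s F r x p l) (h4 : IsT top B s F r x' p l') (hN : k ≤ N) :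
    (k ≤ k' → l ≤ l') ∧ (k < k' → l < l') := by
  by_cases he : Even r
  · replace h1 := h1.1 he
    replace h2 := h2.1 he
    replace h3 := h3.1 he
    replace h4 := h4.1 he
    constructor
    · intro hk
      rcases Nat.eq_zero_or_pos l with hl | hl
      · omega
      obtain ⟨a, ha, har, hal⟩ := h3.2 hl
      have := h1.1 a ha har
      obtain ⟨a', ha', har', hal'⟩ := h2.2 (by omega)
      have := (h a a' har har' (by omega)).1 (by omega)
      have := h4.1 a' ha' har'
      omega
    · intro hk
      obtain ⟨a', ha', har', hal'⟩ := h2.2 (by omega)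
      have := h4.1 a' ha' har'
      rcases Nat.eq_zero_or_pos l with hl | hl
      · omega
      obtain ⟨a, ha, har, hal⟩ := h3.2 hl
      have := h1.1 a ha har
      have := (h a a' har har' (by omega)).2 (by omega)
      omega
  · replace h1 := h1.2 he
    replace h2 := h2.2 he
    replace h3 := h3.2 he
    replace h4 := h4.2 he
    by_cases g1 : goal top B s F r x
    · have := h1.1 g1
      have := h3.1 g1
      constructor
      · omega
      · intro hk
        have g2 : ¬ goal top B s F r x' := fun g2 => by have := h2.1 g2; omega
        obtain ⟨⟨a', ha', har', hal'⟩, _⟩ := h4.2 g2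
        omega
    · obtain ⟨⟨a, ha, har, hal⟩, _⟩ := h1.2 g1
      have hla := (h3.2 g1).2 a ha har
      by_cases g2 : goal top B s F r x'
      · have := h2.1 g2
        constructor <;> omega
      · obtain ⟨⟨a', ha', har', hal'⟩, _⟩ := h4.2 g2
        have hka := (h2.2 g2).2 a' ha' har'
        have := h a a' har har' (by omega)
        constructor
        · intro _
          have := this.1 (by omega)
          omega
        · intro _
          have := this.2 (by omega)
          omega

def TT (top : ℕ) (B : Set Q) (s : ℕ → Q → Finset Q) (F : ℕ → Q → ℕ) : ℕ → ℕ → Q → Prop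
  | 0, _, _ => False
  | k+1, i, x => (Even (F i x) → ∀ y ∈ s i x, F (i+1) y = F i x → TT top B s F k (i+1) y) ∧
      (¬ Even (F i x) → (goal top B (s i) (F (i+1)) (F i x) x ∨
        ∃ y ∈ s i x, F (i+1) y = F i x ∧ TT top B s F k (i+1) y))

lemma TT_succ {top : ℕ} {B : Set Q} {s : ℕ → Q → Finset Q} {F : ℕ → Q → ℕ} (k : ℕ) :
    ∀ i x, TT top B s F k i x → TT top B s F (k+1) i x := by
  induction k with
  | zero => intro i x h; exact h.elim
  | succ k ih =>
    intro i x h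
    refine ⟨fun he y hy hr => ih _ _ (h.1 he y hy hr), fun ho => ?_⟩
    rcases h.2 ho with h | ⟨y, hy, hr, ht⟩
    · exact Or.inl h
    · exact Or.inr ⟨y, hy, hr, ih _ _ ht⟩

lemma TT_mono {top : ℕ} {B : Set Q} {s : ℕ → Q → Finset Q} {F : ℕ → Q → ℕ} {k l : ℕ}
    (h : k ≤ l) {i : ℕ} {x : Q} (hT : TT top B s F k i x) : TT top B s F l i x := by
  induction h with
  | refl => exact hT
  | step _ ih => exact TT_succ _ _ _ ih

lemma TT_even {top : ℕ} {B : Set Q} {s : ℕ → Q → Finset Q} {F : ℕ → Q → ℕ} {i : ℕ} {x : Q}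
    (he : Even (F i x)) (h : ∀ y ∈ s i x, F (i+1) y = F i x → ∃ k, TT top B s F k (i+1) y) :
    ∃ k, TT top B s F k i x := by
  have : ∀ y, ∃ k, y ∈ s i x → F (i+1) y = F i x → TT top B s F k (i+1) y := by
    intro y
    by_cases h1 : y ∈ s i x ∧ F (i+1) y = F i x
    · obtain ⟨k, hk⟩ := h y h1.1 h1.2
      exact ⟨k, fun _ _ => hk⟩
    · exact ⟨0, fun a b => absurd ⟨a, b⟩ h1⟩
  choose K hK using this
  refine ⟨Finset.univ.sup K + 1, fun _ y hy hr => TT_mono (Finset.le_sup (Finset.mem_univ y))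
    (hK y hy hr), fun ho => absurd he ho⟩

def Loc (top : ℕ) (B : Set Q) (s : ℕ → Q → Finset Q) (F : ℕ → Q → ℕ) : Prop :=
  (∀ i x, F i x ≤ top) ∧ ∀ i x, F i x = newF top B (s i) (F (i+1)) x

def IsG (top : ℕ) (B : Set Q) (s : ℕ → Q → Finset Q) (F g : ℕ → Q → ℕ) : Prop :=
  ∀ i x, IsT top B (s i) (F (i+1)) (F i x) x (g (i+1)) (g i x)

lemma exists_g {top : ℕ} {B : Set Q} {s : ℕ → Q → Finset Q} {F : ℕ → Q → ℕ}
    (hL : ∀ i x, ∃ k, TT top B s F k i x) : ∃ g, IsG top B s F g := by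
  have h1 : ∀ i x, ∃ k, TT top B s F (k+1) i x := fun i x => by
    obtain ⟨k, hk⟩ := hL i x
    exact ⟨k, TT_succ _ _ _ hk⟩
  let g : ℕ → Q → ℕ := fun i x => Nat.find (h1 i x)
  have hg : ∀ i x k, TT top B s F k i x ↔ g i x < k := by
    intro i x k
    constructor
    · intro h
      rcases k with _ | k
      · exact h.elim
      · exact Nat.lt_succ_of_le (Nat.find_min' (h1 i x) h)
    · intro h
      exact TT_mono h (Nat.find_spec (h1 i x))
  refine ⟨g, fun i x => ⟨fun he => ⟨?_, ?_⟩, fun ho => ⟨?_, ?_⟩⟩⟩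
  · intro a ha hr
    have := (hg i x (g i x + 1)).2 (by omega)
    exact (hg _ _ _).1 (this.1 he a ha hr)
  · intro hk
    by_contra hc
    push Not at hc
    have : TT top B s F (g i x) i x := by
      obtain ⟨k, hk⟩ : ∃ k, g i x = k + 1 := ⟨g i x - 1, by omega⟩
      rw [hk]
      refine ⟨fun _ y hy hr => ?_, fun ho => absurd he ho⟩
      have h2 := (hg i x (g i x + 1)).2 (by omega)
      have h3 := (hg _ _ _).1 (h2.1 he y hy hr)
      have h4 := hc y hy hr
      exact (hg _ _ _).2 (by omega)
    have := (hg _ _ _).1 this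
    omega
  · intro hgo
    have : TT top B s F 1 i x := ⟨fun he => absurd he ho, fun _ => Or.inl hgo⟩
    have := (hg _ _ _).1 this
    omega
  · intro hgo
    have key : ∀ a ∈ s i x, F (i+1) a = F i x → g i x ≤ g (i+1) a + 1 := by
      intro a ha hr
      have : TT top B s F (g (i+1) a + 1 + 1) i x :=
        ⟨fun he => absurd he ho, fun _ => Or.inr ⟨a, ha, hr, (hg _ _ _).2 (by omega)⟩⟩
      have := (hg _ _ _).1 this
      omega
    refine ⟨?_, key⟩
    have h2 := (hg i x (g i x + 1)).2 (by omega)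
    rcases h2.2 ho with h | ⟨y, hy, hr, ht⟩
    · exact absurd h hgo
    · have := key y hy hr
      have := (hg _ _ _).1 ht
      exact ⟨y, hy, hr, by omega⟩


lemma reach_goal {top : ℕ} {B : Set Q} {s : ℕ → Q → Finset Q} {F g : ℕ → Q → ℕ}
    (hg : IsG top B s F g) {r : ℕ} (hr : ¬ Even r) (x : ℕ → Q)
    (hx : ∀ i, F i (x i) = r)
    (hn : ∀ i, ¬ goal top B (s i) (F (i+1)) r (x i) → g (i+1) (x (i+1)) + 1 = g i (x i)) :
    ∀ N m, g m (x m) ≤ N → ∃ i, m ≤ i ∧ goal top B (s i) (F (i+1)) r (x i) := by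
  intro N
  induction N with
  | zero =>
    intro m hm
    by_contra hc
    push Not at hc
    have := hn m (hc m le_rfl)
    omega
  | succ N ih =>
    intro m hm
    by_cases hG : goal top B (s m) (F (m+1)) r (x m)
    · exact ⟨m, le_rfl, hG⟩
    · have := hn m hG
      obtain ⟨i, hi, hgi⟩ := ih (m+1) (by omega)
      exact ⟨i, by omega, hgi⟩

lemma accept_iff {top : ℕ} (ht : Odd top) {B : Set Q} {s : ℕ → Q → Finset Q} {F g : ℕ → Q → ℕ}
    (hF : Loc top B s F) (hg : IsG top B s F g) (q : Q) :
    F 0 q = top ↔ ∃ r : ℕ → Q, r 0 = q ∧ (∀ i, r (i+1) ∈ s i (r i)) ∧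
      ∀ m, ∃ i, m ≤ i ∧ r i ∈ B := by
  have hte : ¬ Even top := Nat.not_even_iff_odd.2 ht
  constructor
  · intro hq
    have hnext : ∀ i x, ∃ y, F i x = top → y ∈ s i x ∧ F (i+1) y = top ∧
        (¬ goal top B (s i) (F (i+1)) top x → g (i+1) y + 1 = g i x) := by
      intro i x
      by_cases hx : F i x = top
      · have h2 := hg i x
        rw [hx] at h2
        by_cases hG : goal top B (s i) (F (i+1)) top x
        · obtain ⟨y, hy, hr⟩ := newF_odd (top := top) (B := B) (s := s i) (F := F (i+1)) (x := x)
            (by rw [← hF.2 i x, hx]; exact hte)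
          rw [← hF.2 i x, hx] at hr
          exact ⟨y, fun _ => ⟨hy, hr, fun h => absurd hG h⟩⟩
        · obtain ⟨⟨a, ha, har, hal⟩, _⟩ := (h2.2 hte).2 hG
          exact ⟨a, fun _ => ⟨ha, har, fun _ => hal⟩⟩
      · exact ⟨x, fun h => absurd h hx⟩
    choose nx hnx using hnext
    let r : ℕ → Q := fun k => Nat.rec q (fun i x => nx i x) k
    have hr : ∀ i, F i (r i) = top := by
      intro i
      induction i with
      | zero => exact hq
      | succ i ih => exact (hnx i (r i) ih).2.1
    refine ⟨r, rfl, fun i => (hnx i (r i) (hr i)).1, fun m => ?_⟩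
    obtain ⟨i, hi, hG⟩ := reach_goal hg hte r hr (fun i => (hnx i (r i) (hr i)).2.2) _ m le_rfl
    refine ⟨i, hi, ?_⟩
    rcases hG with h | h
    · exact h.2
    · exact absurd rfl h.1
  · rintro ⟨r, rfl, hs, hB⟩
    by_contra hne
    have hlt : F 0 (r 0) < top := lt_of_le_of_ne (hF.1 _ _) hne
    have hanti : Antitone (fun i => F i (r i)) := antitone_nat_of_succ_le fun i => by
      have : F (i+1) (r (i+1)) ≤ F i (r i) := by
        rw [hF.2 i (r i)]; exact le_newF (hs i)
      exact this
    obtain ⟨K, hK⟩ : ∃ K, ∀ k, F K (r K) ≤ F k (r k) := by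
      exact ⟨Function.argmin (fun i => F i (r i)), fun k => Function.argmin_le (fun i => F i (r i)) k⟩
    have hst : ∀ k, K ≤ k → F k (r k) = F K (r K) := fun k hk => le_antisymm (hanti hk) (hK k)
    have hKt : F K (r K) < top := lt_of_le_of_lt (hanti (Nat.zero_le K)) hlt
    by_cases he : Even (F K (r K))
    · have hdec : ∀ j, g (K+j) (r (K+j)) + j ≤ g K (r K) := by
        intro j
        induction j with
        | zero => simp
        | succ j ih =>
          have h1 := hst (K+j) (by omega)
          have h2 := ((hg (K+j) (r (K+j))).1 (by rw [h1]; exact he)).1 (r (K+j+1)) (hs _)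
            (by rw [h1]; exact hst _ (by omega))
          change g (K+j+1) (r (K+j+1)) + (j+1) ≤ _
          omega
      have := hdec (g K (r K) + 1)
      omega
    · obtain ⟨i, hi, hb⟩ := hB K
      have h1 := hst i hi
      apply he
      rw [← h1, hF.2 i (r i)]
      apply newF_B hb
      rw [← hF.2 i (r i), h1]
      omega

lemma accept_iff' {top : ℕ} (ht : Odd top) {B : Set Q} {s : ℕ → Q → Finset Q} {F g : ℕ → Q → ℕ}
    (hF : Loc top B s F) (hg : IsG top B s F g) (i : ℕ) (q : Q) :
    F i q = top ↔ ∃ r : ℕ → Q, r 0 = q ∧ (∀ j, r (j+1) ∈ s (i+j) (r j)) ∧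
      ∀ m, ∃ i, m ≤ i ∧ r i ∈ B :=
  accept_iff (s := fun j => s (i+j)) (F := fun j => F (i+j)) (g := fun j => g (i+j)) ht
    ⟨fun j x => hF.1 _ _, fun j x => hF.2 _ _⟩ (fun j x => hg _ _) q

inductive Reach (s : ℕ → Q → Finset Q) : ℕ → Q → ℕ → Q → Prop
  | refl (i : ℕ) (x : Q) : Reach s i x i x
  | head {i : ℕ} {x y : Q} {j : ℕ} {z : Q} : y ∈ s i x → Reach s (i+1) y j z → Reach s i x j z

lemma reach_le {top : ℕ} {B : Set Q} {s : ℕ → Q → Finset Q} {F : ℕ → Q → ℕ}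
    (hF : Loc top B s F) {i j : ℕ} {x y : Q} (h : Reach s i x j y) : F j y ≤ F i x := by
  induction h with
  | refl => exact le_rfl
  | @head i x y j z hy _ ih =>
    refine ih.trans ?_
    rw [hF.2 i x]; exact le_newF hy

lemma reach_B_even {top : ℕ} {B : Set Q} {s : ℕ → Q → Finset Q} {F g : ℕ → Q → ℕ}
    (hF : Loc top B s F) (hg : IsG top B s F g) : ∀ N i x, g i x ≤ N → Even (F i x) → 0 < F i x →
      ∃ j y, Reach s i x j y ∧ y ∈ B ∧ F j y = F i x := by
  intro N
  induction N with
  | zero =>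
    intro i x hN he hpos
    refine ⟨i, x, Reach.refl _ _, ?_, rfl⟩
    apply newF_even (top := top) (s := s i) (F := F (i+1))
    · rw [← hF.2]; exact hpos
    · intro y hy hr
      rw [← hF.2] at hr
      have := ((hg i x).1 he).1 y hy hr
      omega
  | succ N ih =>
    intro i x hN he hpos
    by_cases hn : ∃ y ∈ s i x, F (i+1) y = F i x
    · obtain ⟨y, hy, hr⟩ := hn
      have := ((hg i x).1 he).1 y hy hr
      obtain ⟨j, z, h1, h2, h3⟩ := ih (i+1) y (by omega) (by rw [hr]; exact he) (by omega)
      exact ⟨j, z, Reach.head hy h1, h2, by omega⟩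
    · push Not at hn
      refine ⟨i, x, Reach.refl _ _, ?_, rfl⟩
      apply newF_even (top := top) (s := s i) (F := F (i+1))
      · rw [← hF.2]; exact hpos
      · rw [← hF.2]; exact hn

lemma reach_odd {top : ℕ} {B : Set Q} {s : ℕ → Q → Finset Q} {F g : ℕ → Q → ℕ}
    (hF : Loc top B s F) (hg : IsG top B s F g) : ∀ N i x, g i x ≤ N → ¬ Even (F i x) →
      F i x ≠ top → F i x ≠ 1 → ∃ j y, Reach s i x j y ∧ F j y + 1 = F i x := by
  intro N
  have hgo : ∀ i x, F i x ≠ top → F i x ≠ 1 → goal top B (s i) (F (i+1)) (F i x) x →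
      ∃ j y, Reach s i x j y ∧ F j y + 1 = F i x := by
    intro i x h1 h2 hG
    rcases hG with h | ⟨_, h | ⟨y, hy, hr⟩⟩
    · exact absurd h.1 h1
    · exact absurd h h2
    · exact ⟨i+1, y, Reach.head hy (Reach.refl _ _), hr⟩
  induction N with
  | zero =>
    intro i x hN ho h1 h2
    by_cases hG : goal top B (s i) (F (i+1)) (F i x) x
    · exact hgo i x h1 h2 hG
    · obtain ⟨⟨a, ha, har, hal⟩, _⟩ := ((hg i x).2 ho).2 hG
      omega
  | succ N ih =>
    intro i x hN ho h1 h2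
    by_cases hG : goal top B (s i) (F (i+1)) (F i x) x
    · exact hgo i x h1 h2 hG
    · obtain ⟨⟨a, ha, har, hal⟩, _⟩ := ((hg i x).2 ho).2 hG
      obtain ⟨j, y, h3, h4⟩ := ih (i+1) a (by omega) (by rw [har]; exact ho) (by omega) (by omega)
      exact ⟨j, y, Reach.head ha h3, by omega⟩

lemma reach_trans {s : ℕ → Q → Finset Q} {i j k : ℕ} {x y z : Q} (h : Reach s i x j y)
    (h' : Reach s j y k z) : Reach s i x k z := by
  induction h with
  | refl => exact h'
  | head hy _ ih => exact Reach.head hy (ih h')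

lemma F_le_step {top : ℕ} (ht : Odd top) {B : Set Q} {s : ℕ → Q → Finset Q} {F F' g g' : ℕ → Q → ℕ}
    (hF : Loc top B s F) (hg : IsG top B s F g) (hF' : Loc top B s F') (hg' : IsG top B s F' g')
    (r : ℕ) (hrt : r < top)
    (ih : ∀ r' < r, ∀ i x, F i x = r' ↔ F' i x = r') :
    ∀ i x, F i x = r → F' i x = r := by
  by_cases he : Even r
  · have key : ∀ N i x, g i x ≤ N → F i x = r → F' i x = r := by
      intro N
      induction N with
      | zero =>
        intro i x hN hx
        rw [← hx, hF.2 i x, hF'.2 i x]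
        apply newF_congr
        intro y hy
        have h1 : F (i+1) y ≤ F i x := by rw [hF.2 i x]; exact le_newF hy
        rcases h1.lt_or_eq with h | h
        · exact (ih (F (i+1) y) (by omega) _ _).1 rfl
        · have := ((hg i x).1 (by rw [hx]; exact he)).1 y hy h
          omega
      | succ N ihN =>
        intro i x hN hx
        rw [← hx, hF.2 i x, hF'.2 i x]
        apply newF_congr
        intro y hy
        have h1 : F (i+1) y ≤ F i x := by rw [hF.2 i x]; exact le_newF hy
        rcases h1.lt_or_eq with h | h
        · exact (ih (F (i+1) y) (by omega) _ _).1 rfl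
        · have := ((hg i x).1 (by rw [hx]; exact he)).1 y hy h
          rw [h, hx]
          exact ihN _ _ (by omega) (by omega)
    exact fun i x => key _ i x le_rfl
  · intro i x hx
    by_contra hne
    have hge : r < F' i x := by
      by_contra hc
      have := (ih (F' i x) (by omega) i x).2 rfl
      omega
    have hnt : F' i x ≠ top := by
      intro h
      have := (accept_iff' ht hF hg i x).2 ((accept_iff' ht hF' hg' i x).1 h)
      omega
    have hr1 : r ≠ 0 := by rintro rfl; simp at he
    obtain ⟨j, y, h1, h2, h3⟩ : ∃ j y, Reach s i x j y ∧ y ∈ B ∧ r < F' j y := by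
      by_cases he' : Even (F' i x)
      · obtain ⟨j, y, h1, h2, h3⟩ := reach_B_even hF' hg' _ i x le_rfl he' (by omega)
        exact ⟨j, y, h1, h2, by omega⟩
      · obtain ⟨j, y, h1, h2⟩ := reach_odd hF' hg' _ i x le_rfl he' hnt (by omega)
        rw [Nat.not_even_iff] at he he'
        obtain ⟨j', y', h1', h2', h3'⟩ := reach_B_even hF' hg' _ j y le_rfl
          (by rw [Nat.even_iff]; omega) (by omega)
        exact ⟨j', y', reach_trans h1 h1', h2', by omega⟩
    have h4 := reach_le hF h1
    have h5 : F j y = r := by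
      by_contra hc
      have := (ih (F j y) (by omega) j y).1 rfl
      omega
    apply he
    rw [← h5, hF.2]
    apply newF_B h2
    rw [← hF.2]; omega

lemma F_unique {top : ℕ} (ht : Odd top) {B : Set Q} {s : ℕ → Q → Finset Q} {F F' g g' : ℕ → Q → ℕ}
    (hF : Loc top B s F) (hg : IsG top B s F g) (hF' : Loc top B s F') (hg' : IsG top B s F' g') :
    F = F' := by
  have key : ∀ r < top, ∀ i x, F i x = r ↔ F' i x = r := by
    intro r
    induction r using Nat.strong_induction_on with
    | _ r ih =>
      intro hr i x
      exact ⟨F_le_step ht hF hg hF' hg' r hr (fun r' h => ih r' h (by omega)) i x,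
        F_le_step ht hF' hg' hF hg r hr (fun r' h i x => (ih r' h (by omega) i x).symm) i x⟩
  funext i x
  have h1 := hF.1 i x
  have h2 := hF'.1 i x
  rcases h1.lt_or_eq with h | h
  · exact ((key _ h i x).1 rfl).symm
  · rcases h2.lt_or_eq with h' | h'
    · exact (key _ h' i x).2 rfl
    · omega

inductive FinP (s : ℕ → Q → Finset Q) (U : ℕ → Q → Prop) : ℕ → Q → Prop
  | mk {i : ℕ} {x : Q} (h : ∀ y ∈ s i x, ¬ U (i+1) y → FinP s U (i+1) y) : FinP s U i x

def UU (B : Set Q) (s : ℕ → Q → Finset Q) : ℕ → ℕ → Q → Prop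
  | 0 => fun _ _ => False
  | r+1 => fun i x => (Even r → FinP s (UU B s r) i x) ∧
      (¬ Even r → ∀ j y, Reach s i x j y → y ∈ B → UU B s r j y)

lemma UU_closed (B : Set Q) (s : ℕ → Q → Finset Q) (r : ℕ) :
    ∀ i x y, y ∈ s i x → UU B s r i x → UU B s r (i+1) y := by
  induction r with
  | zero => intro i x y _ h; exact h.elim
  | succ r ih =>
    intro i x y hy h
    refine ⟨fun he => ?_, fun ho j z hz hB => h.2 ho j z (Reach.head hy hz) hB⟩
    by_cases hU : UU B s r (i+1) y
    · exact FinP.mk fun z hz hn => absurd (ih _ _ _ hz hU) hn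
    · cases h.1 he with
      | mk h => exact h y hy hU

lemma UU_reach (B : Set Q) (s : ℕ → Q → Finset Q) (r : ℕ) {i j : ℕ} {x y : Q}
    (h : Reach s i x j y) (hU : UU B s r i x) : UU B s r j y := by
  induction h with
  | refl => exact hU
  | head hy _ ih => exact ih (UU_closed B s r _ _ _ hy hU)

lemma UU_succ (B : Set Q) (s : ℕ → Q → Finset Q) (r : ℕ) {i : ℕ} {x : Q}
    (hU : UU B s r i x) : UU B s (r+1) i x :=
  ⟨fun _ => FinP.mk fun z hz hn => absurd (UU_closed B s r _ _ _ hz hU) hn,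
    fun _ j y hr _ => UU_reach B s r hr hU⟩

lemma UU_mono (B : Set Q) (s : ℕ → Q → Finset Q) {r r' : ℕ} (h : r ≤ r') {i : ℕ} {x : Q}
    (hU : UU B s r i x) : UU B s r' i x := by
  induction h with
  | refl => exact hU
  | step _ ih => exact UU_succ B s _ ih

/-- a node outside of an odd stage has a successor outside -/
lemma UU_out (B : Set Q) (s : ℕ → Q → Finset Q) {r : ℕ} (hr : Even r) {i : ℕ} {x : Q}
    (h : ¬ UU B s (r+1) i x) : ∃ y ∈ s i x, ¬ UU B s (r+1) (i+1) y := by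
  by_contra hc
  push Not at hc
  exact h ⟨fun _ => FinP.mk fun y hy _ => (hc y hy).1 hr, fun ho => absurd hr ho⟩

lemma odd_level (B : Set Q) (s : ℕ → Q → Finset Q) {r : ℕ} (hr : Even r) {i : ℕ} {x : Q}
    (h1 : UU B s (r+2) i x) (h2 : ¬ UU B s (r+1) i x) : ∀ j, i ≤ j →
      ∃ y, UU B s (r+2) j y ∧ ¬ UU B s (r+1) j y := by
  intro j hj
  induction hj with
  | refl => exact ⟨x, h1, h2⟩
  | step _ ih =>
    obtain ⟨y, h3, h4⟩ := ih
    obtain ⟨z, hz, h5⟩ := UU_out B s hr h4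
    exact ⟨z, UU_closed B s _ _ _ _ hz h3, h5⟩

lemma odd_down (B : Set Q) (s : ℕ → Q → Finset Q) {r : ℕ} (hr : Even r) {i : ℕ} {x : Q}
    (h1 : UU B s (r+4) i x) (h2 : ¬ UU B s (r+3) i x) :
      ∃ j y, UU B s (r+2) j y ∧ ¬ UU B s (r+1) j y := by
  have e1 : ¬ Even (r+1) := by rw [Nat.even_iff] at *; omega
  have e2 : Even (r+2) := by rw [Nat.even_iff] at *; omega
  have e3 : ¬ Even (r+3) := by rw [Nat.even_iff] at *; omega
  have h3 : ¬ UU B s (r+2) i x := fun h => h2 (UU_succ B s _ h)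
  obtain ⟨j, w, hw, hB, hn⟩ : ∃ j w, Reach s i x j w ∧ w ∈ B ∧ ¬ UU B s (r+1) j w := by
    by_contra hc
    push Not at hc
    exact h3 ⟨fun h => absurd h e1, fun _ j y hy hB => hc j y hy hB⟩
  have h4 : FinP s (UU B s (r+2)) j w := (h1.2 e3 j w hw hB).1 e2
  clear hw hB h1 h2 h3
  induction h4 with
  | @mk j w h ih =>
    obtain ⟨y, hy, hyn⟩ := UU_out B s hr hn
    by_cases hU : UU B s (r+2) (j+1) y
    · exact ⟨j+1, y, hU, hyn⟩
    · exact ih y hy hU hyn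

lemma odd_all (B : Set Q) (s : ℕ → Q → Finset Q) (l : ℕ) {i : ℕ} {x : Q}
    (h1 : UU B s (2*l+2) i x) (h2 : ¬ UU B s (2*l+1) i x) :
    ∀ k ≤ l, ∃ j y, UU B s (2*k+2) j y ∧ ¬ UU B s (2*k+1) j y := by
  intro k hk
  induction hk using Nat.decreasingInduction with
  | self => exact ⟨i, x, h1, h2⟩
  | of_succ k _ ih =>
    obtain ⟨j, y, h3, h4⟩ := ih
    exact odd_down B s (r := 2*k) (by simp) h3 h4

lemma UU_bound (B : Set Q) (hB : B.Nonempty) (s : ℕ → Q → Finset Q) (n : ℕ)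
    (hn : Fintype.card Q = n + 1) {i : ℕ} {x : Q} (h : UU B s (2*n+2) i x) :
    UU B s (2*n+1) i x := by
  by_contra hc
  have h1 := odd_all B s n h hc
  have h2 : ∀ k : Fin (n+1), ∃ N, ∀ j, N ≤ j → ∃ y, UU B s (2*k+2) j y ∧ ¬ UU B s (2*k+1) j y := by
    intro k
    obtain ⟨j, y, h3, h4⟩ := h1 k (by omega)
    exact ⟨j, odd_level B s (by simp) h3 h4⟩
  choose N hN using h2
  have h3 : ∀ k : Fin (n+1), ∃ y, UU B s (2*k+2) (Finset.univ.sup N) y ∧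
      ¬ UU B s (2*k+1) (Finset.univ.sup N) y := fun k =>
    hN k _ (Finset.le_sup (Finset.mem_univ k))
  choose f hf1 hf2 using h3
  have hinj : ∀ k k' : Fin (n+1), k < k' → f k ≠ f k' := by
    intro k k' hkk he
    apply hf2 k'
    rw [← he]
    exact UU_mono B s (by have : (k:ℕ) < k' := hkk; omega) (hf1 k)
  have hinj' : Function.Injective f := by
    intro k k' he
    rcases lt_trichotomy k k' with h | h | h
    · exact absurd he (hinj _ _ h)
    · exact h
    · exact absurd he.symm (hinj _ _ h)
  have hsurj : Function.Surjective f :=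
    ((Fintype.bijective_iff_injective_and_card f).2 ⟨hinj', by simp [hn]⟩).2
  obtain ⟨b, hb⟩ := hB
  obtain ⟨k, rfl⟩ := hsurj b
  exact hf2 k ((hf1 k).2 (by rw [Nat.even_iff]; omega) _ _ (Reach.refl _ _) hb)

lemma exists_F (B : Set Q) (hB : B.Nonempty) (s : ℕ → Q → Finset Q) (n : ℕ)
    (hn : Fintype.card Q = n + 1) : ∃ F, Loc (2*n+1) B s F ∧
      ∀ i x, ∃ k, TT (2*n+1) B s F k i x := by
  have hex : ∀ i x, ∃ r, r = 2*n+1 ∨ UU B s (r+1) i x := fun i x => ⟨2*n+1, Or.inl rfl⟩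
  let F : ℕ → Q → ℕ := fun i x => Nat.find (hex i x)
  have hle : ∀ i x, F i x ≤ 2*n+1 := fun i x => Nat.find_min' (hex i x) (Or.inl rfl)
  have hU : ∀ i x r, r < 2*n+1 → (F i x ≤ r ↔ UU B s (r+1) i x) := by
    intro i x r hr
    constructor
    · intro h
      have h1 : F i x = 2*n+1 ∨ UU B s (F i x + 1) i x := Nat.find_spec (hex i x)
      rcases h1 with h1 | h1
      · omega
      · exact UU_mono B s (by omega) h1
    · intro h
      exact Nat.find_min' (hex i x) (Or.inr h)
  have hmon : ∀ i x y, y ∈ s i x → F (i+1) y ≤ F i x := by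
    intro i x y hy
    rcases (hle i x).lt_or_eq with h | h
    · exact (hU _ _ _ h).2 (UU_closed B s _ _ _ _ hy ((hU _ _ _ h).1 le_rfl))
    · rw [h]; exact hle _ _
  have hloc : Loc (2*n+1) B s F := by
    refine ⟨hle, fun i x => ?_⟩
    have hm : (s i x).sup (F (i+1)) ≤ F i x := Finset.sup_le fun y hy => hmon i x y hy
    have hs : ∀ y ∈ s i x, F (i+1) y ≤ (s i x).sup (F (i+1)) := fun y hy => Finset.le_sup hy
    have hat : 0 < (s i x).sup (F (i+1)) → ∃ y ∈ s i x, (s i x).sup (F (i+1)) = F (i+1) y := by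
      intro hp
      apply Finset.exists_mem_eq_sup
      by_contra hn
      rw [Finset.not_nonempty_iff_eq_empty] at hn
      simp [hn] at hp
    unfold newF
    generalize (s i x).sup (F (i+1)) = m at *
    have hi := hle i x
    by_cases hmt : m = 2*n+1
    · rw [if_neg (by tauto)]; omega
    have hmt' : m < 2*n+1 := by omega
    have hsU : ∀ y ∈ s i x, UU B s (m+1) (i+1) y := fun y hy => (hU _ _ _ hmt').1 (hs y hy)
    by_cases he : Even m
    · rw [if_neg (fun h => Nat.not_even_iff_odd.2 h.1 he)]
      apply le_antisymm _ hm
      rw [hU _ _ _ hmt']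
      exact ⟨fun _ => FinP.mk fun y hy _ => (hsU y hy).1 he, fun ho => absurd he ho⟩
    · by_cases hb : x ∈ B
      · rw [if_pos ⟨Nat.not_even_iff_odd.1 he, hb, hmt⟩]
        have he' := he
        rw [Nat.not_even_iff] at he'
        apply le_antisymm
        · rw [hU _ _ _ (by omega)]
          exact ⟨fun _ => FinP.mk fun y hy hn => absurd (hsU y hy) hn,
            fun ho => absurd (by rw [Nat.even_iff]; omega) ho⟩
        · by_contra hc
          have h1 : UU B s (m+1) i x := (hU _ _ _ hmt').1 (by omega)
          have h2 := h1.2 he i x (Reach.refl _ _) hb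
          obtain ⟨y, hy, hym⟩ := hat (by omega)
          have h3 := UU_closed B s _ _ _ _ hy h2
          obtain ⟨m', rfl⟩ : ∃ m', m = m' + 1 := ⟨m - 1, by omega⟩
          have := (hU (i+1) y m' (by omega)).2 h3
          omega
      · rw [if_neg (by tauto)]
        apply le_antisymm _ hm
        rw [hU _ _ _ hmt']
        refine ⟨fun h => absurd h he, fun _ j y hr hy => ?_⟩
        cases hr with
        | refl => exact absurd hy hb
        | head hz hr => exact (hsU _ hz).2 he _ _ hr hy
  refine ⟨F, hloc, ?_⟩
  -- reaching lemmas
  have odd1 : ∀ r, ¬ Even r → r ≠ 2*n+1 → ∀ i x j w, Reach s i x j w → F i x = r → F j w + 1 = r →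
      ∃ k, TT (2*n+1) B s F k i x := by
    intro r hr hrt i x j w h
    induction h with
    | refl => intro h1 h2; omega
    | @head i x y j z hy _ ih =>
      intro h1 h2
      have h3 := hmon i x y hy
      have h4 : F j z ≤ F (i+1) y := reach_le hloc ‹_›
      by_cases h5 : F (i+1) y = r
      · obtain ⟨k, hk⟩ := ih h5 h2
        exact ⟨k+1, fun he => absurd (h1 ▸ he) hr, fun _ => Or.inr ⟨y, hy, by omega, hk⟩⟩
      · exact ⟨1, fun he => absurd (h1 ▸ he) hr, fun _ => Or.inl (Or.inr ⟨by omega, Or.inr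
          ⟨y, hy, by omega⟩⟩)⟩
  have htE : ¬ Even (2*n+1) := by rw [Nat.even_iff]; omega
  have odd2 : ∀ i x j w, Reach s i x j w → F i x = 2*n+1 → F j w = 2*n+1 → w ∈ B →
      ∃ k, TT (2*n+1) B s F k i x := by
    intro i x j w h
    induction h with
    | refl i x => 
      intro h1 _ hb
      exact ⟨1, fun he => absurd (h1 ▸ he) htE, fun _ => Or.inl (Or.inl ⟨h1, hb⟩)⟩
    | @head i x y j z hy _ ih =>
      intro h1 h2 hb
      have h4 : F j z ≤ F (i+1) y := reach_le hloc ‹_›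
      have h5 := hle (i+1) y
      obtain ⟨k, hk⟩ := ih (by omega) h2 hb
      exact ⟨k+1, fun he => absurd (h1 ▸ he) htE, fun _ => Or.inr ⟨y, hy, by omega, hk⟩⟩
  intro i x
  by_cases he : Even (F i x)
  · have hlt : F i x < 2*n+1 := lt_of_le_of_ne (hle i x) (fun h => htE (h ▸ he))
    have h1 := ((hU i x _ hlt).1 le_rfl).1 he
    have gen : ∀ r, Even r → r < 2*n+1 → ∀ i x, FinP s (UU B s r) i x → F i x = r →
        ∃ k, TT (2*n+1) B s F k i x := by
      intro r hr hrt i x h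
      induction h with
      | @mk i x h ih =>
        intro hx
        apply TT_even (hx ▸ hr)
        intro y hy hyr
        apply ih y hy _ (by omega)
        intro hc
        rcases r with _ | r
        · exact hc
        · have := (hU (i+1) y r (by omega)).2 hc
          omega
    exact gen _ he hlt i x h1 rfl
  · by_cases ht : F i x = 2*n+1
    · have h1 : ¬ UU B s (2*n+2) i x := by
        intro h
        have := UU_bound B hB s n hn h
        have := (hU i x (2*n) (by omega)).2 this
        omega
      obtain ⟨j, w, hw, hb, hnw⟩ : ∃ j w, Reach s i x j w ∧ w ∈ B ∧ ¬ UU B s (2*n+1) j w := by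
        by_contra hc
        push Not at hc
        exact h1 ⟨fun h => absurd h htE, fun _ j y hy hB => hc j y hy hB⟩
      refine odd2 i x j w hw ht ?_ hb
      have := (hU j w (2*n) (by omega)).1.mt hnw
      have := hle j w
      omega
    · by_cases h1 : F i x = 1
      · exact ⟨1, fun h => absurd h he, fun _ => Or.inl (Or.inr ⟨ht, Or.inl h1⟩)⟩
      have hi := hle i x
      obtain ⟨r, hr⟩ : ∃ r, F i x = r + 3 := ⟨F i x - 3, by rw [Nat.not_even_iff] at he; omega⟩
      have he' := he
      rw [hr, Nat.not_even_iff] at he'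
      have h2 : ¬ UU B s (r+2+1) i x := fun h => by
        have := (hU i x (r+2) (by omega)).2 h
        omega
      have h2' : ¬ UU B s (r+2) i x := fun h => h2 (UU_succ B s _ h)
      have e1 : ¬ Even (r+1) := by rw [Nat.even_iff]; omega
      obtain ⟨j, w, hw, hb, hnw⟩ : ∃ j w, Reach s i x j w ∧ w ∈ B ∧ ¬ UU B s (r+1) j w := by
        by_contra hc
        push Not at hc
        exact h2' ⟨fun h => absurd h e1, fun _ j y hy hB => hc j y hy hB⟩
      refine odd1 (F i x) he ht i x j w hw rfl ?_
      have h3 := (hU j w r (by omega)).1.mt hnw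
      have h4 := reach_le hloc hw
      have h5 : Even (F j w) := by
        rw [hloc.2]
        apply newF_B hb
        rw [← hloc.2]; omega
      rw [Nat.even_iff] at h5
      omega

noncomputable def stepP (top : ℕ) (B : Set Q) (s : Q → Finset Q) (p : Q → ℕ) : Q → ℕ :=
  enc (newF top B s (dec top p)) (lexR (newF top B s (dec top p)) (newT top B s (dec top p) p))

def mark (top : ℕ) (B : Set Q) (s : Q → Finset Q) (p : Q → ℕ) (r : ℕ) : Prop :=
  ¬ ∃ x, newF top B s (dec top p) x = r ∧
    newT top B s (dec top p) p x = (Finset.univ.filter (fun y => dec top p y = r)).sup p + 1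

lemma dec_le (top : ℕ) (p : Q → ℕ) (x : Q) : dec top p x ≤ top := min_le_left _ _

lemma stepP_lt (top : ℕ) (ht : Odd top) (B : Set Q) (s : Q → Finset Q) (p : Q → ℕ) (x : Q) :
    stepP top B s p x < top + Fintype.card Q := by
  have h1 := newF_le top ht B s (dec top p) (dec_le top p) x
  have h2 := cnt_lt_card (newF top B s (dec top p)) (newT top B s (dec top p) p) x
  unfold stepP enc
  omega

lemma dec_stepP (top : ℕ) (ht : Odd top) (B : Set Q) (s : Q → Finset Q) (p : Q → ℕ) :
    dec top (stepP top B s p) = newF top B s (dec top p) :=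
  dec_enc top _ _ (newF_le top ht B s _ (dec_le top p))

lemma run_loc {top : ℕ} (ht : Odd top) {B : Set Q} {s : ℕ → Q → Finset Q} {p : ℕ → Q → ℕ}
    (hp : ∀ i, p i = stepP top B (s i) (p (i+1))) : Loc top B s (fun i => dec top (p i)) := by
  refine ⟨fun i x => dec_le _ _ _, fun i x => ?_⟩
  change dec top (p i) x = _
  rw [hp i, dec_stepP top ht]

/-- in a run, comparison of `p` inside a rank is comparison of `t` -/
lemma run_lt {top : ℕ} (ht : Odd top) {B : Set Q} {s : ℕ → Q → Finset Q} {p : ℕ → Q → ℕ}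
    (hp : ∀ i, p i = stepP top B (s i) (p (i+1))) (i : ℕ) (x y : Q)
    (h : dec top (p i) x = dec top (p i) y) :
    p i x < p i y ↔ newT top B (s i) (dec top (p (i+1))) (p (i+1)) x <
      newT top B (s i) (dec top (p (i+1))) (p (i+1)) y := by
  rw [hp i, dec_stepP top ht] at h
  rw [hp i]
  unfold stepP
  rw [enc_lt_iff]
  unfold lexR
  omega

lemma card_image_le' {Y : Finset Q} {p t : Q → ℕ}
    (h : ∀ a ∈ Y, ∀ b ∈ Y, t a = t b → p a = p b) : (Y.image p).card ≤ (Y.image t).card := by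
  have : ∀ k, ∃ l, ∀ a ∈ Y, t a = k → p a = l := by
    intro k
    by_cases hk : ∃ a ∈ Y, t a = k
    · obtain ⟨a, ha, hak⟩ := hk
      exact ⟨p a, fun b hb hbk => h b hb a ha (by omega)⟩
    · push Not at hk
      exact ⟨0, fun a ha hak => absurd hak (hk a ha)⟩
  choose f hf using this
  have h2 : Y.image p ⊆ (Y.image t).image f := by
    intro k hk
    obtain ⟨a, ha, rfl⟩ := Finset.mem_image.1 hk
    exact Finset.mem_image.2 ⟨t a, Finset.mem_image_of_mem _ ha, (hf _ a ha rfl).symm⟩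
  exact (Finset.card_le_card h2).trans Finset.card_image_le

noncomputable def eE (top : ℕ) (p : Q → ℕ) (r : ℕ) (x : Q) : Finset ℕ :=
  (Finset.univ.filter (fun y => dec top p y = r ∧ p x < p y)).image p

lemma isT_pos {top : ℕ} {B : Set Q} {s : Q → Finset Q} {F : Q → ℕ} {r : ℕ} {x : Q}
    {p : Q → ℕ} {k : ℕ} (h : IsT top B s F r x p k) (hk : 0 < k) :
    ∃ a ∈ s x, F a = r ∧ p a + 1 = k := by
  by_cases he : Even r
  · exact (h.1 he).2 hk
  · by_cases hg : goal top B s F r x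
    · have := (h.2 he).1 hg
      omega
    · exact ((h.2 he).2 hg).1

lemma eE_step {top : ℕ} (ht : Odd top) {B : Set Q} {s : ℕ → Q → Finset Q} {p : ℕ → Q → ℕ}
    (hp : ∀ i, p i = stepP top B (s i) (p (i+1))) {i r : ℕ} {x y : Q}
    (hx : dec top (p i) x = r) (hy : dec top (p (i+1)) y = r)
    (hxy : p (i+1) y + 1 ≤ newT top B (s i) (dec top (p (i+1))) (p (i+1)) x) :
    (eE top (p i) r x).card ≤ (eE top (p (i+1)) r y).card ∧
    (mark top B (s i) (p (i+1)) r → (eE top (p i) r x).card < (eE top (p (i+1)) r y).card) := by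
  have hloc := run_loc ht hp
  have hdec : ∀ z, dec top (p i) z = newF top B (s i) (dec top (p (i+1))) z := hloc.2 i
  have hlt := run_lt ht hp i
  have hT : ∀ z, dec top (p i) z = r → IsT top B (s i) (dec top (p (i+1))) r z (p (i+1))
      (newT top B (s i) (dec top (p (i+1))) (p (i+1)) z) := by
    intro z hz
    have := newT_isT top B (s i) (dec top (p (i+1))) (p (i+1)) z
    rw [← hdec z, hz] at this
    exact this
  unfold mark
  generalize ht' : newT top B (s i) (dec top (p (i+1))) (p (i+1)) = t at *
  have hc : (eE top (p i) r x).card ≤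
      ((Finset.univ.filter (fun y => dec top (p i) y = r ∧ p i x < p i y)).image t).card := by
    apply card_image_le'
    intro a ha b hb hab
    have ha := (Finset.mem_filter.1 ha).2.1
    have hb := (Finset.mem_filter.1 hb).2.1
    have h1 := hlt a b (by omega)
    have h2 := hlt b a (by omega)
    omega
  have hsub : (Finset.univ.filter (fun y => dec top (p i) y = r ∧ p i x < p i y)).image t ⊆
      (eE top (p (i+1)) r y).image (· + 1) := by
    intro k hk
    obtain ⟨z, hz, rfl⟩ := Finset.mem_image.1 hk
    obtain ⟨_, hzr, hzx⟩ := Finset.mem_filter.1 hz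
    have h1 := (hlt x z (by omega)).1 hzx
    obtain ⟨a, ha, har, hal⟩ := isT_pos (hT z hzr) (by omega)
    refine Finset.mem_image.2 ⟨p (i+1) a, ?_, hal⟩
    refine Finset.mem_image.2 ⟨a, ?_, rfl⟩
    simp only [Finset.mem_filter, Finset.mem_univ, true_and]
    exact ⟨har, by omega⟩
  have hcard : ((eE top (p (i+1)) r y).image (· + 1)).card = (eE top (p (i+1)) r y).card :=
    Finset.card_image_of_injective _ (add_left_injective 1)
  refine ⟨hc.trans ((Finset.card_le_card hsub).trans hcard.le), fun hm => ?_⟩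
  refine lt_of_le_of_lt hc (lt_of_lt_of_le (Finset.card_lt_card ?_) hcard.le)
  rw [Finset.ssubset_iff_of_subset hsub]
  push Not at hm
  refine ⟨(Finset.univ.filter (fun y => dec top (p (i+1)) y = r)).sup (p (i+1)) + 1, ?_, ?_⟩
  · have hne : (Finset.univ.filter (fun y => dec top (p (i+1)) y = r)).Nonempty :=
      ⟨y, by simp [hy]⟩
    obtain ⟨w, hw, hwe⟩ := Finset.exists_mem_eq_sup _ hne (p (i+1))
    refine Finset.mem_image.2 ⟨p (i+1) w, ?_, by rw [hwe]⟩
    refine Finset.mem_image.2 ⟨w, ?_, rfl⟩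
    have hwr := (Finset.mem_filter.1 hw).2
    simp only [Finset.mem_filter, Finset.mem_univ, true_and]
    refine ⟨hwr, ?_⟩
    -- y is not maximal
    have h1 := hm x (by rw [← hdec x]; exact hx)
    obtain ⟨a, ha, har, hal⟩ := isT_pos (hT x hx) (by omega)
    have h2 : p (i+1) a ≤ (Finset.univ.filter (fun y => dec top (p (i+1)) y = r)).sup (p (i+1)) :=
      Finset.le_sup (by simp [har])
    omega
  · intro hk
    obtain ⟨z, hz, hze⟩ := Finset.mem_image.1 hk
    have hzr := (Finset.mem_filter.1 hz).2.1
    exact hm z (by rw [← hdec z]; exact hzr) hze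

lemma live_of_marks {top : ℕ} (ht : Odd top) {B : Set Q} {s : ℕ → Q → Finset Q} {p : ℕ → Q → ℕ}
    (hp : ∀ i, p i = stepP top B (s i) (p (i+1)))
    (hm : ∀ r ≤ top, ∀ m, ∃ i, m ≤ i ∧ mark top B (s i) (p (i+1)) r) :
    ∀ i x, ∃ k, TT top B s (fun i => dec top (p i)) k i x := by
  have hloc := run_loc ht hp
  have hT : ∀ i z, IsT top B (s i) (dec top (p (i+1))) (dec top (p i) z) z (p (i+1))
      (newT top B (s i) (dec top (p (i+1))) (p (i+1)) z) := by
    intro i z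
    have := newT_isT top B (s i) (dec top (p (i+1))) (p (i+1)) z
    have h2 : dec top (p i) z = newF top B (s i) (dec top (p (i+1))) z := hloc.2 i z
    rw [← h2] at this
    exact this
  -- bad nodes have bad successors
  have hnext : ∀ i x, (¬ ∃ k, TT top B s (fun i => dec top (p i)) k i x) →
      ∃ y, dec top (p (i+1)) y = dec top (p i) x ∧
        p (i+1) y + 1 ≤ newT top B (s i) (dec top (p (i+1))) (p (i+1)) x ∧
        ¬ ∃ k, TT top B s (fun i => dec top (p i)) k (i+1) y := by
    intro i x hb
    by_cases he : Even (dec top (p i) x)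
    · have h1 := mt (TT_even (top := top) (B := B) (s := s) (F := fun i => dec top (p i))
        (i := i) (x := x) he) hb
      push Not at h1
      obtain ⟨y, hy, hr, hk⟩ := h1
      exact ⟨y, hr, ((hT i x).1 he).1 y hy hr, by push Not; exact hk⟩
    · by_cases hG : goal top B (s i) (dec top (p (i+1))) (dec top (p i) x) x
      · exact absurd ⟨1, fun h => absurd h he, fun _ => Or.inl hG⟩ hb
      · obtain ⟨⟨a, ha, har, hal⟩, _⟩ := ((hT i x).2 he).2 hG
        refine ⟨a, har, hal.le, ?_⟩
        rintro ⟨k, hk⟩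
        exact hb ⟨k+1, fun h => absurd h he, fun _ => Or.inr ⟨a, ha, har, hk⟩⟩
  by_contra hc
  push Not at hc
  obtain ⟨i0, x0, h0⟩ := hc
  set r := dec top (p i0) x0 with hr
  have h0' : ¬ ∃ k, TT top B s (fun i => dec top (p i)) k i0 x0 := by push Not; exact h0
  have hwalk : ∀ d i x, dec top (p i) x = r → (¬ ∃ k, TT top B s (fun i => dec top (p i)) k i x) →
      ∃ y, dec top (p (i+d)) y = r ∧ (¬ ∃ k, TT top B s (fun i => dec top (p i)) k (i+d) y) ∧
        (eE top (p i) r x).card ≤ (eE top (p (i+d)) r y).card := by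
    intro d
    induction d with
    | zero => intro i x h1 h2; exact ⟨x, h1, h2, le_rfl⟩
    | succ d ih =>
      intro i x h1 h2
      obtain ⟨y, h3, h4, h5⟩ := ih i x h1 h2
      obtain ⟨z, h6, h7, h8⟩ := hnext _ _ h4
      exact ⟨z, by rw [← add_assoc, h6, h3], h8, h5.trans (eE_step ht hp h3 (by rw [h6, h3]) h7).1⟩
  have hgrow : ∀ c, ∃ i x, dec top (p i) x = r ∧
      (¬ ∃ k, TT top B s (fun i => dec top (p i)) k i x) ∧ c ≤ (eE top (p i) r x).card := by
    intro c
    induction c with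
    | zero => exact ⟨i0, x0, rfl, h0', Nat.zero_le _⟩
    | succ c ih =>
      obtain ⟨i, x, h1, h2, h3⟩ := ih
      obtain ⟨j, hj, hmj⟩ := hm r (dec_le _ _ _) i
      obtain ⟨d, rfl⟩ := Nat.exists_eq_add_of_le hj
      obtain ⟨y, h4, h5, h6⟩ := hwalk d i x h1 h2
      obtain ⟨z, h7, h8, h9⟩ := hnext _ _ h5
      have := (eE_step ht hp h4 (by rw [h7, h4]) h8).2 hmj
      exact ⟨_, z, by rw [h7, h4], h9, by omega⟩
  obtain ⟨i, x, _, _, h⟩ := hgrow (Fintype.card Q + 1)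
  have : (eE top (p i) r x).card ≤ Fintype.card Q :=
    Finset.card_image_le.trans (Finset.card_le_univ _)
  omega

lemma run_order {top : ℕ} (ht : Odd top) {B : Set Q} {s : ℕ → Q → Finset Q} {p : ℕ → Q → ℕ}
    (hp : ∀ i, p i = stepP top B (s i) (p (i+1))) {g : ℕ → Q → ℕ}
    (hg : IsG top B s (fun i => dec top (p i)) g) : ∀ N i x x',
      dec top (p i) x = dec top (p i) x' → g i x < N →
      (g i x ≤ g i x' → p i x ≤ p i x') ∧ (g i x < g i x' → p i x < p i x') := by
  have hloc := run_loc ht hp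
  intro N
  induction N with
  | zero => intro i x x' _ h; omega
  | succ N ih =>
    intro i x x' hr hN
    have hT : ∀ z, IsT top B (s i) (dec top (p (i+1))) (dec top (p i) z) z (p (i+1))
        (newT top B (s i) (dec top (p (i+1))) (p (i+1)) z) := by
      intro z
      have := newT_isT top B (s i) (dec top (p (i+1))) (p (i+1)) z
      have h2 : dec top (p i) z = newF top B (s i) (dec top (p (i+1))) z := hloc.2 i z
      rw [← h2] at this
      exact this
    have hx' := hg i x'
    have hTx' := hT x'
    simp only [← hr] at hx' hTx'
    have := isT_mono N (fun a a' h1 h2 h3 => ih (i+1) a a' (h1.trans h2.symm) h3)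
      (hg i x) hx' (hT x) hTx' (by omega)
    have h1 := run_lt ht hp i x x' hr
    have h2 := run_lt ht hp i x' x hr.symm
    constructor
    · intro h
      have := this.1 h
      omega
    · intro h
      have := this.2 h
      omega

lemma run_eq {top : ℕ} (ht : Odd top) {B : Set Q} {s : ℕ → Q → Finset Q} {p : ℕ → Q → ℕ}
    (hp : ∀ i, p i = stepP top B (s i) (p (i+1))) {g : ℕ → Q → ℕ}
    (hg : IsG top B s (fun i => dec top (p i)) g) (i : ℕ) :
    p i = enc (dec top (p i)) (lexR (dec top (p i)) (g i)) := by
  have h0 : p i = enc (dec top (p i)) (lexR (dec top (p i))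
      (newT top B (s i) (dec top (p (i+1))) (p (i+1)))) := by
    conv_lhs => rw [hp i]
    rw [hp i, dec_stepP top ht]; rfl
  have h1 : lexR (dec top (p i)) (newT top B (s i) (dec top (p (i+1))) (p (i+1))) =
      lexR (dec top (p i)) (g i) := by
    funext x y
    apply propext
    unfold lexR
    by_cases hxy : dec top (p i) x = dec top (p i) y
    · have h2 := run_order ht hp hg _ i x y hxy (Nat.lt_succ_self _)
      have h3 := run_order ht hp hg _ i y x hxy.symm (Nat.lt_succ_self _)
      have h4 := run_lt ht hp i x y hxy
      omega
    · omega
  rw [← h1]; exact h0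

lemma run_unique {top : ℕ} (ht : Odd top) {B : Set Q} {s : ℕ → Q → Finset Q} {p p' : ℕ → Q → ℕ}
    (hp : ∀ i, p i = stepP top B (s i) (p (i+1)))
    (hm : ∀ r ≤ top, ∀ m, ∃ i, m ≤ i ∧ mark top B (s i) (p (i+1)) r)
    (hp' : ∀ i, p' i = stepP top B (s i) (p' (i+1)))
    (hm' : ∀ r ≤ top, ∀ m, ∃ i, m ≤ i ∧ mark top B (s i) (p' (i+1)) r) : p = p' := by
  obtain ⟨g, hg⟩ := exists_g (live_of_marks ht hp hm)
  obtain ⟨g', hg'⟩ := exists_g (live_of_marks ht hp' hm')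
  have hF := F_unique ht (run_loc ht hp) hg (run_loc ht hp') hg'
  have hF' : ∀ i, dec top (p i) = dec top (p' i) := fun i => congrFun hF i
  have hg2 : IsG top B s (fun i => dec top (p' i)) g := by rw [← hF]; exact hg
  funext i
  rw [run_eq ht hp hg i, run_eq ht hp' hg2 i, hF' i]

lemma run_exists {n : ℕ} (hn : Fintype.card Q = n + 1) {B : Set Q} (hB : B.Nonempty)
    (s : ℕ → Q → Finset Q) : ∃ p : ℕ → Q → ℕ,
    (∀ i, p i = stepP (2*n+1) B (s i) (p (i+1))) ∧
    (∀ r ≤ 2*n+1, ∀ m, ∃ i, m ≤ i ∧ mark (2*n+1) B (s i) (p (i+1)) r) := by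
  obtain ⟨F, hF, hL⟩ := exists_F B hB s n hn
  obtain ⟨g, hg⟩ := exists_g hL
  let p : ℕ → Q → ℕ := fun i => enc (F i) (lexR (F i) (g i))
  have hd : ∀ i, dec (2*n+1) (p i) = F i := fun i => dec_enc _ _ _ (hF.1 i)
  have hT : ∀ i z, IsT (2*n+1) B (s i) (F (i+1)) (F i z) z (p (i+1))
      (newT (2*n+1) B (s i) (F (i+1)) (p (i+1)) z) := by
    intro i z
    have := newT_isT (2*n+1) B (s i) (F (i+1)) (p (i+1)) z
    rw [← hF.2 i z] at this
    exact this
  have hpg : ∀ i x y, F i x = F i y → (p i x < p i y ↔ g i x < g i y) := by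
    intro i x y h
    change enc _ _ _ < enc _ _ _ ↔ _
    rw [enc_lt_iff]
    unfold lexR
    omega
  have hmono : ∀ i x y, F i x = F i y → 
      (g i x ≤ g i y → newT (2*n+1) B (s i) (F (i+1)) (p (i+1)) x ≤
        newT (2*n+1) B (s i) (F (i+1)) (p (i+1)) y) ∧
      (g i x < g i y → newT (2*n+1) B (s i) (F (i+1)) (p (i+1)) x <
        newT (2*n+1) B (s i) (F (i+1)) (p (i+1)) y) := by
    intro i x y h
    have h1 := hg i y
    have h2 := hT i y
    rw [← h] at h1 h2
    refine isT_mono (g i x) (fun a a' h3 h4 _ => ?_) (hg i x) h1 (hT i x) h2 le_rfl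
    have h5 := hpg (i+1) a a' (by omega)
    have h6 := hpg (i+1) a' a (by omega)
    omega
  have hnF : ∀ i, newF (2*n+1) B (s i) (F (i+1)) = F i := fun i => by
    funext x; exact (hF.2 i x).symm
  refine ⟨p, fun i => ?_, fun r hr m => ?_⟩
  · unfold stepP
    rw [hd, hnF]
    change enc _ _ = _
    congr 1
    funext x y
    apply propext
    unfold lexR
    by_cases hxy : F i x = F i y
    · have h1 := hmono i x y hxy
      have h2 := hmono i y x hxy.symm
      omega
    · omega
  · by_contra hc
    push Not at hc
    have hno : ∀ j, m ≤ j → ∃ x, F j x = r ∧ newT (2*n+1) B (s j) (F (j+1)) (p (j+1)) x =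
        (Finset.univ.filter (fun y => F (j+1) y = r)).sup (p (j+1)) + 1 := by
      intro j hj
      have := hc j hj
      unfold mark at this
      rw [not_not, hd, hnF] at this
      exact this
    -- the maximal g value drops by one in every step
    have hdrop : ∀ N, ∀ j, m ≤ j → (∀ y, F j y = r → g j y ≤ N) → False := by
      intro N
      induction N with
      | zero =>
        intro j hj hN
        obtain ⟨x, hx, hxt⟩ := hno j hj
        obtain ⟨a, ha, har, hal⟩ := isT_pos (hT j x) (by omega)
        have h0 := hN x hx
        have h1 := hg j x
        by_cases he : Even (F j x)
        · have := (h1.1 he).1 a ha har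
          omega
        · by_cases hG : goal (2*n+1) B (s j) (F (j+1)) (F j x) x
          · have := ((hT j x).2 he).1 hG
            omega
          · obtain ⟨⟨a, ha, har, hal⟩, _⟩ := (h1.2 he).2 hG
            omega
      | succ N ih =>
        intro j hj hN
        obtain ⟨x, hx, hxt⟩ := hno j hj
        apply ih (j+1) (by omega)
        intro y hy
        have hyp : p (j+1) y ≤ (Finset.univ.filter (fun y => F (j+1) y = r)).sup (p (j+1)) :=
          Finset.le_sup (by simp [hy])
        have h0 := hN x hx
        have h1 := hg j x
        obtain ⟨a, ha, har, hal⟩ : ∃ a ∈ s j x, F (j+1) a = F j x ∧ p (j+1) y ≤ p (j+1) a ∧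
            g (j+1) a < g j x := by
          by_cases he : Even (F j x)
          · obtain ⟨a, ha, har, hal⟩ := isT_pos (hT j x) (by omega)
            exact ⟨a, ha, har, by omega, (h1.1 he).1 a ha har⟩
          · by_cases hG : goal (2*n+1) B (s j) (F (j+1)) (F j x) x
            · have := ((hT j x).2 he).1 hG
              omega
            · obtain ⟨⟨a, ha, har, hal⟩, _⟩ := (h1.2 he).2 hG
              have := (((hT j x).2 he).2 hG).2 a ha har
              exact ⟨a, ha, har, by omega, by omega⟩
        have h2 := hpg (j+1) a y (by omega)
        omega
    exact hdrop (Finset.univ.sup (g m)) m le_rfl (fun y _ => Finset.le_sup (Finset.mem_univ y))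

lemma seq_inf {X Y b : ℕ → Prop} (hb : ∀ i, b i ↔ X i ∨ (¬ Y i ∧ b (i+1))) :
    (∀ m, ∃ i, m ≤ i ∧ (Y i ∧ (X i ∨ b (i+1)))) ↔
      (∀ m, ∃ i, m ≤ i ∧ X i) ∧ (∀ m, ∃ i, m ≤ i ∧ Y i) := by
  constructor
  · intro h
    have hY : ∀ m, ∃ i, m ≤ i ∧ Y i := fun m => by
      obtain ⟨i, h1, h2, _⟩ := h m
      exact ⟨i, h1, h2⟩
    refine ⟨fun m => ?_, hY⟩
    by_contra hc
    push Not at hc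
    obtain ⟨i, h1, h2, h3⟩ := h m
    have hbi : b (i+1) := h3.resolve_left (hc i h1)
    have : ∀ d, b (i+1+d) := by
      intro d
      induction d with
      | zero => exact hbi
      | succ d ih =>
        rcases (hb _).1 ih with h | h
        · exact absurd h (hc _ (by omega))
        · exact h.2
    obtain ⟨j, hj, hYj⟩ := hY (i+1)
    obtain ⟨d, rfl⟩ := Nat.exists_eq_add_of_le hj
    rcases (hb _).1 (this d) with h | h
    · exact absurd h (hc _ (by omega))
    · exact h.1 hYj
  · rintro ⟨hX, hY⟩ m
    by_contra hc
    push Not at hc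
    obtain ⟨i, hi, hYi⟩ := hY m
    have h1 : ∀ d, ¬ b (i+1+d) := by
      intro d
      induction d with
      | zero => exact (hc i hi hYi).2
      | succ d ih =>
        intro h
        by_cases hy : Y (i+1+d)
        · exact (hc _ (by omega) hy).2 h
        · exact ih ((hb _).2 (Or.inr ⟨hy, h⟩))
    obtain ⟨j, hj, hXj⟩ := hX (i+1)
    obtain ⟨d, rfl⟩ := Nat.exists_eq_add_of_le hj
    exact h1 d ((hb _).2 (Or.inl hXj))

lemma seq_unique {X Y b b' : ℕ → Prop} (hb : ∀ i, b i ↔ X i ∨ (¬ Y i ∧ b (i+1)))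
    (hb' : ∀ i, b' i ↔ X i ∨ (¬ Y i ∧ b' (i+1))) (hX : ∀ m, ∃ i, m ≤ i ∧ X i) (i : ℕ) :
    b i ↔ b' i := by
  obtain ⟨j, hj, hXj⟩ := hX i
  induction hj using Nat.decreasingInduction with
  | self => exact ⟨fun _ => (hb' _).2 (Or.inl hXj), fun _ => (hb _).2 (Or.inl hXj)⟩
  | of_succ k _ ih => rw [hb k, hb' k, ih]

lemma seq_exists (X Y : ℕ → Prop) : ∃ b : ℕ → Prop, ∀ i, b i ↔ X i ∨ (¬ Y i ∧ b (i+1)) := by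
  refine ⟨fun i => ∃ j, i ≤ j ∧ X j ∧ ∀ l, i ≤ l → l < j → ¬ Y l, fun i => ⟨?_, ?_⟩⟩
  · rintro ⟨j, hj, hX, hY⟩
    rcases hj.lt_or_eq with h | h
    · exact Or.inr ⟨hY i le_rfl h, j, h, hX, fun l h1 h2 => hY l (by omega) h2⟩
    · exact Or.inl (h ▸ hX)
  · rintro (h | ⟨hY, j, hj, hX, hl⟩)
    · exact ⟨i, le_rfl, h, fun l h1 h2 => by omega⟩
    · refine ⟨j, by omega, hX, fun l h1 h2 => ?_⟩
      rcases h1.lt_or_eq with h | h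
      · exact hl l h h2
      · exact h ▸ hY

end

lemma bits {A : Type*} (k : ℕ) : ∀ (P : Type) [Fintype P] (ρ : A → P → P) (T : ℕ → A → P → Prop),
    (∀ u : ℕ → A, ∃! r : ℕ → P, IsBackRun ρ u r ∧
      ∀ j ≤ k, ∀ m, ∃ i, m ≤ i ∧ T j (u i) (r (i+1))) →
    ∃ (P' : Type) (_ : Fintype P') (ρ' : A → P' → P') (Ω : Set P') (π : P' → P),
      Fintype.card P' = Fintype.card P * 2 ^ (k+1) ∧
      (∀ u : ℕ → A, ∃! r : ℕ → P', IsBackRun ρ' u r ∧ SBFinal Ω r) ∧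
      (∀ (u : ℕ → A) (r : ℕ → P'), IsBackRun ρ' u r → SBFinal Ω r →
        IsBackRun ρ u (fun i => π (r i)) ∧
          ∀ j ≤ k, ∀ m, ∃ i, m ≤ i ∧ T j (u i) (π (r (i+1)))) := by
  induction k with
  | zero =>
    intro P _ ρ T h
    let ρ' : A → P × Bool → P × Bool := fun a q => (ρ a q.1, decide (T 0 a q.1))
    let Ω : Set (P × Bool) := {q | q.2 = true}
    have hproj : ∀ (u : ℕ → A) (r : ℕ → P × Bool), IsBackRun ρ' u r → SBFinal Ω r →
        IsBackRun ρ u (fun i => (r i).1) ∧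
          ∀ j ≤ 0, ∀ m, ∃ i, m ≤ i ∧ T j (u i) ((r (i+1)).1) := by
      intro u r hr hf
      refine ⟨fun i => congrArg Prod.fst (hr i), fun j hj m => ?_⟩
      obtain rfl : j = 0 := by omega
      obtain ⟨i, hi, hΩ⟩ := hf m
      refine ⟨i, hi, ?_⟩
      have h1 : (r i).2 = true := hΩ
      rw [hr i] at h1
      exact of_decide_eq_true h1
    refine ⟨P × Bool, inferInstance, ρ', Ω, Prod.fst, by simp, fun u => ?_, hproj⟩
    obtain ⟨r, ⟨hr, hf⟩, huniq⟩ := h u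
    refine ⟨fun i => (r i, decide (T 0 (u i) (r (i+1)))), ⟨fun i => ?_, fun m => ?_⟩, ?_⟩
    · exact Prod.ext (hr i) rfl
    · obtain ⟨i, hi, hT⟩ := hf 0 le_rfl m
      exact ⟨i, hi, decide_eq_true hT⟩
    · rintro r' ⟨hr', hf'⟩
      have h1 := huniq _ (hproj u r' hr' hf')
      have h2 : ∀ i, (r' i).1 = r i := fun i => congrFun h1 i
      funext i
      refine Prod.ext (h2 i) ?_
      rw [hr' i]
      change decide (T 0 (u i) (r' (i+1)).1) = _
      rw [h2]
  | succ k ih =>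
    intro P _ ρ T h
    let ρ1 : A → P × Bool → P × Bool := fun a q =>
      (ρ a q.1, decide (T 0 a q.1 ∨ (¬ T 1 a q.1 ∧ q.2 = true)))
    let T1 : ℕ → A → P × Bool → Prop := fun j a q =>
      if j = 0 then T 1 a q.1 ∧ (T 0 a q.1 ∨ q.2 = true) else T (j+1) a q.1
    have hrec : ∀ (u : ℕ → A) (r : ℕ → P × Bool), IsBackRun ρ1 u r → ∀ i, ((r i).2 = true ↔
        T 0 (u i) (r (i+1)).1 ∨ (¬ T 1 (u i) (r (i+1)).1 ∧ (r (i+1)).2 = true)) := by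
      intro u r hr i
      conv_lhs => rw [hr i]
      exact decide_eq_true_iff
    have hproj : ∀ (u : ℕ → A) (r : ℕ → P × Bool), IsBackRun ρ1 u r →
        (∀ j ≤ k, ∀ m, ∃ i, m ≤ i ∧ T1 j (u i) (r (i+1))) →
        IsBackRun ρ u (fun i => (r i).1) ∧
          ∀ j ≤ k+1, ∀ m, ∃ i, m ≤ i ∧ T j (u i) ((r (i+1)).1) := by
      intro u r hr hf
      refine ⟨fun i => congrArg Prod.fst (hr i), fun j hj => ?_⟩
      have h1 := (seq_inf (X := fun i => T 0 (u i) (r (i+1)).1)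
        (Y := fun i => T 1 (u i) (r (i+1)).1) (b := fun i => (r i).2 = true)
        (hrec u r hr)).1 (hf 0 (by omega))
      rcases j with _ | _ | j
      · exact h1.1
      · exact h1.2
      · exact hf (j+1) (by omega)
    have h1 : ∀ u : ℕ → A, ∃! r : ℕ → P × Bool, IsBackRun ρ1 u r ∧
        ∀ j ≤ k, ∀ m, ∃ i, m ≤ i ∧ T1 j (u i) (r (i+1)) := by
      intro u
      obtain ⟨r, ⟨hr, hf⟩, huniq⟩ := h u
      obtain ⟨b, hb⟩ := seq_exists (fun i => T 0 (u i) (r (i+1))) (fun i => T 1 (u i) (r (i+1)))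
      refine ⟨fun i => (r i, decide (b i)), ⟨fun i => ?_, fun j hj => ?_⟩, ?_⟩
      · refine Prod.ext (hr i) ?_
        change decide (b i) = decide (_ ∨ (_ ∧ decide (b (i+1)) = true))
        rw [decide_eq_decide, hb i, decide_eq_true_iff]
      · rcases j with _ | j
        · have := (seq_inf hb).2 ⟨hf 0 (by omega), hf 1 (by omega)⟩
          intro m
          obtain ⟨i, hi, h1, h2⟩ := this m
          refine ⟨i, hi, h1, h2.imp id decide_eq_true⟩
        · exact hf (j+2) (by omega)
      · rintro r' ⟨hr', hf'⟩
        have h1 := huniq _ (hproj u r' hr' hf')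
        have h2 : ∀ i, (r' i).1 = r i := fun i => congrFun h1 i
        have h3 := hrec u r' hr'
        simp only [h2] at h3
        funext i
        refine Prod.ext (h2 i) ?_
        have := seq_unique (b := fun i => (r' i).2 = true) h3 hb (hf 0 (by omega)) i
        rw [Bool.eq_iff_iff, decide_eq_true_iff]
        exact this
    obtain ⟨P', iP', ρ', Ω, π, hc, hu, hπ⟩ := ih (P × Bool) ρ1 T1 h1
    refine ⟨P', iP', ρ', Ω, fun q => (π q).1, ?_, hu, fun u r hr hf => ?_⟩
    · rw [hc, Fintype.card_prod, Fintype.card_bool, pow_succ 2 (k+1)]; ring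
    · obtain ⟨h2, h3⟩ := hπ u r hr hf
      exact hproj u _ h2 h3

lemma main_case {Q A : Type*} [Fintype Q] (Δ : Set (Q × A × Q)) (B : Set Q) (I : Set Q)
    (hB : B.Nonempty) (n : ℕ) (hn : Fintype.card Q = n + 1) :
    ∃ (P : Type) (_ : Fintype P) (ρ : A → P → P) (Ω : Set P) (I' : Set P),
      Fintype.card P ≤ (12 * Fintype.card Q) ^ Fintype.card Q ∧
      (∀ u : ℕ → A, ∃! r : ℕ → P, IsBackRun ρ u r ∧ SBFinal Ω r) ∧
      (∀ (u : ℕ → A) (r : ℕ → P), IsBackRun ρ u r → SBFinal Ω r →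
        (r 0 ∈ I' ↔ ∃ q ∈ I, NBAAccepts Δ B u q)) := by
  have ht : Odd (2*n+1) := ⟨n, rfl⟩
  let e : Q ≃ Fin (n+1) := Fintype.equivFinOfCardEq hn
  let S : A → Q → Finset Q := fun a x => Finset.univ.filter (fun y => (x, a, y) ∈ Δ)
  let toQ : (Fin (n+1) → Fin (3*(n+1))) → Q → ℕ := fun v x => v (e x)
  have toQ_inj : Function.Injective toQ := by
    intro v w h
    funext k
    have := congrFun h (e.symm k)
    simp only [toQ, Equiv.apply_symm_apply] at this
    exact Fin.ext this
  have hbd : ∀ a p x, stepP (2*n+1) B (S a) p x < 3*(n+1) := fun a p x => by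
    have := stepP_lt (2*n+1) ht B (S a) p x
    omega
  let ρ0 : A → (Fin (n+1) → Fin (3*(n+1))) → (Fin (n+1) → Fin (3*(n+1))) := fun a v k =>
    ⟨stepP (2*n+1) B (S a) (toQ v) (e.symm k), hbd _ _ _⟩
  have hρ0 : ∀ a v, toQ (ρ0 a v) = stepP (2*n+1) B (S a) (toQ v) := by
    intro a v
    funext x
    simp [toQ, ρ0]
  have hrun : ∀ u v, IsBackRun ρ0 u v → ∀ i, toQ (v i) =
      stepP (2*n+1) B (S (u i)) (toQ (v (i+1))) := by
    intro u v h i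
    rw [← hρ0, ← h i]
  let T : ℕ → A → (Fin (n+1) → Fin (3*(n+1))) → Prop := fun j a v =>
    mark (2*n+1) B (S a) (toQ v) j
  have hex : ∀ u : ℕ → A, ∃! r : ℕ → (Fin (n+1) → Fin (3*(n+1))), IsBackRun ρ0 u r ∧
      ∀ j ≤ 2*n+1, ∀ m, ∃ i, m ≤ i ∧ T j (u i) (r (i+1)) := by
    intro u
    obtain ⟨p, hp, hm⟩ := run_exists hn hB (fun i => S (u i))
    have hpb : ∀ i x, p i x < 3*(n+1) := fun i x => by rw [hp i]; exact hbd _ _ _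
    obtain ⟨v, hv⟩ : ∃ v : ℕ → Fin (n+1) → Fin (3*(n+1)), ∀ i, toQ (v i) = p i :=
      ⟨fun i k => ⟨p i (e.symm k), hpb _ _⟩, fun i => by funext x; simp [toQ]⟩
    refine ⟨v, ⟨fun i => ?_, fun j hj m => ?_⟩, ?_⟩
    · apply toQ_inj
      exact (hv i).trans ((hp i).trans (by rw [hρ0 (u i) (v (i+1)), hv (i+1)]))
    · obtain ⟨i, hi, h⟩ := hm j hj m
      refine ⟨i, hi, ?_⟩
      have h' : mark (2*n+1) B (S (u i)) (toQ (v (i+1))) j := by rw [hv]; exact h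
      exact h'
    · rintro w ⟨hw, hwm⟩
      have := run_unique ht (p := fun i => toQ (w i)) (p' := p) (s := fun i => S (u i))
        (hrun u w hw) hwm hp hm
      funext i
      apply toQ_inj
      rw [hv]
      exact congrFun this i
  obtain ⟨P, iP, ρ, Ω, π, hc, hu, hπ⟩ := bits (2*n+1) (Fin (n+1) → Fin (3*(n+1))) ρ0 T hex
  refine ⟨P, iP, ρ, Ω, {q | ∃ x ∈ I, dec (2*n+1) (toQ (π q)) x = 2*n+1}, ?_, hu, ?_⟩
  · rw [hc, hn]
    simp only [Fintype.card_pi, Fintype.card_fin, Finset.prod_const, Finset.card_univ]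
    have : (2:ℕ) ^ (2*n+1+1) = 4 ^ (n+1) := by
      rw [show 2*n+1+1 = 2*(n+1) by ring, pow_mul]; norm_num
    rw [this, ← mul_pow]
    apply le_of_eq
    congr 1
    ring
  · intro u r hr hf
    obtain ⟨h1, h2⟩ := hπ u r hr hf
    have hp := hrun u _ h1
    obtain ⟨g, hg⟩ := exists_g (live_of_marks (s := fun i => S (u i)) ht
      (p := fun i => toQ (π (r i))) hp h2)
    have hacc := accept_iff ht (run_loc (s := fun i => S (u i)) (p := fun i => toQ (π (r i))) ht hp) hg
    change (∃ x ∈ I, dec (2*n+1) (toQ (π (r 0))) x = 2*n+1) ↔ _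
    refine exists_congr fun x => and_congr_right fun _ => ?_
    refine (hacc x).trans ?_
    unfold NBAAccepts
    simp [S]

end CM

/-- Carton–Michel: for every nondeterministic Büchi automaton with `n`
states and initial state set `I` there is an equivalent backward deterministic automaton
with a state-based Büchi condition and at most `(12n)^n` states. -/
theorem buechi_to_backward_deterministic_buechi {Q A : Type*} [Fintype Q]
    (Δ : Set (Q × A × Q)) (B : Set Q) (I : Set Q) :
    ∃ (P : Type) (_ : Fintype P) (ρ : A → P → P) (Ω : Set P) (I' : Set P),
      Fintype.card P ≤ (12 * Fintype.card Q) ^ Fintype.card Q ∧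
      (∀ u : ℕ → A, ∃! r : ℕ → P, IsBackRun ρ u r ∧ SBFinal Ω r) ∧
      (∀ (u : ℕ → A) (r : ℕ → P), IsBackRun ρ u r → SBFinal Ω r →
        (r 0 ∈ I' ↔ ∃ q ∈ I, NBAAccepts Δ B u q)) := by
  by_cases hB : B.Nonempty
  · obtain ⟨b, hb⟩ := hB
    have hpos : 0 < Fintype.card Q := Fintype.card_pos_iff.2 ⟨b⟩
    exact CM.main_case Δ B I ⟨b, hb⟩ (Fintype.card Q - 1) (by omega)
  · rw [Set.not_nonempty_iff_eq_empty] at hB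
    subst hB
    refine ⟨Unit, inferInstance, fun _ _ => (), Set.univ, ∅, ?_, ?_, ?_⟩
    · rw [Fintype.card_unit]
      rcases Nat.eq_zero_or_pos (Fintype.card Q) with h | h
      · simp [h]
      · exact Nat.one_le_pow _ _ (by omega)
    · intro u
      exact ⟨fun _ => (), ⟨fun _ => rfl, fun m => ⟨m, le_rfl, trivial⟩⟩, fun _ _ => rfl⟩
    · intro u r _ _
      constructor
      · intro h; exact h.elim
      · rintro ⟨q, _, r', _, _, h⟩
        obtain ⟨i, _, hi⟩ := h 0
        exact hi.elim
end

section
/- For every nondeterministic Büchi automaton (Q, Δ, B) with |Q| = n and every ω-word u, applying the peeling operation n times to the run DAG of the automaton on u yields exactly the subgraph induced by the B-recurring vertices of the run DAG. -/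
/-- A leveled DAG over `Q`: vertex set a subset of `ℕ × Q`, every edge goes from a
vertex on some level `i` to a vertex on level `i + 1`. -/
structure LDAG (Q : Type*) where
  V : Set (ℕ × Q)
  E : ℕ × Q → ℕ × Q → Prop
  edge_mem : ∀ ⦃v w⦄, E v w → v ∈ V ∧ w ∈ V
  edge_level : ∀ ⦃v w⦄, E v w → w.1 = v.1 + 1

namespace LDAG

variable {Q : Type*}

/-- `w` is a descendant of `v` (including `v` itself). -/
def Desc (D : LDAG Q) : ℕ × Q → ℕ × Q → Prop := Relation.ReflTransGen D.E

/-- A vertex is finitary if it has only finitely many descendants. -/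
def Finitary (D : LDAG Q) (v : ℕ × Q) : Prop := {w | D.Desc v w}.Finite

/-- A vertex is `B`-free if no descendant of it (including itself) is `B`-tagged. -/
def BFree (D : LDAG Q) (B : Set Q) (v : ℕ × Q) : Prop :=
  ∀ w, D.Desc v w → w.2 ∉ B

/-- A vertex is `B`-recurring if some infinite path starting in it contains infinitely
many `B`-tagged vertices. -/
def BRecurring (D : LDAG Q) (B : Set Q) (v : ℕ × Q) : Prop :=
  ∃ p : ℕ → ℕ × Q, p 0 = v ∧ (∀ n, D.E (p n) (p (n + 1))) ∧
    ∀ m, ∃ n, m ≤ n ∧ (p n).2 ∈ B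

/-- The subgraph of `D` induced by the set `S` of vertices. -/
def induced (D : LDAG Q) (S : Set (ℕ × Q)) : LDAG Q where
  V := D.V ∩ S
  E v w := D.E v w ∧ v ∈ S ∧ w ∈ S
  edge_mem := fun _ _ h => ⟨⟨(D.edge_mem h.1).1, h.2.1⟩, ⟨(D.edge_mem h.1).2, h.2.2⟩⟩
  edge_level := fun _ _ h => D.edge_level h.1

/-- One peeling step: first remove all finitary vertices, then remove all vertices that
are `B`-free in the resulting induced subgraph. -/
def peel (B : Set Q) (D : LDAG Q) : LDAG Q :=
  let D₁ := D.induced {v | ¬ D.Finitary v}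
  D₁.induced {v | ¬ D₁.BFree B v}

end LDAG

/-- The run DAG of the Büchi automaton with transition relation `Δ` on the ω-word `u`:
vertex set `ℕ × Q`, edges from `⟨i, q⟩` to `⟨i+1, q'⟩` whenever `(q, u i, q') ∈ Δ`. -/
def runDAG {Q A : Type*} (Δ : Set (Q × A × Q)) (u : ℕ → A) : LDAG Q where
  V := Set.univ
  E v w := w.1 = v.1 + 1 ∧ (v.2, u v.1, w.2) ∈ Δ
  edge_mem := fun _ _ _ => ⟨trivial, trivial⟩
  edge_level := fun _ _ h => h.1

namespace LDAG

variable {Q : Type*}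

theorem ext_of {D D' : LDAG Q} (hV : D.V = D'.V) (hE : ∀ v w, D.E v w ↔ D'.E v w) : D = D' := by
  cases D; cases D'
  simp only [mk.injEq]
  exact ⟨hV, by funext v w; exact propext (hE v w)⟩

theorem exists_seq' {X : Type*} (r : X → X → Prop) (x0 : X) (h : ∀ x, ∃ y, r x y) :
    ∃ f : ℕ → X, f 0 = x0 ∧ ∀ n, r (f n) (f (n + 1)) := by
  choose g hg using h
  refine ⟨fun n => g^[n] x0, rfl, fun n => ?_⟩
  simp only [Function.iterate_succ_apply']
  exact hg _

theorem path_level (D : LDAG Q) {p : ℕ → ℕ × Q} (hp : ∀ n, D.E (p n) (p (n + 1))) (n : ℕ) :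
    (p n).1 = (p 0).1 + n := by
  induction n with
  | zero => rfl
  | succ n ih => rw [D.edge_level (hp n), ih]; rfl

theorem path_desc (D : LDAG Q) {p : ℕ → ℕ × Q} (hp : ∀ n, D.E (p n) (p (n + 1))) (m n : ℕ) :
    D.Desc (p m) (p (m + n)) := by
  induction n with
  | zero => exact Relation.ReflTransGen.refl
  | succ n ih => exact Relation.ReflTransGen.tail ih (hp (m + n))

theorem desc_level (D : LDAG Q) {v w : ℕ × Q} (h : D.Desc v w) : v.1 ≤ w.1 := by
  induction h with
  | refl => exact le_rfl
  | tail _ h ih => have := D.edge_level h; omega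

theorem desc_mem (D : LDAG Q) {v w : ℕ × Q} (h : D.Desc v w) (hv : v ∈ D.V) : w ∈ D.V := by
  induction h with
  | refl => exact hv
  | tail _ h ih => exact (D.edge_mem h).2

theorem path_not_finitary (D : LDAG Q) {p : ℕ → ℕ × Q} (hp : ∀ n, D.E (p n) (p (n + 1))) (m : ℕ) :
    ¬ D.Finitary (p m) := by
  intro hf
  have hinj : Function.Injective (fun n => p (m + n)) := by
    intro a b hab
    have h1 := D.path_level hp (m + a)
    have h2 := D.path_level hp (m + b)
    simp only at hab
    rw [hab] at h1
    omega
  exact Set.infinite_of_injective_forall_mem hinj (fun n => D.path_desc hp m n) hf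

theorem exists_child [Finite Q] (D : LDAG Q) {v : ℕ × Q} (h : ¬ D.Finitary v) :
    ∃ w, D.E v w ∧ ¬ D.Finitary w := by
  by_contra! hc
  apply h
  have hfin : {w | D.E v w}.Finite := by
    refine ((Set.finite_singleton (v.1 + 1)).prod (Set.finite_univ (α := Q))).subset ?_
    intro w hw
    exact ⟨D.edge_level hw, trivial⟩
  refine ((Set.finite_singleton v).union (hfin.biUnion (fun w hw => hc w hw))).subset ?_
  intro x hx
  rcases Relation.ReflTransGen.cases_head hx with h | ⟨w, h1, h2⟩
  · exact Or.inl h.symm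
  · exact Or.inr (Set.mem_biUnion (show w ∈ {w | D.E v w} from h1) h2)

/-- the first half of a peeling step -/
def trim (D : LDAG Q) : LDAG Q := D.induced {v | ¬ D.Finitary v}

theorem peel_eq (B : Set Q) (D : LDAG Q) :
    D.peel B = D.trim.induced {v | ¬ D.trim.BFree B v} := rfl

theorem trim_child [Finite Q] (D : LDAG Q) {v : ℕ × Q} (h : v ∈ D.trim.V) :
    ∃ w, D.trim.E v w := by
  obtain ⟨w, h1, h2⟩ := D.exists_child h.2
  exact ⟨w, h1, h.2, h2⟩

theorem induced_induced (D : LDAG Q) (S T : Set (ℕ × Q)) :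
    (D.induced S).induced T = D.induced (S ∩ T) := by
  apply ext_of
  · simp [induced, Set.inter_assoc]
  · intro v w; simp only [induced, Set.mem_inter_iff]; tauto

theorem path_peel (B : Set Q) (D : LDAG Q) {p : ℕ → ℕ × Q} (hp : ∀ n, D.E (p n) (p (n + 1)))
    (hB : ∀ m, ∃ n, m ≤ n ∧ (p n).2 ∈ B) (n : ℕ) : (D.peel B).E (p n) (p (n + 1)) := by
  have h1 : ∀ n, D.trim.E (p n) (p (n + 1)) := fun n =>
    ⟨hp n, D.path_not_finitary hp n, D.path_not_finitary hp (n + 1)⟩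
  have h2 : ∀ n, ¬ D.trim.BFree B (p n) := by
    intro n hf
    obtain ⟨k, hk, hkB⟩ := hB n
    obtain ⟨j, rfl⟩ := Nat.exists_eq_add_of_le hk
    exact hf _ (D.trim.path_desc h1 n j) hkB
  exact ⟨h1 n, h2 n, h2 (n + 1)⟩

theorem rec_peel (B : Set Q) (D : LDAG Q) (v : ℕ × Q) :
    (D.peel B).BRecurring B v ↔ D.BRecurring B v := by
  constructor
  · rintro ⟨p, h0, hp, hB⟩
    exact ⟨p, h0, fun n => (hp n).1.1, hB⟩
  · rintro ⟨p, h0, hp, hB⟩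
    exact ⟨p, h0, D.path_peel B hp hB, hB⟩

theorem rec_mem_peel (B : Set Q) (D : LDAG Q) {v : ℕ × Q} (h : D.BRecurring B v) :
    v ∈ (D.peel B).V := by
  obtain ⟨p, rfl, hp, hB⟩ := h
  exact ((D.peel B).edge_mem (D.path_peel B hp hB 0)).1

theorem peel_induced (B : Set Q) (D : LDAG Q) {S : Set (ℕ × Q)}
    (hS : S = {v | D.BRecurring B v}) :
    (D.peel B).induced S = D.induced S := by
  subst hS
  rw [peel_eq, trim, induced_induced, induced_induced]
  congr 1
  ext v
  constructor
  · exact fun h => h.2.2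
  · intro h
    have := D.rec_mem_peel B h
    exact ⟨this.1.2, this.2, h⟩

theorem peel_rec (B : Set Q) (D : LDAG Q) :
    (D.peel B).induced {v | (D.peel B).BRecurring B v} = D.induced {v | D.BRecurring B v} := by
  simp only [rec_peel]
  exact D.peel_induced B rfl

/-- If every surviving vertex recurs, one peel suffices. -/
theorem peel_of_sub (B : Set Q) (D : LDAG Q) (h : ∀ v ∈ (D.peel B).V, D.BRecurring B v) :
    D.peel B = D.induced {v | D.BRecurring B v} := by
  rw [← D.peel_induced B rfl]
  apply ext_of
  · ext v; exact ⟨fun hv => ⟨hv, h v hv⟩, fun hv => hv.1⟩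
  · intro v w
    exact ⟨fun he => ⟨he, h v ((D.peel B).edge_mem he).1, h w ((D.peel B).edge_mem he).2⟩,
      fun he => he.1⟩

theorem iter_of_sub (B : Set Q) (D : LDAG Q) (h : ∀ v ∈ (D.peel B).V, D.BRecurring B v) (k : ℕ) :
    (peel B)^[k + 1] D = D.induced {v | D.BRecurring B v} := by
  induction k generalizing D with
  | zero => exact D.peel_of_sub B h
  | succ k ih =>
    rw [Function.iterate_succ_apply, ih, peel_rec]
    intro v hv
    exact (D.rec_peel B v).2 (h v hv.1.1)

/-- number of untagged vertices on a level -/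
noncomputable def cnt (B : Set Q) (D : LDAG Q) (l : ℕ) : ℕ := {q | q ∉ B ∧ (l, q) ∈ D.V}.ncard

theorem exists_free [Finite Q] (B : Set Q) (D : LDAG Q) {v : ℕ × Q} (hv : v ∈ D.trim.V)
    (hr : ¬ D.BRecurring B v) : ∃ w ∈ D.trim.V, D.trim.BFree B w := by
  by_contra! hc
  apply hr
  have hB : ∀ w ∈ D.trim.V, ∃ b, D.trim.Desc w b ∧ b.2 ∈ B := by
    intro w hw
    have := hc w hw
    simp only [BFree] at this
    push Not at this
    exact this
  let X := {x : (ℕ × Q) × (ℕ × Q) // x.1 ∈ D.trim.V ∧ D.trim.Desc x.1 x.2 ∧ x.2.2 ∈ B}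
  obtain ⟨b0, hb0, hb0'⟩ := hB v hv
  obtain ⟨f, hf0, hf⟩ := exists_seq' (X := X)
    (fun x y => D.trim.E x.1.1 y.1.1 ∧ (x.1.1 ≠ x.1.2 → y.1.2 = x.1.2)) ⟨(v, b0), hv, hb0, hb0'⟩ (by
      rintro ⟨⟨a, b⟩, ha, hab, hb⟩
      rcases Relation.ReflTransGen.cases_head hab with h | ⟨w, h1, h2⟩
      · obtain ⟨w, hw⟩ := D.trim_child ha
        obtain ⟨b', hb1, hb2⟩ := hB w (D.trim.edge_mem hw).2
        exact ⟨⟨(w, b'), (D.trim.edge_mem hw).2, hb1, hb2⟩, hw, fun hn => absurd h hn⟩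
      · exact ⟨⟨(w, b), (D.trim.edge_mem h1).2, h2, hb⟩, h1, fun _ => rfl⟩)
  have hp : ∀ n, D.trim.E (f n).1.1 (f (n + 1)).1.1 := fun n => (hf n).1
  refine ⟨fun n => (f n).1.1, by simp [hf0], fun n => (hp n).1, fun m => ?_⟩
  by_contra! hcon
  have hne : ∀ n, m ≤ n → (f n).1.1 ≠ (f n).1.2 := by
    intro n hn he
    apply hcon n hn
    rw [he]
    exact (f n).2.2.2
  have hconst : ∀ j, (f (m + j)).1.2 = (f m).1.2 := by
    intro j
    induction j with
    | zero => rfl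
    | succ j ih => rw [← ih]; exact (hf (m + j)).2 (hne _ (by omega))
  have h1 := D.trim.desc_level (f (m + ((f m).1.2.1 + 1))).2.2.1
  rw [hconst] at h1
  have h2 := D.trim.path_level (p := fun n => (f n).1.1) hp (m + ((f m).1.2.1 + 1))
  omega

theorem cnt_lt [Finite Q] (B : Set Q) (D : LDAG Q) (h : ¬ ∀ v ∈ (D.peel B).V, D.BRecurring B v) :
    ∃ L, ∀ l, L ≤ l → (D.peel B).cnt B l < D.cnt B l := by
  push Not at h
  obtain ⟨v, hv, hr⟩ := h
  obtain ⟨w, hw, hwf⟩ := D.exists_free B hv.1 hr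
  obtain ⟨f, hf0, hf⟩ := exists_seq' (X := {x // x ∈ D.trim.V})
    (fun x y => D.trim.E x.1 y.1) ⟨w, hw⟩ (by
      rintro ⟨x, hx⟩
      obtain ⟨y, hy⟩ := D.trim_child hx
      exact ⟨⟨y, (D.trim.edge_mem hy).2⟩, hy⟩)
  refine ⟨w.1, fun l hl => ?_⟩
  obtain ⟨j, rfl⟩ := Nat.exists_eq_add_of_le hl
  have hlev := D.trim.path_level (p := fun n => (f n).1) hf j
  have hd := D.trim.path_desc (p := fun n => (f n).1) hf 0 j
  simp only [hf0, Nat.zero_add] at hlev hd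
  have hmem := (f j).2
  generalize (f j).1 = x at *
  obtain ⟨a, q⟩ := x
  simp only at hlev
  subst hlev
  apply Set.ncard_lt_ncard _ (Set.toFinite _)
  refine ⟨fun q hq => ⟨hq.1, hq.2.1.1⟩, fun hsub => ?_⟩
  have := hsub (a := q) ⟨hwf _ hd, hmem.1⟩
  exact this.2.2 (fun y hy => hwf y (Relation.ReflTransGen.trans hd hy))

theorem iter_main [Finite Q] (B : Set Q) (k : ℕ) (D : LDAG Q)
    (h : ∃ L, ∀ l, L ≤ l → D.cnt B l ≤ k) :
    (peel B)^[k + 1] D = D.induced {v | D.BRecurring B v} := by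
  induction k generalizing D with
  | zero =>
    by_cases hg : ∀ v ∈ (D.peel B).V, D.BRecurring B v
    · exact D.iter_of_sub B hg 0
    · obtain ⟨L, hL⟩ := h
      obtain ⟨M, hM⟩ := D.cnt_lt B hg
      have h1 := hL (max L M) (le_max_left _ _)
      have h2 := hM (max L M) (le_max_right _ _)
      omega
  | succ k ih =>
    by_cases hg : ∀ v ∈ (D.peel B).V, D.BRecurring B v
    · exact D.iter_of_sub B hg _
    · rw [Function.iterate_succ_apply, ih, peel_rec]
      obtain ⟨L, hL⟩ := h
      obtain ⟨M, hM⟩ := D.cnt_lt B hg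
      refine ⟨max L M, fun l hl => ?_⟩
      have h1 := hL l (le_trans (le_max_left _ _) hl)
      have h2 := hM l (le_trans (le_max_right _ _) hl)
      omega

theorem main [Fintype Q] (B : Set Q) (D : LDAG Q) :
    (peel B)^[Fintype.card Q] D = D.induced {v | D.BRecurring B v} := by
  rcases isEmpty_or_nonempty Q with hQ | hQ
  · apply ext_of
    · ext v; exact hQ.elim v.2
    · intro v; exact hQ.elim v.2
  · obtain ⟨k, hk⟩ := Nat.exists_eq_succ_of_ne_zero (Fintype.card_ne_zero (α := Q))
    rw [hk]
    rcases B.eq_empty_or_nonempty with rfl | ⟨b, hb⟩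
    · apply iter_of_sub
      intro v hv
      exact absurd (fun w _ hw => hw) hv.2
    · apply iter_main
      refine ⟨0, fun l _ => ?_⟩
      have : D.cnt B l < (Set.univ : Set Q).ncard := by
        apply Set.ncard_lt_ncard _ (Set.toFinite _)
        exact ⟨fun _ _ => trivial, fun hs => (hs (Set.mem_univ b)).1 hb⟩
      rw [Set.ncard_univ, Nat.card_eq_fintype_card] at this
      omega

end LDAG

/-- Kupferman–Vardi: for a nondeterministic Büchi automaton `(Q, Δ, B)`
with `n` states, peeling the run DAG on any ω-word `n` times yields exactly the subgraph
induced by the `B`-recurring vertices. -/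
theorem peel_runDAG {Q A : Type*} [Fintype Q] (Δ : Set (Q × A × Q)) (B : Set Q)
    (u : ℕ → A) :
    (LDAG.peel B)^[Fintype.card Q] (runDAG Δ u) =
      (runDAG Δ u).induced {v | (runDAG Δ u).BRecurring B v} := by
  exact LDAG.main B _
end
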